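/- Let T be a tree with at least three vertices such that n_2(T) ≤ n_1(T), with diameter D(T) ≥ 4, and such that T is not isomorphic to any tree of the form Q(r,2,0) (r ≥ 0) or Q(0,1,1). Then χ'_s(T) = n_1(T). -/

import Mathlib

open SimpleGraph

variable {V : Type*}

/-- A vertex distinguishing proper edge `k`-coloring (vdec): a proper edge coloring
(edges sharing an endpoint get different colors) such that distinct vertices have
distinct sets of colors on their incident edges. -/
def IsVDEC (G : SimpleGraph V) (k : ℕ) (c : Sym2 V → Fin k) : Prop :=
  (∀ ⦃u v w : V⦄, G.Adj u v → G.Adj u w → v ≠ w → c s(u, v) ≠ c s(u, w)) ∧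
  (∀ u v : V, u ≠ v →
    {i : Fin k | ∃ w, G.Adj u w ∧ c s(u, w) = i} ≠
    {i : Fin k | ∃ w, G.Adj v w ∧ c s(v, w) = i})

/-- `χ'ₛ(G)`: the minimum number of colors in a vdec of `G`. -/
noncomputable def vdecNum (G : SimpleGraph V) : ℕ :=
  sInf {k : ℕ | ∃ c : Sym2 V → Fin k, IsVDEC G k c}

/-- `n_d(G)`: the number of vertices of degree `d` in `G`. -/
noncomputable def numDeg (G : SimpleGraph V) (d : ℕ) : ℕ :=
  Nat.card {v : V // Nat.card (G.neighborSet v) = d}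

/-- Vertex type of the tree `Q(r,m,n)`: the center `w₀`, the leaves `w₁,…,w_r`,
the pairs `sᵢ, s'ᵢ` (encoded as `(i,0)` and `(i,1)`), the vertices `t₁,…,tₙ`,
and the leaves `t'_{i,j}` for `j < rv i`. -/
abbrev QVert (r m n : ℕ) (rv : Fin n → ℕ) : Type :=
  Unit ⊕ Fin r ⊕ (Fin m × Fin 2) ⊕ (Fin n ⊕ Σ i : Fin n, Fin (rv i))

/-- The tree `Q(r,m,n)` of diameter four: the center `w₀` is adjacent to the `r` leaves
`wᵢ`, to the `m` vertices `sᵢ` (each `sᵢ` having one further leaf neighbor `s'ᵢ`),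
and to the `n` vertices `tᵢ`, where `tᵢ` has `rv i` further neighbors, all leaves. -/
def QGraph (r m n : ℕ) (rv : Fin n → ℕ) : SimpleGraph (QVert r m n rv) :=
  SimpleGraph.fromRel (fun a b =>
    (a = Sum.inl () ∧
      ((∃ i, b = Sum.inr (Sum.inl i)) ∨
       (∃ i, b = Sum.inr (Sum.inr (Sum.inl (i, (0 : Fin 2))))) ∨
       (∃ i, b = Sum.inr (Sum.inr (Sum.inr (Sum.inl i)))))) ∨
    (∃ i : Fin m, a = Sum.inr (Sum.inr (Sum.inl (i, (0 : Fin 2)))) ∧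
       b = Sum.inr (Sum.inr (Sum.inl (i, (1 : Fin 2))))) ∨
    (∃ (i : Fin n) (j : Fin (rv i)), a = Sum.inr (Sum.inr (Sum.inr (Sum.inl i))) ∧
       b = Sum.inr (Sum.inr (Sum.inr (Sum.inr ⟨i, j⟩)))))

section

open Classical Finset

/-- Deletion of all edges at `x`. -/
def SimpleGraph.isolate {V : Type*} (G : SimpleGraph V) (x : V) : SimpleGraph V where
  Adj u w := G.Adj u w ∧ u ≠ x ∧ w ≠ x
  symm := ⟨fun _ _ h => ⟨h.1.symm, h.2.2, h.2.1⟩⟩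
  loopless := ⟨fun _ h => h.1.ne rfl⟩

/-- Replacement of the path `a, s, b` by the edge `a b`. -/
def SimpleGraph.suppress {V : Type*} (G : SimpleGraph V) (a s b : V) : SimpleGraph V :=
  G.isolate s ⊔ SimpleGraph.edge a b

theorem isolate_adj {V : Type*} {G : SimpleGraph V} {x u w : V} :
    (G.isolate x).Adj u w ↔ G.Adj u w ∧ u ≠ x ∧ w ≠ x := Iff.rfl

theorem suppress_adj {V : Type*} {G : SimpleGraph V} {a s b u w : V} :
    (G.suppress a s b).Adj u w ↔ (G.Adj u w ∧ u ≠ s ∧ w ≠ s) ∨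
      ((u = a ∧ w = b ∨ u = b ∧ w = a) ∧ u ≠ w) := by
  simp only [SimpleGraph.suppress, SimpleGraph.sup_adj, isolate_adj, SimpleGraph.edge_adj]

/-- The coloring `c` with the color of the edge `u w` changed to `i`. -/
noncomputable def recolorEdge {V : Type*} (c : V → V → ℕ) (u w : V) (i : ℕ) (y z : V) : ℕ :=
  if y = u ∧ z = w ∨ y = w ∧ z = u then i else c y z

/-- `c` is a proper edge coloring of `G` and `S u` is the set of colors at `u`. -/
structure IsColoring {V : Type*} (G : SimpleGraph V) (c : V → V → ℕ) (S : V → Finset ℕ) :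
    Prop where
  comm : ∀ u w, c u w = c w u
  mem : ∀ u i, i ∈ S u ↔ ∃ w, G.Adj u w ∧ c u w = i
  inj : ∀ u w w', G.Adj u w → G.Adj u w' → c u w = c u w' → w = w'

variable {V : Type*} {G : SimpleGraph V} {c : V → V → ℕ} {S : V → Finset ℕ}

theorem recolorEdge_comm (hc : ∀ u w, c u w = c w u) (u w : V) (i : ℕ) (y z : V) :
    recolorEdge c u w i y z = recolorEdge c u w i z y := by
  unfold recolorEdge
  grind

theorem IsColoring.recolor (h : IsColoring G c S) {u w : V} (huw : G.Adj u w) {e i : ℕ}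
    (he : c u w = e) (hu : i ∉ S u) (hw : i ∉ S w) :
    IsColoring G (recolorEdge c u w i)
      (Function.update (Function.update S u (insert i ((S u).erase e))) w
        (insert i ((S w).erase e))) := by
  obtain ⟨hc, hm, hi⟩ := h
  have hne := huw.ne
  have hwu := huw.symm
  refine ⟨recolorEdge_comm hc u w i, fun z k => ?_, fun z y y' h1 h2 => ?_⟩
  · by_cases hzw : z = w
    · subst hzw
      simp only [Function.update_self, mem_insert, mem_erase, hm, recolorEdge]
      grind
    by_cases hzu : z = u
    · subst hzu
      simp only [Function.update_apply, mem_insert, mem_erase, hm, recolorEdge]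
      grind
    · simp only [Function.update_apply, hzw, hzu, if_false, hm, recolorEdge]
      grind
  · simp only [recolorEdge]
    grind

theorem IsColoring.addLeaf {x v : V} (h : IsColoring (G.isolate x) c S) (hvx : G.Adj v x)
    (hx : ∀ w, G.Adj x w → w = v) {i : ℕ} (hi : i ∉ S v) :
    IsColoring G (recolorEdge c v x i)
      (Function.update (Function.update S v (insert i (S v))) x {i}) := by
  obtain ⟨hc, hm, hin⟩ := h
  have hne := hvx.ne
  have hxv := hvx.symm
  simp only [isolate_adj] at hm hin
  refine ⟨recolorEdge_comm hc v x i, fun z k => ?_, fun z y y' h1 h2 => ?_⟩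
  · by_cases hzw : z = x
    · subst hzw
      simp only [Function.update_self, mem_singleton, recolorEdge]
      grind
    by_cases hzu : z = v
    · subst hzu
      simp only [Function.update_apply, mem_insert, hm, recolorEdge]
      grind
    · simp only [Function.update_apply, hzw, hzu, if_false, hm, recolorEdge]
      grind [G.adj_comm]
  · have h3 : y = x → z = v := by rintro rfl; exact hx _ h1.symm
    have h4 : y' = x → z = v := by rintro rfl; exact hx _ h2.symm
    have h5 := hin z y y'
    have h6 : ∀ w, G.Adj v w → w ≠ x → c v w ≠ i := fun w h h' h'' =>
      hi ((hm v i).2 ⟨w, ⟨h, hne, h'⟩, h''⟩)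
    have h7 : z = x → y = v ∧ y' = v := by rintro rfl; exact ⟨hx _ h1, hx _ h2⟩
    clear hm hin
    simp only [recolorEdge]
    grind

theorem IsColoring.subdivide {a s b : V} (h : IsColoring (G.suppress a s b) c S)
    (ha : G.Adj s a) (hb : G.Adj s b) (hs : ∀ w, G.Adj s w → w = a ∨ w = b) (hab : a ≠ b)
    (hnab : ¬ G.Adj a b) {i e : ℕ} (he : c a b = e) (hi : i ∉ S a) :
    IsColoring G (recolorEdge (recolorEdge c a s i) s b e)
      (Function.update (Function.update S a (insert i ((S a).erase e))) s {i, e}) := by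
  obtain ⟨hc, hm, hin⟩ := h
  have hsa := ha.ne
  have hsb := hb.ne
  have has := ha.symm
  have hbs := hb.symm
  have hnba : ¬ G.Adj b a := fun h => hnab h.symm
  have he' : c b a = e := by rw [hc, he]
  simp only [suppress_adj] at hm hin
  have hea : e ∈ S a := by rw [hm]; exact ⟨b, by tauto⟩
  have heb : e ∈ S b := by rw [hm]; exact ⟨a, by tauto⟩
  have hie : i ≠ e := by rintro rfl; exact hi hea
  refine ⟨recolorEdge_comm (recolorEdge_comm hc a s i) s b e, fun z k => ?_,
    fun z y y' h1 h2 => ?_⟩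
  · by_cases hzs : z = s
    · subst hzs
      simp only [Function.update_self, mem_insert, mem_singleton, recolorEdge]
      grind
    by_cases hza : z = a
    · subst hza
      rw [Function.update_of_ne hzs, Function.update_self]
      simp only [mem_insert, mem_erase, recolorEdge]
      simp only [hm] at hi ⊢
      grind
    · rw [Function.update_of_ne hzs, Function.update_of_ne hza]
      simp only [recolorEdge, hm]
      by_cases hzb : z = b
      · subst hzb
        grind
      · grind [G.adj_comm]
  · have h3 : y = s → z = a ∨ z = b := by rintro rfl; exact hs _ h1.symm
    have h4 : y' = s → z = a ∨ z = b := by rintro rfl; exact hs _ h2.symm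
    have h5 := hin z y y'
    have h6 := hin z y b
    have h7 := hin z y' b
    have h8 := hin z y a
    have h9 := hin z y' a
    have h10 : ∀ w, G.Adj a w → w ≠ s → c a w ≠ i := fun w h h' h'' =>
      hi ((hm a i).2 ⟨w, Or.inl ⟨h, hsa.symm, h'⟩, h''⟩)
    clear hin hm hi hea heb
    simp only [recolorEdge]
    by_cases hzs : z = s
    · grind
    by_cases hza : z = a
    · grind
    by_cases hzb : z = b
    · grind
    grind

end

section

open Classical Finset

variable {V : Type*} [Fintype V] {G : SimpleGraph V}

noncomputable def dg (G : SimpleGraph V) (u : V) : ℕ := (univ.filter (G.Adj u)).card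

/-- The number of vertices of degree `d`. -/
noncomputable def numDg (G : SimpleGraph V) (d : ℕ) : ℕ := (univ.filter (fun u => dg G u = d)).card

/-- The number of non-isolated vertices. -/
noncomputable def supp (G : SimpleGraph V) : ℕ := (univ.filter (fun u => dg G u ≠ 0)).card

/-- `x` is a leaf attached to `v`. -/
structure LeafAt (G : SimpleGraph V) (x v : V) : Prop where
  adj : G.Adj v x
  eq : ∀ w, G.Adj x w → w = v

/-- The vertex `s` has exactly the two distinct neighbors `a` and `b`. -/
structure Mid (G : SimpleGraph V) (a s b : V) : Prop where
  left : G.Adj s a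
  right : G.Adj s b
  ne : a ≠ b
  eq : ∀ w, G.Adj s w → w = a ∨ w = b

theorem dg_pos {u w : V} (h : G.Adj u w) : 1 ≤ dg G u :=
  card_pos.2 ⟨w, by simp [h]⟩

theorem exists_adj_of_dg_ne_zero {u : V} (h : dg G u ≠ 0) : ∃ w, G.Adj u w := by
  obtain ⟨w, hw⟩ := card_pos.1 (Nat.pos_of_ne_zero h)
  exact ⟨w, by simpa using hw⟩

theorem two_le_dg {u w w' : V} (h : G.Adj u w) (h' : G.Adj u w') (hne : w ≠ w') :
    2 ≤ dg G u :=
  one_lt_card.2 ⟨w, by simp [h], w', by simp [h'], hne⟩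

theorem three_le_dg {u w w' w'' : V} (h : G.Adj u w) (h' : G.Adj u w') (h'' : G.Adj u w'')
    (h1 : w ≠ w') (h2 : w ≠ w'') (h3 : w' ≠ w'') : 3 ≤ dg G u :=
  two_lt_card.2 ⟨w, by simp [h], w', by simp [h'], w'', by simp [h''], h1, h2, h3⟩

theorem LeafAt.dg {x v : V} (h : LeafAt G x v) : dg G x = 1 :=
  card_eq_one.2 ⟨v, by ext w; simpa using ⟨h.eq w, fun e => e ▸ h.adj.symm⟩⟩

theorem leafAt_of_dg {x v : V} (h : G.Adj v x) (hd : dg G x = 1) : LeafAt G x v := by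
  refine ⟨h, fun w hw => by_contra fun hne => ?_⟩
  have := two_le_dg hw h.symm hne
  omega

theorem exists_leafAt_of_dg {x : V} (hd : dg G x = 1) : ∃ v, LeafAt G x v := by
  obtain ⟨v, hv⟩ := exists_adj_of_dg_ne_zero (G := G) (u := x) (by omega)
  exact ⟨v, leafAt_of_dg hv.symm hd⟩

theorem Mid.symm {a s b : V} (h : Mid G a s b) : Mid G b s a :=
  ⟨h.right, h.left, h.ne.symm, fun w hw => (h.eq w hw).symm⟩

theorem Mid.dg {a s b : V} (h : Mid G a s b) : dg G s = 2 :=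
  card_eq_two.2 ⟨a, b, h.ne, by
    ext w; simpa using ⟨h.eq w, by rintro (rfl | rfl); exacts [h.left, h.right]⟩⟩

theorem exists_adj_ne {u w : V} (hd : 2 ≤ dg G u) : ∃ w', G.Adj u w' ∧ w' ≠ w := by
  by_contra! hc
  have : dg G u ≤ 1 := card_le_one.2 fun a ha b hb => by
    rw [hc a (by simpa using ha), hc b (by simpa using hb)]
  omega

theorem exists_adj_ne_ne {u w w' : V} (hd : 3 ≤ dg G u) :
    ∃ z, G.Adj u z ∧ z ≠ w ∧ z ≠ w' := by
  by_contra! hc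
  have : dg G u ≤ 2 := by
    refine (card_le_card (t := {w, w'}) fun z hz => ?_).trans card_le_two
    have := hc z (by simpa using hz)
    simp only [mem_insert, mem_singleton]
    tauto
  omega

theorem exists_mid_of_dg {a s : V} (h : G.Adj a s) (hd : dg G s = 2) : ∃ b, Mid G a s b := by
  obtain ⟨b, hb, hne⟩ := exists_adj_ne (G := G) (u := s) (w := a) (by omega)
  refine ⟨b, h.symm, hb, hne.symm, fun w hw => by_contra fun hc => ?_⟩
  push Not at hc
  have := three_le_dg hw h.symm hb hc.1 hc.2 hne.symm
  omega

theorem eq_of_dg_eq_three {v a b c : V} (ha : G.Adj v a) (hb : G.Adj v b) (hc : G.Adj v c)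
    (hab : a ≠ b) (hac : a ≠ c) (hbc : b ≠ c) (hd : dg G v = 3) (w : V) (hw : G.Adj v w) :
    w = a ∨ w = b ∨ w = c := by
  by_contra! h
  have : ({w, a, b, c} : Finset V).card ≤ dg G v := card_le_card fun z hz => by
    simp only [mem_insert, mem_singleton] at hz
    rcases hz with rfl | rfl | rfl | rfl <;> simpa
  rw [card_insert_of_notMem (by simp [h]), card_insert_of_notMem (by simp [hab, hac]),
    card_pair hbc] at this
  omega

theorem dg_isolate {x v : V} (h : LeafAt G x v) (u : V) :
    dg (G.isolate x) u = if u = x then 0 else if u = v then dg G v - 1 else dg G u := by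
  unfold _root_.dg
  split_ifs with h1 h2
  · subst h1
    rw [card_eq_zero]
    ext w
    simp [isolate_adj]
  · subst h2
    rw [← card_erase_of_mem (a := x) (by simp [h.adj])]
    congr 1
    ext w
    simp [isolate_adj, h1, and_comm]
  · congr 1
    ext w
    have : w = x → ¬ G.Adj u w := by
      rintro rfl h'
      exact h2 (h.eq _ h'.symm)
    simp only [isolate_adj, mem_filter, mem_univ, true_and]
    tauto

theorem dg_suppress {a s b : V} (h : Mid G a s b) (hab : ¬ G.Adj a b) (u : V) :
    dg (G.suppress a s b) u = if u = s then 0 else dg G u := by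
  have hne := h.ne
  have hsa := h.left.ne
  have hsb := h.right.ne
  have hA := h.left.symm
  have hB := h.right.symm
  have hba : ¬ G.Adj b a := fun h => hab h.symm
  have key : ∀ z y : V, (z = a ∧ y = b ∨ z = b ∧ y = a) →
      dg (G.suppress a s b) z = dg G z := by
    intro z y hz
    have e1 : univ.filter ((G.suppress a s b).Adj z) =
        insert y ((univ.filter (G.Adj z)).erase s) := by
      ext w
      simp only [suppress_adj, mem_filter, mem_univ, true_and, mem_insert, mem_erase]
      grind
    have e2 : s ∈ univ.filter (G.Adj z) := by
      simp only [mem_filter, mem_univ, true_and]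
      grind
    have e3 : y ∉ (univ.filter (G.Adj z)).erase s := by
      simp only [mem_filter, mem_univ, true_and, mem_erase]
      grind
    unfold _root_.dg
    rw [e1, card_insert_of_notMem e3, card_erase_add_one e2]
  by_cases hua : u = a
  · subst hua
    rw [key u b (by simp), if_neg hsa.symm]
  by_cases hub : u = b
  · subst hub
    rw [key u a (by simp), if_neg hsb.symm]
  split_ifs with h1
  · unfold _root_.dg
    rw [card_eq_zero]
    ext w
    simp only [suppress_adj, mem_filter, mem_univ, true_and, notMem_empty]
    grind
  · unfold _root_.dg
    congr 1
    ext w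
    have : w = s → ¬ G.Adj u w := by
      rintro rfl h'
      have := h.eq _ h'.symm
      tauto
    simp only [suppress_adj, mem_filter, mem_univ, true_and]
    tauto

theorem sum_ite_eq_update (φ : ℕ → ℤ) (f : V → ℕ) (x : V) (k : ℕ) :
    ∑ u, φ (if u = x then k else f u) = ∑ u, φ (f u) - φ (f x) + φ k := by
  rw [← add_sum_erase univ _ (mem_univ x), ← add_sum_erase univ (fun u => φ (f u)) (mem_univ x),
    if_pos rfl, sum_congr rfl (g := fun u => φ (f u))
      fun u hu => by rw [if_neg (ne_of_mem_erase hu)]]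
  ring

theorem sum_isolate (φ : ℕ → ℤ) {x v : V} (h : LeafAt G x v) :
    ∑ u, φ (dg (G.isolate x) u) =
      ∑ u, φ (dg G u) - φ 1 + φ 0 - φ (dg G v) + φ (dg G v - 1) := by
  simp only [dg_isolate h]
  rw [sum_ite_eq_update φ (fun u => if u = v then dg G v - 1 else dg G u), sum_ite_eq_update]
  simp only [h.adj.ne', if_false, h.dg]
  ring

theorem sum_suppress (φ : ℕ → ℤ) {a s b : V} (h : Mid G a s b) (hab : ¬ G.Adj a b) :
    ∑ u, φ (dg (G.suppress a s b) u) = ∑ u, φ (dg G u) - φ 2 + φ 0 := by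
  simp only [dg_suppress h hab]
  rw [sum_ite_eq_update, h.dg]

theorem numDg_eq_sum (d : ℕ) : (numDg G d : ℤ) = ∑ u, if dg G u = d then 1 else 0 := by
  simp [numDg]

theorem supp_eq_sum : (supp G : ℤ) = ∑ u, if dg G u = 0 then 0 else 1 := by
  simp [supp, Finset.sum_ite]

theorem numDg_isolate {x v : V} (h : LeafAt G x v) (d : ℕ) (hd : d ≠ 0) :
    numDg (G.isolate x) d + (if 1 = d then 1 else 0) + (if dg G v = d then 1 else 0) =
      numDg G d + (if dg G v - 1 = d then 1 else 0) := by
  rw [← Nat.cast_inj (R := ℤ)]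
  push_cast
  rw [numDg_eq_sum, numDg_eq_sum, sum_isolate (fun k => if k = d then 1 else 0) h]
  simp only [hd.symm, if_false]
  ring

theorem numDg_suppress {a s b : V} (h : Mid G a s b) (hab : ¬ G.Adj a b) (d : ℕ) (hd : d ≠ 0) :
    numDg (G.suppress a s b) d + (if 2 = d then 1 else 0) = numDg G d := by
  rw [← Nat.cast_inj (R := ℤ)]
  push_cast
  rw [numDg_eq_sum, numDg_eq_sum, sum_suppress (fun k => if k = d then 1 else 0) h hab]
  simp only [hd.symm, if_false]
  ring

theorem supp_isolate {x v : V} (h : LeafAt G x v) (hv : 2 ≤ dg G v) :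
    supp (G.isolate x) + 1 = supp G := by
  zify
  rw [supp_eq_sum, supp_eq_sum, sum_isolate (fun k => if k = 0 then 0 else 1) h,
    if_neg (by omega : dg G v - 1 ≠ 0), if_neg (by omega : dg G v ≠ 0)]
  simp

theorem supp_suppress {a s b : V} (h : Mid G a s b) (hab : ¬ G.Adj a b) :
    supp (G.suppress a s b) + 1 = supp G := by
  zify
  rw [supp_eq_sum, supp_eq_sum, sum_suppress (fun k => if k = 0 then 0 else 1) h hab]
  simp

/-- `G` is a tree up to isolated vertices. -/
structure TreeLike (G : SimpleGraph V) : Prop where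
  acyclic : G.IsAcyclic
  reachable : ∀ u w, dg G u ≠ 0 → dg G w ≠ 0 → G.Reachable u w
  sum : ∑ u, (if dg G u = 0 then 0 else (dg G u : ℤ) - 2) = -2

theorem reachable_map {V' : Type*} {G' : SimpleGraph V'} (φ : V → V')
    (h : ∀ a b, G.Adj a b → G'.Reachable (φ a) (φ b)) {a b : V} (hab : G.Reachable a b) :
    G'.Reachable (φ a) (φ b) := by
  obtain ⟨p⟩ := hab
  induction p with
  | nil => exact Reachable.refl _
  | cons h' _ ih => exact (h _ _ h').trans ih

theorem SimpleGraph.isolate_le (G : SimpleGraph V) (x : V) : G.isolate x ≤ G := fun _ _ h => h.1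

theorem not_adj_of_isAcyclic (hG : G.IsAcyclic) {a s b : V} (ha : G.Adj s a) (hb : G.Adj s b) :
    ¬ G.Adj a b := by
  intro hab
  have := isAcyclic_iff_forall_adj_isBridge.1 hG ha
  rw [isBridge_iff] at this
  refine this ((Adj.reachable (v := b) ?_).trans (Adj.reachable ?_))
  · have := hab.ne
    simp [hb, this.symm, ha.ne]
  · simp [hab.symm, hb.ne', ha.ne']

theorem TreeLike.isolate (h : TreeLike G) {x v : V} (hx : LeafAt G x v) (hv : 2 ≤ dg G v) :
    TreeLike (G.isolate x) := by
  refine ⟨h.acyclic.anti (G.isolate_le x), fun u w hu hw => ?_, ?_⟩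
  · rw [dg_isolate hx] at hu hw
    have hux : u ≠ x := fun e => hu (if_pos e)
    have hwx : w ≠ x := fun e => hw (if_pos e)
    have hr : G.Reachable u w := by
      apply h.reachable
      · rw [if_neg hux] at hu; split_ifs at hu with hc
        · subst hc; omega
        · exact hu
      · rw [if_neg hwx] at hw; split_ifs at hw with hc
        · subst hc; omega
        · exact hw
    have := reachable_map (G' := G.isolate x) (fun z => if z = x then v else z) ?_ hr
    · simpa [hux, hwx] using this
    · intro a b hab
      split_ifs with h1 h2 h2
      · exact Reachable.refl _
      · rw [hx.eq b (h1 ▸ hab)]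
      · rw [hx.eq a (h2 ▸ hab.symm)]
      · exact Adj.reachable ⟨hab, h1, h2⟩
  · rw [sum_isolate (fun k => if k = 0 then 0 else (k : ℤ) - 2) hx, h.sum]
    rw [if_neg (by omega : dg G v - 1 ≠ 0), if_neg (by omega : dg G v ≠ 0)]
    push_cast [Nat.cast_sub (by omega : 1 ≤ dg G v)]
    ring

theorem TreeLike.not_adj (h : TreeLike G) {a s b : V} (hs : Mid G a s b) : ¬ G.Adj a b :=
  not_adj_of_isAcyclic h.acyclic hs.left hs.right

theorem TreeLike.suppress (h : TreeLike G) {a s b : V} (hs : Mid G a s b) :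
    TreeLike (G.suppress a s b) := by
  have hab := h.not_adj hs
  refine ⟨?_, fun u w hu hw => ?_, ?_⟩
  · refine (h.acyclic.anti (G.isolate_le s)).sup_edge_of_not_reachable fun hr => ?_
    have := isAcyclic_iff_forall_adj_isBridge.1 h.acyclic hs.left
    rw [isBridge_iff] at this
    refine this ((Adj.reachable (v := b) ?_).trans (hr.symm.mono ?_))
    · simp [hs.right, hs.ne.symm, hs.left.ne]
    · intro y z hyz
      simp [hyz.1, hyz.2.1, hyz.2.2]
  · rw [dg_suppress hs hab] at hu hw
    have hus : u ≠ s := fun e => hu (if_pos e)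
    have hws : w ≠ s := fun e => hw (if_pos e)
    rw [if_neg hus] at hu
    rw [if_neg hws] at hw
    have := reachable_map (G' := G.suppress a s b) (fun z => if z = s then a else z) ?_
      (h.reachable u w hu hw)
    · simpa [hus, hws] using this
    · have hA : (G.suppress a s b).Reachable a b :=
        Adj.reachable (suppress_adj.2 (Or.inr ⟨Or.inl ⟨rfl, rfl⟩, hs.ne⟩))
      intro y z hyz
      split_ifs with h1 h2 h2
      · exact Reachable.refl _
      · rcases hs.eq z (h1 ▸ hyz) with rfl | rfl
        · exact Reachable.refl _
        · exact hA
      · rcases hs.eq y (h2 ▸ hyz.symm) with rfl | rfl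
        · exact Reachable.refl _
        · exact hA.symm
      · exact Adj.reachable (suppress_adj.2 (Or.inl ⟨hyz, h1, h2⟩))
  · rw [sum_suppress (fun k => if k = 0 then 0 else (k : ℤ) - 2) hs hab, h.sum]
    simp

end

section

open Classical Finset

variable {V : Type*} [Fintype V] {G : SimpleGraph V} {c : V → V → ℕ} {S S' : V → Finset ℕ}

/-- Distinct vertices with nonempty color sets have distinct color sets. -/
def Distinguishes (S : V → Finset ℕ) : Prop :=
  ∀ u w, S u = S w → (S u).Nonempty → u = w

/-- `G` has an edge coloring with colors below `k` distinguishing non-isolated vertices. -/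
def Good (G : SimpleGraph V) (k : ℕ) : Prop :=
  ∃ c S, IsColoring G c S ∧ (∀ u, S u ⊆ range k) ∧ Distinguishes S

theorem IsColoring.card_eq (h : IsColoring G c S) (u : V) : (S u).card = dg G u := by
  rw [dg, ← card_image_of_injOn (f := c u)]
  · congr 1
    ext i
    simp [h.mem u i]
  · intro w hw w' hw' he
    exact h.inj u w w' (by simpa using hw) (by simpa using hw') he

theorem IsColoring.color_mem (h : IsColoring G c S) {u w : V} (huw : G.Adj u w) : c u w ∈ S u :=
  (h.mem u _).2 ⟨w, huw, rfl⟩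

theorem IsColoring.color_mem' (h : IsColoring G c S) {u w : V} (huw : G.Adj u w) :
    c u w ∈ S w :=
  (h.mem w _).2 ⟨u, huw.symm, h.comm w u⟩

theorem IsColoring.leaf_eq (h : IsColoring G c S) {x v : V} (hx : LeafAt G x v) :
    S x = {c v x} := by
  ext i
  rw [h.mem, mem_singleton]
  constructor
  · rintro ⟨w, hw, rfl⟩
    rw [hx.eq w hw, h.comm]
  · rintro rfl
    exact ⟨v, hx.adj.symm, h.comm x v⟩

theorem IsColoring.mid_eq (h : IsColoring G c S) {a s b : V} (hs : Mid G a s b) :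
    S s = {c a s, c s b} := by
  ext i
  rw [h.mem, mem_insert, mem_singleton]
  constructor
  · rintro ⟨w, hw, rfl⟩
    rcases hs.eq w hw with rfl | rfl
    · exact Or.inl (h.comm _ _)
    · exact Or.inr rfl
  · rintro (rfl | rfl)
    · exact ⟨a, hs.left, h.comm _ _⟩
    · exact ⟨b, hs.right, rfl⟩

theorem IsColoring.mid_ne (h : IsColoring G c S) {a s b : V} (hs : Mid G a s b) :
    c a s ≠ c s b := fun e =>
  hs.ne (h.inj s a b hs.left hs.right ((h.comm _ _).trans e))

/-- Any vertex with a second neighbor keeps a color after erasing the one of a given edge. -/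
theorem IsColoring.erase_nonempty (h : IsColoring G c S) {u w z : V} (hw : G.Adj u w)
    (hz : G.Adj u z) (hne : z ≠ w) : ((S u).erase (c u w)).Nonempty :=
  ⟨c u z, mem_erase.2 ⟨fun e => hne (h.inj u z w hz hw e), h.color_mem hz⟩⟩

theorem good_of_transfer {N : ℕ} (hc : IsColoring G c S) (hr : ∀ u, S u ⊆ range (N + 1))
    (hd : Distinguishes S') (τ : V → V) (h0 : ∀ u, N ∉ S u → S u = S' (τ u))
    (hτ : ∀ u w, N ∉ S u → N ∉ S w → τ u = τ w → u = w)
    (h1 : ∀ u w, N ∈ S u → N ∈ S w → S u = S w → u = w) : Good G (N + 1) := by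
  refine ⟨c, S, hc, hr, fun u w h hne => ?_⟩
  by_cases hu : N ∈ S u
  · exact h1 u w hu (h ▸ hu) h
  · have hw : N ∉ S w := h ▸ hu
    refine hτ u w hu hw (hd _ _ ?_ ?_)
    · rw [← h0 u hu, ← h0 w hw, h]
    · rwa [← h0 u hu]

/-- In passing from the color sets `S'` to `S`, the vertices of `L` receive sets containing the new
color `N`, the pairs `(x, p)` of `M` are such that `x` takes over the set of `p`, and the other
vertices keep their sets. -/
theorem good_of_lists {N : ℕ} (hc : IsColoring G c S) (hr : ∀ u, S' u ⊆ range N)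
    (hd : Distinguishes S') (L : List (V × Finset ℕ)) (M : List (V × V))
    (hL : ∀ e ∈ L, S e.1 = e.2 ∧ N ∈ e.2 ∧ e.2 ⊆ range (N + 1))
    (hM : ∀ e ∈ M, S e.1 = S' e.2 ∧ ∃ e' ∈ L, e'.1 = e.2)
    (ho : ∀ u, (∀ e ∈ L, u ≠ e.1) → (∀ e ∈ M, u ≠ e.1) → S u = S' u)
    (hLp : (L.map Prod.snd).Nodup) (hMp : (M.map Prod.snd).Nodup) :
    Good G (N + 1) := by
  have hN : ∀ u, N ∉ S' u := fun u hu => by simpa using hr u hu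
  have key : ∀ u, (∃ e ∈ L, u = e.1) ∨ (N ∉ S u ∧ ∃ e ∈ M, u = e.1) ∨
      (N ∉ S u ∧ S u = S' u ∧ ∀ e ∈ L, u ≠ e.1) := by
    intro u
    by_cases h1 : ∃ e ∈ L, u = e.1
    · exact Or.inl h1
    by_cases h2 : ∃ e ∈ M, u = e.1
    · obtain ⟨e, he, rfl⟩ := h2
      exact Or.inr (Or.inl ⟨(hM e he).1 ▸ hN _, e, he, rfl⟩)
    · push Not at h1 h2
      have := ho u h1 h2
      exact Or.inr (Or.inr ⟨this ▸ hN _, this, h1⟩)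
  refine ⟨c, S, hc, fun u => ?_, fun u w h hne => ?_⟩
  · rcases key u with ⟨e, he, rfl⟩ | ⟨-, e, he, rfl⟩ | ⟨-, h, -⟩
    · rw [(hL e he).1]; exact (hL e he).2.2
    · rw [(hM e he).1]; exact (hr _).trans (range_mono (by omega))
    · rw [h]; exact (hr _).trans (range_mono (by omega))
  · have hLM : ∀ e ∈ L, N ∈ S e.1 := fun e he => (hL e he).1 ▸ (hL e he).2.1
    rcases key u with ⟨e, he, rfl⟩ | ⟨hu, e, he, rfl⟩ | ⟨hu, h1, h2⟩ <;>
    rcases key w with ⟨e', he', rfl⟩ | ⟨hw, e', he', rfl⟩ | ⟨hw, h3, h4⟩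
    · refine congrArg Prod.fst (List.inj_on_of_nodup_map hLp he he' ?_)
      rw [← (hL e he).1, ← (hL e' he').1, h]
    · exact absurd (h ▸ hLM e he) hw
    · exact absurd (h ▸ hLM e he) hw
    · exact absurd (h ▸ hLM e' he') hu
    · refine congrArg Prod.fst (List.inj_on_of_nodup_map hMp he he' ?_)
      refine hd _ _ ?_ ?_
      · rw [← (hM e he).1, ← (hM e' he').1, h]
      · rwa [← (hM e he).1]
    · obtain ⟨e', he', h5⟩ := (hM e he).2
      refine absurd (hd _ _ ?_ ?_) (h4 e' he')
      · rw [h5, ← (hM e he).1, ← h3, h]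
      · rwa [← h3, ← h]
    · exact absurd (h ▸ hLM e' he') hu
    · obtain ⟨e, he, h5⟩ := (hM e' he').2
      refine absurd (hd _ _ ?_ ?_) (h2 e he)
      · rw [h5, ← (hM e' he').1, ← h1, h]
      · rwa [← h1]
    · refine hd _ _ ?_ ?_
      · rw [← h1, ← h3, h]
      · rwa [← h1]

theorem insert_ne_insert {N : ℕ} {A B : Finset ℕ} (hA : N ∉ A) (hB : N ∉ B) (h : A ≠ B) :
    insert N A ≠ insert N B := fun e => h <| by
  rw [← erase_insert hA, e, erase_insert hB]

theorem exists_lt_ne_ne {N : ℕ} (hN : 3 ≤ N) (i j : ℕ) : ∃ f < N, f ≠ i ∧ f ≠ j := by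
  by_contra! h
  have h0 := h 0
  have h1 := h 1
  have h2 := h 2
  omega

theorem exists_lt_ne_singleton {N : ℕ} (hN : 3 ≤ N) (j : ℕ) (A : Finset ℕ) :
    ∃ f < N, f ≠ j ∧ A ≠ {f} := by
  by_cases hA : ∃ i, A = {i}
  · obtain ⟨i, rfl⟩ := hA
    obtain ⟨f, hf, hfi, hfj⟩ := exists_lt_ne_ne hN i j
    exact ⟨f, hf, hfj, fun e => hfi (singleton_injective e).symm⟩
  · obtain ⟨f, hf, hfj, -⟩ := exists_lt_ne_ne hN j j
    exact ⟨f, hf, hfj, fun e => hA ⟨f, e⟩⟩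

theorem Good.mono {k k' : ℕ} (h : Good G k) (hk : k ≤ k') : Good G k' := by
  obtain ⟨c, S, hc, hr, hd⟩ := h
  exact ⟨c, S, hc, fun u => (hr u).trans (range_mono hk), hd⟩

/-- Attaching a leaf to a vertex, using a new color for the new edge. -/
theorem Good.addLeaf {x v : V} (hx : LeafAt G x v) (hv : 2 ≤ dg G v) {N : ℕ}
    (h : Good (G.isolate x) N) : Good G (N + 1) := by
  obtain ⟨c, S, hc, hr, hd⟩ := h
  have hN : ∀ u, N ∉ S u := fun u hu => by simpa using hr u hu
  have hxv := hx.adj.ne'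
  obtain ⟨w, hw, hwx⟩ := exists_adj_ne (w := x) hv
  have hwv : (S v).Nonempty :=
    ⟨c v w, hc.color_mem ⟨hw, hx.adj.ne, hwx⟩⟩
  have h1 := hc.addLeaf hx.adj hx.eq (hN v)
  refine good_of_transfer h1 ?_ hd id ?_ ?_ ?_ <;> simp only [Function.update_apply]
  · intro u i
    have := @hr u i
    have := @hr v i
    grind
  · grind
  · grind
  · intro u w
    have hne : insert N (S v) ≠ {N} := by
      obtain ⟨i, hi⟩ := hwv
      intro e
      have : i ∈ ({N} : Finset ℕ) := e ▸ mem_insert_of_mem hi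
      rw [mem_singleton] at this
      exact hN v (this ▸ hi)
    grind

theorem Good.op_twoLeaves {x₁ x₂ v p q : V} (h₁ : LeafAt G x₁ v) (h₂ : LeafAt G x₂ v)
    (h12 : x₁ ≠ x₂) (hp : Mid G v p q) (hv : ∀ w, G.Adj v w → w = x₁ ∨ w = x₂ ∨ w = p)
    (hq : 2 ≤ dg G q) {N : ℕ} (hN3 : 3 ≤ N)
    (h : Good (((G.isolate x₁).isolate x₂).isolate v) N) : Good G (N + 1) := by
  obtain ⟨c, S, hc, hr, hd⟩ := h
  have hN : ∀ u, N ∉ S u := fun u hu => by simpa using hr u hu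
  have a1 := h₁.adj.ne
  have a2 := h₂.adj.ne
  have a3 := hp.left.ne
  have a4 := hp.right.ne
  have a5 := hp.ne
  have a6 : x₁ ≠ p := by rintro rfl; exact a5 (h₁.eq q hp.right).symm
  have a7 : x₂ ≠ p := by rintro rfl; exact a5 (h₂.eq q hp.right).symm
  have a8 : x₁ ≠ q := by rintro rfl; exact a3 (h₁.eq p hp.right.symm)
  have a9 : x₂ ≠ q := by rintro rfl; exact a3 (h₂.eq p hp.right.symm)
  obtain ⟨z, hz, hzp⟩ := exists_adj_ne (w := p) hq
  have hzx₁ : z ≠ x₁ := by rintro rfl; exact a5 (h₁.eq q hz.symm).symm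
  have hzx₂ : z ≠ x₂ := by rintro rfl; exact a5 (h₂.eq q hz.symm).symm
  have hzv : z ≠ v := by
    rintro rfl
    have := hv q hz.symm
    tauto
  have hqp : (((G.isolate x₁).isolate x₂).isolate v).Adj q p := by
    simp only [isolate_adj]
    have := hp.right.symm
    tauto
  have hqz : (((G.isolate x₁).isolate x₂).isolate v).Adj q z := by
    simp only [isolate_adj]
    tauto
  have hpl : LeafAt (((G.isolate x₁).isolate x₂).isolate v) p q := by
    refine ⟨hqp, fun w hw => ?_⟩
    simp only [isolate_adj] at hw
    have := hp.eq w
    tauto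
  obtain ⟨j, hj⟩ : ∃ j, c q p = j := ⟨_, rfl⟩
  have hSp := hc.leaf_eq hpl
  have hA := hc.erase_nonempty hqp hqz hzp
  rw [hj] at hSp hA
  have hjN : j < N := by
    have := hr p (hSp ▸ mem_singleton_self j)
    simpa using this
  obtain ⟨f, hf, hfj, hAf⟩ := exists_lt_ne_singleton hN3 j ((S q).erase j)
  have hc1 := hc.recolor hqp hj (hN q) (hN p)
  have hc2 := hc1.addLeaf (x := v) (v := p) (i := f)
    (by simp only [isolate_adj]; have := hp.left; tauto)
    (by simp only [isolate_adj]; intro w hw; have := hv w; tauto)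
    (by simp only [Function.update_apply]; grind)
  have hSv : S v = ∅ := by
    ext i
    simp [hc.mem, isolate_adj]
  have hc3 := hc2.addLeaf (x := x₂) (v := v) (i := N)
    (by simp only [isolate_adj]; have := h₂.adj; tauto)
    (by simp only [isolate_adj]; intro w hw; have := h₂.eq w; tauto)
    (by simp only [Function.update_apply]; grind)
  have hc4 := hc3.addLeaf (x := x₁) (v := v) (i := j) h₁.adj h₁.eq
    (by simp only [Function.update_apply]; grind)
  generalize hA' : (S q).erase j = A at *
  have hAN : N ∉ A := by rw [← hA']; exact fun h => hN q (mem_of_mem_erase h)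
  have hAj : j ∉ A := by rw [← hA']; simp
  have hAr : A ⊆ range N := by rw [← hA']; exact (erase_subset _ _).trans (hr q)
  generalize hS' : Function.update _ x₁ _ = S'' at hc4
  have e1 : S'' x₁ = {j} := by simp [← hS']
  have e2 : S'' x₂ = {N} := by simp [← hS', a2.symm, h12.symm]
  have e3 : S'' v = {j, N, f} := by simp [← hS', a1, a2, hSv]
  have e4 : S'' p = {f, N} := by simp [← hS', a3, a6.symm, a7.symm, hSp]
  have e5 : S'' q = insert N A := by
    simp [← hS', a4.symm, a5.symm, a8.symm, a9.symm]
  have hjN' := hjN.ne'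
  have hfN' := hf.ne'
  refine good_of_lists hc4 hr hd [(x₂, {N}), (v, {j, N, f}), (p, {f, N}), (q, insert N A)]
    [(x₁, p)] ?_ ?_ ?_ ?_ ?_
  · simp only [List.forall_mem_cons, insert_subset_iff, singleton_subset_iff, mem_range]
    have := hAr.trans (range_mono (by omega : N ≤ N + 1))
    refine ⟨⟨e2, by simp⟩, ⟨e3, by simp; omega⟩, ⟨e4, by simp; omega⟩, ⟨e5, by simp, by simp, this⟩,
      by simp⟩
  · simp [e1, hSp]
  · simp +contextual [← hS']
  · have n1 : ({N} : Finset ℕ) ≠ {j, N, f} := (ne_of_mem_of_not_mem' (a := j) (by simp)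
      (by simpa using hjN'.symm)).symm
    have n2 : ({N} : Finset ℕ) ≠ {f, N} := (ne_of_mem_of_not_mem' (a := f) (by simp)
      (by simpa using hfN'.symm)).symm
    have n3 : ({N} : Finset ℕ) ≠ insert N A :=
      insert_ne_insert (A := ∅) (by simp) hAN (nonempty_iff_ne_empty.1 hA).symm
    have n4 : ({j, N, f} : Finset ℕ) ≠ {f, N} := (ne_of_mem_of_not_mem' (a := j) (by simp)
      (by simp; omega))
    have n5 : ({j, N, f} : Finset ℕ) ≠ insert N A := (ne_of_mem_of_not_mem' (a := j) (by simp)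
      (by simp; tauto))
    have n6 : ({f, N} : Finset ℕ) ≠ insert N A := by
      rw [pair_comm]
      exact insert_ne_insert (by simpa using hfN') hAN hAf.symm
    simp [*]
  · simp

/-- `good_of_lists`, with the new color removed from the sets of the list `L`. -/
theorem good_of_inserts {N : ℕ} (hc : IsColoring G c S) (hr : ∀ u, S' u ⊆ range N)
    (hd : Distinguishes S') (L : List (V × Finset ℕ)) (M : List (V × V))
    (hL : ∀ e ∈ L, S e.1 = insert N e.2 ∧ e.2 ⊆ range N)
    (hM : ∀ e ∈ M, S e.1 = S' e.2 ∧ ∃ e' ∈ L, e'.1 = e.2)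
    (ho : ∀ u, (∀ e ∈ L, u ≠ e.1) → (∀ e ∈ M, u ≠ e.1) → S u = S' u)
    (hLp : (L.map Prod.snd).Nodup) (hMp : (M.map Prod.snd).Nodup) :
    Good G (N + 1) := by
  refine good_of_lists hc hr hd (L.map fun e => (e.1, insert N e.2)) M ?_ ?_ ?_ ?_ hMp
  · simp only [List.forall_mem_map]
    intro e he
    obtain ⟨h1, h2⟩ := hL e he
    refine ⟨h1, by simp, insert_subset (by simp) (h2.trans (range_mono (by omega)))⟩
  · intro e he
    obtain ⟨h1, e', he', h2⟩ := hM e he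
    exact ⟨h1, _, List.mem_map_of_mem he', h2⟩
  · intro u h1
    exact ho u fun e he =>
      h1 (e.1, insert N e.2) (List.mem_map_of_mem (f := fun e => (e.1, insert N e.2)) he)
  · rw [List.map_map]
    have hN : ∀ A ∈ L.map Prod.snd, N ∉ A := by
      simp only [List.forall_mem_map]
      intro e he h
      simpa using (hL e he).2 h
    have : (Prod.snd ∘ fun e : V × Finset ℕ => (e.1, insert N e.2)) = insert N ∘ Prod.snd := rfl
    rw [this, ← List.map_map]
    refine List.Nodup.map_on (fun A hA B hB h => ?_) hLp
    by_contra hne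
    exact insert_ne_insert (hN A hA) (hN B hB) hne h

theorem ne_empty_singleton {A : Finset ℕ} (h : 2 ≤ A.card) :
    A ≠ ∅ ∧ ∅ ≠ A ∧ ∀ i, A ≠ {i} ∧ {i} ≠ A := by
  refine ⟨?_, ?_, fun i => ⟨?_, ?_⟩⟩
  all_goals rintro rfl; simp at h

theorem ne_of_dg {u w : V} (h : dg G u ≠ dg G w) : u ≠ w := fun e => h (e ▸ rfl)

theorem Good.op_pendantPath {w s s' g y y' : V} (hs : Mid G w s s') (hs' : LeafAt G s' s)
    (hw : 3 ≤ dg G w) (hy : Mid G g y y') (hy' : LeafAt G y' y) (hys : y ≠ s) {N : ℕ}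
    (h : Good ((G.isolate s').isolate s) N) : Good G (N + 1) := by
  obtain ⟨c, S, hc, hr, hd⟩ := h
  have hN : ∀ u, N ∉ S u := fun u hu => by simpa using hr u hu
  have d1 := hs.dg
  have d2 := hs'.dg
  have d3 := hy.dg
  have d4 := hy'.dg
  have a1 : w ≠ s := ne_of_dg (G := G) (by omega)
  have a2 : w ≠ s' := ne_of_dg (G := G) (by omega)
  have a3 : w ≠ y := ne_of_dg (G := G) (by omega)
  have a4 : w ≠ y' := ne_of_dg (G := G) (by omega)
  have a5 : s ≠ s' := ne_of_dg (G := G) (by omega)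
  have a6 : s ≠ y' := ne_of_dg (G := G) (by omega)
  have a7 : y ≠ y' := ne_of_dg (G := G) (by omega)
  have a8 : y ≠ s' := ne_of_dg (G := G) (by omega)
  have a9 : y' ≠ s' := by rintro rfl; exact hys (hs'.eq _ hy'.adj.symm)
  have g1 : g ≠ s := by
    rintro rfl
    rcases hs.eq y hy.left.symm with rfl | rfl <;> tauto
  have g2 : g ≠ s' := by rintro rfl; exact hys (hs'.eq y hy.left.symm)
  have hsL : LeafAt (G.isolate s') s w :=
    ⟨⟨hs.left.symm, a2, a5⟩, fun z hz => (hs.eq z hz.1).resolve_right hz.2.2⟩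
  have hym : Mid ((G.isolate s').isolate s) g y y' :=
    ⟨⟨⟨hy.left, a8, g2⟩, hys, g1⟩, ⟨⟨hy.right, a8, a9⟩, hys, a6.symm⟩, hy.ne,
      fun z hz => hy.eq z hz.1.1⟩
  have hyl : LeafAt ((G.isolate s').isolate s) y' y := ⟨hym.right, fun z hz => hy'.eq z hz.1.1⟩
  have hwc : 2 ≤ (S w).card := by
    rw [hc.card_eq, dg_isolate hsL, dg_isolate hs', if_neg a1, if_pos rfl, if_neg a2, if_neg a1]
    omega
  have hy1 := hc.mid_ne hym
  have hSy := hc.mid_eq hym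
  have hSy' := hc.leaf_eq hyl
  have hrw := hr w
  have hry := hr y
  obtain ⟨j, hj⟩ : ∃ j, c y y' = j := ⟨_, rfl⟩
  obtain ⟨i, hi⟩ : ∃ i, c g y = i := ⟨_, rfl⟩
  rw [hj] at hSy' hSy hy1
  rw [hi] at hSy hy1
  rw [hSy, insert_subset_iff, singleton_subset_iff, mem_range, mem_range] at hry
  have hc1 := hc.recolor hym.right hj (hN y) (hN y')
  have hc2 := hc1.addLeaf hsL.adj hsL.eq (i := N)
    (by simp only [Function.update_apply]; grind)
  have hc3 := hc2.addLeaf hs'.adj hs'.eq (i := j) (by simp only [Function.update_apply]; grind)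
  generalize hS' : Function.update _ s' _ = S'' at hc3
  have hx := fun u => congrFun hS'.symm u
  simp only [Function.update_apply] at hx
  refine good_of_inserts hc3 hr hd [(y', ∅), (y, {i}), (w, S w), (s, {j})] [(s', y')]
    ?_ ?_ ?_ ?_ ?_
  · simp only [List.forall_mem_cons]
    refine ⟨⟨?_, ?_⟩, ⟨?_, ?_⟩, ⟨?_, ?_⟩, ⟨?_, ?_⟩, by simp⟩ <;> grind
  · simp only [List.forall_mem_cons]
    exact ⟨⟨by grind, by simp⟩, by simp⟩
  · simp only [List.forall_mem_cons]
    grind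
  · have := ne_empty_singleton hwc
    simp [*]
  · simp

theorem Good.op_siblingPath {v s s' r z : V} (hs : Mid G v s s') (hs' : LeafAt G s' s)
    (hv : 3 ≤ dg G v) (hr : Mid G v r z) (hrs : r ≠ s) {N : ℕ}
    (h : Good ((G.isolate s').isolate s) N) : Good G (N + 1) := by
  obtain ⟨c, S, hc, hR, hd⟩ := h
  have hN : ∀ u, N ∉ S u := fun u hu => by simpa using hR u hu
  have d1 := hs.dg
  have d2 := hs'.dg
  have d3 := hr.dg
  have a1 : v ≠ s := ne_of_dg (G := G) (by omega)
  have a2 : v ≠ s' := ne_of_dg (G := G) (by omega)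
  have a3 : v ≠ r := ne_of_dg (G := G) (by omega)
  have a5 : s ≠ s' := ne_of_dg (G := G) (by omega)
  have a8 : r ≠ s' := ne_of_dg (G := G) (by omega)
  have g1 : z ≠ s := by
    rintro rfl
    rcases hs.eq r hr.right.symm with rfl | rfl <;> tauto
  have g2 : z ≠ s' := by rintro rfl; exact hrs (hs'.eq r hr.right.symm)
  have hsL : LeafAt (G.isolate s') s v :=
    ⟨⟨hs.left.symm, a2, a5⟩, fun z hz => (hs.eq z hz.1).resolve_right hz.2.2⟩
  have hrm : Mid ((G.isolate s').isolate s) v r z :=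
    ⟨⟨⟨hr.left, a8, a2⟩, hrs, a1⟩, ⟨⟨hr.right, a8, g2⟩, hrs, g1⟩, hr.ne,
      fun z hz => hr.eq z hz.1.1⟩
  have hvc : 2 ≤ (S v).card := by
    rw [hc.card_eq, dg_isolate hsL, dg_isolate hs', if_neg a1, if_pos rfl, if_neg a2, if_neg a1]
    omega
  have hb := hc.color_mem hrm.left.symm
  have hr1 := hc.mid_ne hrm
  have hSr := hc.mid_eq hrm
  have hRv := hR v
  have hRr := hR r
  obtain ⟨b, hb'⟩ : ∃ b, c v r = b := ⟨_, rfl⟩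
  obtain ⟨e, he⟩ : ∃ e, c r z = e := ⟨_, rfl⟩
  rw [hb'] at hSr hr1 hb
  rw [he] at hSr hr1
  rw [hSr, insert_subset_iff, singleton_subset_iff, mem_range, mem_range] at hRr
  have hc1 := hc.recolor hrm.left.symm hb' (hN v) (hN r)
  have hc2 := hc1.addLeaf hsL.adj hsL.eq (i := b)
    (by simp only [Function.update_apply]; grind)
  have hc3 := hc2.addLeaf hs'.adj hs'.eq (i := N) (by simp only [Function.update_apply]; grind)
  generalize hS' : Function.update _ s' _ = S'' at hc3
  have hx := fun u => congrFun hS'.symm u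
  simp only [Function.update_apply] at hx
  refine good_of_inserts hc3 hR hd [(s', ∅), (s, {b}), (v, S v), (r, {e})] [] ?_ ?_ ?_ ?_ ?_
  · simp only [List.forall_mem_cons]
    refine ⟨⟨?_, ?_⟩, ⟨?_, ?_⟩, ⟨?_, ?_⟩, ⟨?_, ?_⟩, by simp⟩ <;> grind
  · simp
  · simp only [List.forall_mem_cons]
    grind
  · have := ne_empty_singleton hvc
    simp [*]
  · simp

theorem Good.op_leafSubdivide {x v a s b : V} (hx : LeafAt G x v) (hs : Mid G a s b)
    (hab : ¬ G.Adj a b) (hv : 3 ≤ dg G v) (ha : 2 ≤ dg G a) (hav : dg G a ≠ dg G v) {N : ℕ}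
    (h : Good ((G.isolate x).suppress a s b) N) : Good G (N + 1) := by
  obtain ⟨c, S, hc, hR, hd⟩ := h
  have hN : ∀ u, N ∉ S u := fun u hu => by simpa using hR u hu
  have d1 := hs.dg
  have d2 := hx.dg
  have a1 : v ≠ s := ne_of_dg (G := G) (by omega)
  have a2 : v ≠ x := ne_of_dg (G := G) (by omega)
  have a3 : v ≠ a := ne_of_dg (G := G) hav.symm
  have a4 : a ≠ s := hs.left.ne'
  have a5 : x ≠ s := ne_of_dg (G := G) (by omega)
  have a6 : x ≠ a := ne_of_dg (G := G) (by omega)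
  have a7 : b ≠ x := by rintro rfl; exact a1 (hx.eq s hs.right.symm).symm
  have a8 := hs.right.ne
  have hm : Mid (G.isolate x) a s b :=
    ⟨⟨hs.left, a5.symm, a6.symm⟩, ⟨hs.right, a5.symm, a7⟩, hs.ne, fun z hz => hs.eq z hz.1⟩
  have hab' : ¬ (G.isolate x).Adj a b := fun h => hab h.1
  have hvc : (S v).card = dg G v - 1 := by
    rw [hc.card_eq, dg_suppress hm hab', dg_isolate hx, if_neg a1, if_neg a2, if_pos rfl]
  have hac : (S a).card = dg G a := by
    rw [hc.card_eq, dg_suppress hm hab', dg_isolate hx, if_neg a4, if_neg a6.symm, if_neg a3.symm]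
  have habe : ((G.isolate x).suppress a s b).Adj a b := by
    rw [suppress_adj]; exact Or.inr ⟨Or.inl ⟨rfl, rfl⟩, hs.ne⟩
  obtain ⟨e, he⟩ : ∃ e, c a b = e := ⟨_, rfl⟩
  have hea := hc.color_mem habe
  have heb := hc.color_mem' habe
  rw [he] at hea heb
  have hRv := hR v
  have hRa := hR a
  have hAc := card_erase_of_mem hea
  have hc1 := hc.subdivide hm.left hm.right hm.eq hm.ne hab' he (hN a)
  have hc2 := hc1.addLeaf hx.adj hx.eq (i := N) (by simp only [Function.update_apply]; grind)
  generalize hS' : Function.update _ x _ = S'' at hc2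
  have hx' := fun u => congrFun hS'.symm u
  simp only [Function.update_apply] at hx'
  refine good_of_inserts hc2 hR hd [(x, ∅), (s, {e}), (v, S v), (a, (S a).erase e)] []
    ?_ ?_ ?_ ?_ ?_
  · simp only [List.forall_mem_cons]
    refine ⟨⟨?_, ?_⟩, ⟨?_, ?_⟩, ⟨?_, ?_⟩, ⟨?_, ?_⟩, by simp⟩ <;> grind
  · simp
  · simp only [List.forall_mem_cons]
    grind
  · have h1 := ne_empty_singleton (A := S v) (by omega)
    have h2 : (S a).erase e ≠ ∅ := by rintro h; simp [h] at hAc; omega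
    have h3 : (S a).erase e ≠ {e} := by rintro h; simpa [h] using notMem_erase e (S a)
    have h4 : S v ≠ (S a).erase e := fun h => by rw [h] at hvc; omega
    simp [*, h2.symm, h3.symm]
  · simp

theorem Good.op_leafPath {v x s s' p : V} (hx : LeafAt G x v) (hs : Mid G v s s')
    (hs' : LeafAt G s' s) (hp : G.Adj v p) (hv : dg G v = 3) (hps : p ≠ s) (hp2 : 2 ≤ dg G p)
    {N : ℕ} (hN3 : 3 ≤ N)
    (h : Good (((G.isolate x).isolate s').isolate s) N) : Good G (N + 1) := by
  obtain ⟨c, S, hc, hR, hd⟩ := h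
  have hN : ∀ u, N ∉ S u := fun u hu => by simpa using hR u hu
  have d1 := hs.dg
  have d2 := hx.dg
  have d3 := hs'.dg
  have a1 : v ≠ s := ne_of_dg (G := G) (by omega)
  have a2 : v ≠ x := ne_of_dg (G := G) (by omega)
  have a3 : v ≠ s' := ne_of_dg (G := G) (by omega)
  have a4 : x ≠ s := ne_of_dg (G := G) (by omega)
  have a5 : s' ≠ s := ne_of_dg (G := G) (by omega)
  have a6 : x ≠ s' := by rintro rfl; exact a1 (hx.eq _ hs'.adj.symm).symm
  have a7 : x ≠ p := ne_of_dg (G := G) (by omega)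
  have a8 : s' ≠ p := ne_of_dg (G := G) (by omega)
  have a9 := hp.ne
  have hs'L : LeafAt (G.isolate x) s' s :=
    ⟨⟨hs'.adj, a4.symm, a6.symm⟩, fun z hz => hs'.eq z hz.1⟩
  have hsL : LeafAt ((G.isolate x).isolate s') s v :=
    ⟨⟨⟨hs.left.symm, a2, a4.symm⟩, a3, a5.symm⟩,
      fun z hz => (hs.eq z hz.1.1).resolve_right hz.2.2⟩
  have hpv : (((G.isolate x).isolate s').isolate s).Adj p v :=
    ⟨⟨⟨hp.symm, a7.symm, a2⟩, a8.symm, a3⟩, hps, a1⟩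
  have hvL : LeafAt (((G.isolate x).isolate s').isolate s) v p := by
    refine ⟨hpv, fun z hz => ?_⟩
    rcases eq_of_dg_eq_three hx.adj hs.left.symm hp a4 a7 hps.symm hv z hz.1.1.1 with h | h | h
    · exact absurd h hz.1.1.2.2
    · exact absurd h hz.2.2
    · exact h
  have hpc : 2 ≤ (S p).card := by
    rw [hc.card_eq, dg_isolate hsL, if_neg hps, if_neg a9.symm, dg_isolate hs'L, if_neg a8.symm,
      if_neg hps, dg_isolate hx, if_neg a7.symm, if_neg a9.symm]
    omega
  have hSv := hc.leaf_eq hvL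
  have hjp := hc.color_mem hpv
  obtain ⟨j, hj⟩ : ∃ j, c p v = j := ⟨_, rfl⟩
  rw [hj] at hSv hjp
  have hRv := hR v
  have hRp := hR p
  rw [hSv, singleton_subset_iff, mem_range] at hRv
  have hAc := card_erase_of_mem hjp
  obtain ⟨f, hf, hfj, hAf⟩ := exists_lt_ne_singleton hN3 j ((S p).erase j)
  have hc1 := hc.recolor hpv hj (hN p) (hN v)
  have hc2 := hc1.addLeaf hsL.adj hsL.eq (i := f) (by simp only [Function.update_apply]; grind)
  have hc3 := hc2.addLeaf hs'L.adj hs'L.eq (i := N) (by simp only [Function.update_apply]; grind)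
  have hc4 := hc3.addLeaf hx.adj hx.eq (i := j) (by simp only [Function.update_apply]; grind)
  generalize hS' : Function.update _ x _ = S'' at hc4
  have hx' := fun u => congrFun hS'.symm u
  simp only [Function.update_apply] at hx'
  refine good_of_inserts hc4 hR hd [(s', ∅), (s, {f}), (v, {j, f}), (p, (S p).erase j)] [(x, v)]
    ?_ ?_ ?_ ?_ ?_
  · simp only [List.forall_mem_cons]
    refine ⟨⟨?_, ?_⟩, ⟨?_, ?_⟩, ⟨?_, ?_⟩, ⟨?_, ?_⟩, by simp⟩ <;> grind
  · simp only [List.forall_mem_cons]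
    exact ⟨⟨by grind, by simp⟩, by simp⟩
  · simp only [List.forall_mem_cons]
    grind
  · have h1 := ne_empty_singleton (A := {j, f}) (by rw [card_pair hfj.symm])
    have h2 : (S p).erase j ≠ ∅ := by rintro h; simp [h] at hAc; omega
    have h4 : {j, f} ≠ (S p).erase j := ne_of_mem_of_not_mem' (a := j) (by simp) (by simp)
    simp [*, h2.symm, hAf.symm]
  · simp

theorem Good.op_pathSubdivide {v s s' s₁ s₂ : V} (hT : TreeLike G) (hs : Mid G v s s')
    (hs' : LeafAt G s' s) (hm : Mid G v s₁ s₂) (hne : s₁ ≠ s) (hv : dg G v = 3) {N : ℕ}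
    (hN3 : 3 ≤ N) (h : Good (((G.isolate s').isolate s).suppress v s₁ s₂) N) :
    Good G (N + 1) := by
  obtain ⟨c, S, hc, hR, hd⟩ := h
  have hN : ∀ u, N ∉ S u := fun u hu => by simpa using hR u hu
  have d1 := hs.dg
  have d2 := hm.dg
  have d3 := hs'.dg
  have a1 : v ≠ s := ne_of_dg (G := G) (by omega)
  have a2 : v ≠ s' := ne_of_dg (G := G) (by omega)
  have a3 : v ≠ s₁ := ne_of_dg (G := G) (by omega)
  have a4 : s' ≠ s := ne_of_dg (G := G) (by omega)
  have a5 : s' ≠ s₁ := ne_of_dg (G := G) (by omega)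
  have a6 : s₂ ≠ s' := by rintro rfl; exact hne (hs'.eq _ hm.right.symm)
  have a7 : s₂ ≠ s := by
    rintro rfl
    rcases hs.eq _ hm.right.symm with h | h
    · exact a3 h.symm
    · exact a5 h.symm
  have a8 := hm.right.ne
  have hs1 : 2 ≤ dg G s := by omega
  have hsL : LeafAt (G.isolate s') s v :=
    ⟨⟨hs.left.symm, a2, a4.symm⟩, fun z hz => (hs.eq z hz.1).resolve_right hz.2.2⟩
  have hdv : dg (G.isolate s') v = 3 := by rw [dg_isolate hs', if_neg a2, if_neg a1, hv]
  have hm' : Mid ((G.isolate s').isolate s) v s₁ s₂ :=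
    ⟨⟨⟨hm.left, a5.symm, a2⟩, hne, a1⟩, ⟨⟨hm.right, a5.symm, a6⟩, hne, a7⟩, hm.ne,
      fun z hz => hm.eq z hz.1.1⟩
  have hab := ((hT.isolate hs' hs1).isolate hsL (by omega)).not_adj hm'
  have hvc : (S v).card = 2 := by
    rw [hc.card_eq, dg_suppress hm' hab, if_neg a3, dg_isolate hsL, if_neg a1, if_pos rfl, hdv]
  have hadj : (((G.isolate s').isolate s).suppress v s₁ s₂).Adj v s₂ := by
    rw [suppress_adj]; exact Or.inr ⟨Or.inl ⟨rfl, rfl⟩, hm.ne⟩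
  obtain ⟨b, hb⟩ : ∃ b, c v s₂ = b := ⟨_, rfl⟩
  have hbv := hc.color_mem hadj
  have hbs := hc.color_mem' hadj
  rw [hb] at hbv hbs
  have hAc := card_erase_of_mem hbv
  rw [hvc] at hAc
  obtain ⟨a, ha⟩ := card_eq_one.1 hAc
  have hav : a ∈ S v := mem_of_mem_erase (ha ▸ mem_singleton_self a)
  have hba : a ≠ b := ne_of_mem_erase (ha ▸ mem_singleton_self a : a ∈ (S v).erase b)
  obtain ⟨g, hg, hga, hgb⟩ := exists_lt_ne_ne hN3 a b
  have hRv := hR v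
  have hc1 := hc.subdivide hm'.left hm'.right hm'.eq hm'.ne hab hb (hN v)
  rw [ha] at hc1
  have hc2 := hc1.addLeaf hsL.adj hsL.eq (i := g) (by simp only [Function.update_apply]; grind)
  have hc3 := hc2.addLeaf hs'.adj hs'.eq (i := N) (by simp only [Function.update_apply]; grind)
  generalize hS' : Function.update _ s' _ = S'' at hc3
  have hx' := fun u => congrFun hS'.symm u
  simp only [Function.update_apply] at hx'
  refine good_of_inserts hc3 hR hd [(s', ∅), (s, {g}), (v, {g, a}), (s₁, {b})] []
    ?_ ?_ ?_ ?_ ?_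
  · simp only [List.forall_mem_cons]
    refine ⟨⟨?_, ?_⟩, ⟨?_, ?_⟩, ⟨?_, ?_⟩, ⟨?_, ?_⟩, by simp⟩ <;> grind
  · simp
  · simp only [List.forall_mem_cons]
    grind
  · have h1 := ne_empty_singleton (A := {g, a}) (by rw [card_pair hga])
    simp [*]
  · simp

theorem Good.op_leafSubdivideTwice {v x s₁ s₂ s₃ : V} (hT : TreeLike G) (hx : LeafAt G x v)
    (hm₁ : Mid G v s₁ s₂) (hm₂ : Mid G s₁ s₂ s₃) (hv : dg G v = 3) {N : ℕ} (hN3 : 3 ≤ N)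
    (h : Good (((G.isolate x).suppress v s₁ s₂).suppress v s₂ s₃) N) : Good G (N + 1) := by
  obtain ⟨c, S, hc, hR, hd⟩ := h
  have hN : ∀ u, N ∉ S u := fun u hu => by simpa using hR u hu
  have d1 := hx.dg
  have d2 := hm₁.dg
  have d3 := hm₂.dg
  have a1 : v ≠ s₁ := ne_of_dg (G := G) (by omega)
  have a2 : v ≠ s₂ := ne_of_dg (G := G) (by omega)
  have a3 : v ≠ x := ne_of_dg (G := G) (by omega)
  have a4 : x ≠ s₁ := ne_of_dg (G := G) (by omega)
  have a5 : x ≠ s₂ := ne_of_dg (G := G) (by omega)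
  have a6 := hm₁.right.ne
  have a7 : v ≠ s₃ := by rintro rfl; exact hT.not_adj hm₁ hm₂.right.symm
  have a8 : s₃ ≠ x := by rintro rfl; exact a2 (hx.eq _ hm₂.right.symm).symm
  have a9 := hm₂.ne
  have b1 := hm₂.right.ne
  have hm₁' : Mid (G.isolate x) v s₁ s₂ :=
    ⟨⟨hm₁.left, a4.symm, a3⟩, ⟨hm₁.right, a4.symm, a5.symm⟩, hm₁.ne, fun z hz => hm₁.eq z hz.1⟩
  have hT1 := hT.isolate hx (by omega)
  have hab₁ := hT1.not_adj hm₁'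
  have hm₂' : Mid ((G.isolate x).suppress v s₁ s₂) v s₂ s₃ := by
    refine ⟨?_, ?_, a7, fun z hz => ?_⟩
    · rw [suppress_adj]; exact Or.inr ⟨Or.inr ⟨rfl, rfl⟩, a2.symm⟩
    · rw [suppress_adj]
      exact Or.inl ⟨⟨hm₂.right, a5.symm, a8⟩, a6.symm, a9.symm⟩
    · rw [suppress_adj, isolate_adj] at hz
      have := hm₂.eq z
      grind
  have hab₂ := (hT1.suppress hm₁').not_adj hm₂'
  have hvc : (S v).card = 2 := by
    rw [hc.card_eq, dg_suppress hm₂' hab₂, if_neg a2, dg_suppress hm₁' hab₁, if_neg a1,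
      dg_isolate hx, if_neg a3, if_pos rfl, hv]
  have hadj : (((G.isolate x).suppress v s₁ s₂).suppress v s₂ s₃).Adj v s₃ := by
    rw [suppress_adj]; exact Or.inr ⟨Or.inl ⟨rfl, rfl⟩, a7⟩
  obtain ⟨b, hb⟩ : ∃ b, c v s₃ = b := ⟨_, rfl⟩
  have hbv := hc.color_mem hadj
  have hbs := hc.color_mem' hadj
  rw [hb] at hbv hbs
  have hAc := card_erase_of_mem hbv
  rw [hvc] at hAc
  obtain ⟨a, ha⟩ := card_eq_one.1 hAc
  have hav : a ∈ S v := mem_of_mem_erase (ha ▸ mem_singleton_self a)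
  have hba : a ≠ b := ne_of_mem_erase (ha ▸ mem_singleton_self a : a ∈ (S v).erase b)
  obtain ⟨g, hg, hga, hgb⟩ := exists_lt_ne_ne hN3 a b
  have hRv := hR v
  have hc1 := hc.subdivide hm₂'.left hm₂'.right hm₂'.eq hm₂'.ne hab₂ hb (hN v)
  rw [ha] at hc1
  have hc2 := hc1.subdivide hm₁'.left hm₁'.right hm₁'.eq hm₁'.ne hab₁ (i := g) (e := N)
    (by unfold recolorEdge; grind) (by simp only [Function.update_apply]; grind)
  have hc3 := hc2.addLeaf hx.adj hx.eq (i := N) (by simp only [Function.update_apply]; grind)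
  generalize hS' : Function.update _ x _ = S'' at hc3
  have hx' := fun u => congrFun hS'.symm u
  simp only [Function.update_apply] at hx'
  refine good_of_inserts hc3 hR hd [(x, ∅), (s₁, {g}), (v, {g, a}), (s₂, {b})] []
    ?_ ?_ ?_ ?_ ?_
  · simp only [List.forall_mem_cons]
    refine ⟨⟨?_, ?_⟩, ⟨?_, ?_⟩, ⟨?_, ?_⟩, ⟨?_, ?_⟩, by simp⟩ <;> grind
  · simp
  · simp only [List.forall_mem_cons]
    grind
  · have h1 := ne_empty_singleton (A := {g, a}) (by rw [card_pair hga])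
    simp [*]
  · simp

theorem Good.op_twoLeavesSubdivide {x₁ x₂ v p w s s' : V} (h₁ : LeafAt G x₁ v)
    (h₂ : LeafAt G x₂ v) (h12 : x₁ ≠ x₂) (hp : G.Adj v p) (hv : dg G v = 3) (hp3 : 3 ≤ dg G p)
    (hs : Mid G w s s') (hs' : LeafAt G s' s) {N : ℕ}
    (h : Good (((G.isolate x₁).isolate x₂).suppress s' s w) N) : Good G (N + 1) := by
  obtain ⟨c, S, hc, hR, hd⟩ := h
  have hN : ∀ u, N ∉ S u := fun u hu => by simpa using hR u hu
  have d1 := h₁.dg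
  have d2 := h₂.dg
  have d3 := hs.dg
  have d4 := hs'.dg
  have a1 : v ≠ x₁ := ne_of_dg (G := G) (by omega)
  have a2 : v ≠ x₂ := ne_of_dg (G := G) (by omega)
  have a3 : v ≠ s := ne_of_dg (G := G) (by omega)
  have a4 : v ≠ s' := ne_of_dg (G := G) (by omega)
  have a5 : p ≠ x₁ := ne_of_dg (G := G) (by omega)
  have a6 : p ≠ x₂ := ne_of_dg (G := G) (by omega)
  have a7 : p ≠ s := ne_of_dg (G := G) (by omega)
  have a8 : p ≠ s' := ne_of_dg (G := G) (by omega)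
  have a9 := hp.ne
  have b1 : s ≠ x₁ := ne_of_dg (G := G) (by omega)
  have b2 : s ≠ x₂ := ne_of_dg (G := G) (by omega)
  have b3 : s ≠ s' := ne_of_dg (G := G) (by omega)
  have b4 : s' ≠ x₁ := by rintro rfl; exact a3 (h₁.eq _ hs'.adj.symm).symm
  have b5 : s' ≠ x₂ := by rintro rfl; exact a3 (h₂.eq _ hs'.adj.symm).symm
  have hv' := eq_of_dg_eq_three h₁.adj h₂.adj hp h12 a5.symm a6.symm hv
  have b6 : v ≠ w := by
    rintro rfl
    rcases hv' s hs.left.symm with h | h | h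
    exacts [b1 h, b2 h, a7 h.symm]
  have b7 : w ≠ x₁ := by rintro rfl; exact a3 (h₁.eq _ hs.left.symm).symm
  have b8 : w ≠ x₂ := by rintro rfl; exact a3 (h₂.eq _ hs.left.symm).symm
  have b9 := hs.left.ne
  have h₂' : LeafAt (G.isolate x₁) x₂ v :=
    ⟨⟨h₂.adj, a1, h12.symm⟩, fun z hz => h₂.eq z hz.1⟩
  have hm : Mid ((G.isolate x₁).isolate x₂) s' s w :=
    ⟨⟨⟨hs.right, b1, b4⟩, b2, b5⟩, ⟨⟨hs.left, b1, b7⟩, b2, b8⟩, hs.ne.symm,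
      fun z hz => (hs.eq z hz.1.1).symm⟩
  have hab : ¬ ((G.isolate x₁).isolate x₂).Adj s' w := fun h => b9.symm (hs'.eq _ h.1.1)
  have hpv : (((G.isolate x₁).isolate x₂).suppress s' s w).Adj p v := by
    rw [suppress_adj]; exact Or.inl ⟨⟨⟨hp.symm, a5, a1⟩, a6, a2⟩, a7, a3⟩
  have hvL : LeafAt (((G.isolate x₁).isolate x₂).suppress s' s w) v p := by
    refine ⟨hpv, fun z hz => ?_⟩
    rw [suppress_adj, isolate_adj, isolate_adj] at hz
    have := hv' z
    grind
  have hsw : (((G.isolate x₁).isolate x₂).suppress s' s w).Adj w s' := by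
    rw [suppress_adj]; exact Or.inr ⟨Or.inr ⟨rfl, rfl⟩, hs.ne⟩
  have hs'L : LeafAt (((G.isolate x₁).isolate x₂).suppress s' s w) s' w := by
    refine ⟨hsw, fun z hz => ?_⟩
    rw [suppress_adj, isolate_adj, isolate_adj] at hz
    have := hs'.eq z
    grind
  have hpc : 3 ≤ (S p).card := by
    rwa [hc.card_eq, dg_suppress hm hab, if_neg a7, dg_isolate h₂', if_neg a6, if_neg a9.symm,
      dg_isolate h₁, if_neg a5, if_neg a9.symm]
  have hSv := hc.leaf_eq hvL
  have hSs := hc.leaf_eq hs'L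
  have hip := hc.color_mem hpv
  have hjw := hc.color_mem hsw
  obtain ⟨i, hi⟩ : ∃ i, c p v = i := ⟨_, rfl⟩
  obtain ⟨j, hj⟩ : ∃ j, c w s' = j := ⟨_, rfl⟩
  rw [hi] at hSv hip
  rw [hj] at hSs hjw
  have hij : i ≠ j := by
    rintro rfl
    exact a4 (hd _ _ (hSv.trans hSs.symm) (by simp [hSv]))
  have hRi := hR v
  have hRj := hR s'
  have hRp := hR p
  rw [hSv, singleton_subset_iff, mem_range] at hRi
  rw [hSs, singleton_subset_iff, mem_range] at hRj
  have hAc := card_erase_of_mem hip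
  have hc1 := hc.recolor hpv hi (hN p) (hN v)
  have hc2 := hc1.subdivide hm.left hm.right hm.eq hm.ne hab (i := N) (e := j)
    (by have := hc.comm w s'; unfold recolorEdge; grind)
    (by simp only [Function.update_apply]; grind)
  have hc3 := hc2.addLeaf h₂'.adj h₂'.eq (i := j) (by simp only [Function.update_apply]; grind)
  have hc4 := hc3.addLeaf h₁.adj h₁.eq (i := i) (by simp only [Function.update_apply]; grind)
  generalize hS' : Function.update _ x₁ _ = S'' at hc4
  have hx' := fun u => congrFun hS'.symm u
  simp only [Function.update_apply] at hx'
  refine good_of_inserts hc4 hR hd [(s', ∅), (s, {j}), (v, {i, j}), (p, (S p).erase i)]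
    [(x₁, v), (x₂, s')] ?_ ?_ ?_ ?_ ?_
  · simp only [List.forall_mem_cons]
    refine ⟨⟨?_, ?_⟩, ⟨?_, ?_⟩, ⟨?_, ?_⟩, ⟨?_, ?_⟩, by simp⟩ <;> grind
  · simp only [List.forall_mem_cons]
    exact ⟨⟨by grind, by simp⟩, ⟨by grind, by simp⟩, by simp⟩
  · simp only [List.forall_mem_cons]
    grind
  · have h1 := ne_empty_singleton (A := {i, j}) (by rw [card_pair hij])
    have h2 := ne_empty_singleton (A := (S p).erase i) (by omega)
    have h4 : {i, j} ≠ (S p).erase i := ne_of_mem_of_not_mem' (a := i) (by simp) (by simp)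
    simp [*]
  · simp [a4]

theorem Good.op_twoLeavesSubdivideInner {x₁ x₂ v p a s b y y₁ y₂ : V} (hT : TreeLike G)
    (h₁ : LeafAt G x₁ v) (h₂ : LeafAt G x₂ v) (h12 : x₁ ≠ x₂) (hp : G.Adj v p)
    (hv : dg G v = 3) (hp3 : 3 ≤ dg G p) (hs : Mid G a s b) (ha : dg G a = 2)
    (hy₁ : LeafAt G y₁ y) (hy₂ : LeafAt G y₂ y) (hy12 : y₁ ≠ y₂) (hy3 : 3 ≤ dg G y)
    (hyp : y ≠ p) (hyv : y ≠ v) {N : ℕ}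
    (h : Good (((G.isolate x₁).isolate x₂).suppress a s b) N) : Good G (N + 1) := by
  obtain ⟨c, S, hc, hR, hd⟩ := h
  have hN : ∀ u, N ∉ S u := fun u hu => by simpa using hR u hu
  have d1 := h₁.dg
  have d2 := h₂.dg
  have d3 := hs.dg
  have a1 : v ≠ x₁ := ne_of_dg (G := G) (by omega)
  have a2 : v ≠ x₂ := ne_of_dg (G := G) (by omega)
  have a3 : v ≠ s := ne_of_dg (G := G) (by omega)
  have a4 : v ≠ a := ne_of_dg (G := G) (by omega)
  have a5 : p ≠ x₁ := ne_of_dg (G := G) (by omega)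
  have a6 : p ≠ x₂ := ne_of_dg (G := G) (by omega)
  have a7 : p ≠ s := ne_of_dg (G := G) (by omega)
  have a8 : p ≠ a := ne_of_dg (G := G) (by omega)
  have a9 := hp.ne
  have b1 : s ≠ x₁ := ne_of_dg (G := G) (by omega)
  have b2 : s ≠ x₂ := ne_of_dg (G := G) (by omega)
  have b3 := hs.left.ne
  have b4 : a ≠ x₁ := ne_of_dg (G := G) (by omega)
  have b5 : a ≠ x₂ := ne_of_dg (G := G) (by omega)
  have hv' := eq_of_dg_eq_three h₁.adj h₂.adj hp h12 a5.symm a6.symm hv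
  have b6 : v ≠ b := by
    rintro rfl
    rcases hv' s hs.right.symm with h | h | h
    exacts [b1 h, b2 h, a7 h.symm]
  have b7 : b ≠ x₁ := by rintro rfl; exact a3 (h₁.eq _ hs.right.symm).symm
  have b8 : b ≠ x₂ := by rintro rfl; exact a3 (h₂.eq _ hs.right.symm).symm
  have b9 := hs.right.ne
  have h₂' : LeafAt (G.isolate x₁) x₂ v :=
    ⟨⟨h₂.adj, a1, h12.symm⟩, fun z hz => h₂.eq z hz.1⟩
  have hm : Mid ((G.isolate x₁).isolate x₂) a s b :=
    ⟨⟨⟨hs.left, b1, b4⟩, b2, b5⟩, ⟨⟨hs.right, b1, b7⟩, b2, b8⟩, hs.ne,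
      fun z hz => hs.eq z hz.1.1⟩
  have hab : ¬ ((G.isolate x₁).isolate x₂).Adj a b := fun h => hT.not_adj hs h.1.1
  have hpv : (((G.isolate x₁).isolate x₂).suppress a s b).Adj p v := by
    rw [suppress_adj]; exact Or.inl ⟨⟨⟨hp.symm, a5, a1⟩, a6, a2⟩, a7, a3⟩
  have hvL : LeafAt (((G.isolate x₁).isolate x₂).suppress a s b) v p := by
    refine ⟨hpv, fun z hz => ?_⟩
    rw [suppress_adj, isolate_adj, isolate_adj] at hz
    have := hv' z
    grind
  have e1 : y ≠ x₁ := ne_of_dg (G := G) (by omega)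
  have e2 : y ≠ x₂ := ne_of_dg (G := G) (by omega)
  have e3 : y ≠ s := ne_of_dg (G := G) (by omega)
  have e4 : y ≠ a := ne_of_dg (G := G) (by omega)
  have hyL : ∀ z, LeafAt G z y → LeafAt (((G.isolate x₁).isolate x₂).suppress a s b) z y := by
    intro z hz
    have d5 := hz.dg
    have f1 : z ≠ x₁ := by rintro rfl; exact hyv (h₁.eq _ hz.adj.symm)
    have f2 : z ≠ x₂ := by rintro rfl; exact hyv (h₂.eq _ hz.adj.symm)
    have f3 : z ≠ s := ne_of_dg (G := G) (by omega)
    have f4 : z ≠ a := ne_of_dg (G := G) (by omega)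
    have f5 : z ≠ b := by rintro rfl; exact e3 (hz.eq _ hs.right.symm).symm
    refine ⟨?_, fun z' hz' => ?_⟩
    · rw [suppress_adj]; exact Or.inl ⟨⟨⟨hz.adj, e1, f1⟩, e2, f2⟩, e3, f3⟩
    · rw [suppress_adj, isolate_adj, isolate_adj] at hz'
      have := hz.eq z'
      grind
  have hdeg : ∀ u, u ≠ s → u ≠ x₁ → u ≠ x₂ → u ≠ v → (S u).card = dg G u := by
    intro u u1 u2 u3 u4
    rw [hc.card_eq, dg_suppress hm hab, if_neg u1, dg_isolate h₂', if_neg u3, if_neg u4,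
      dg_isolate h₁, if_neg u2, if_neg u4]
  have hpc := hdeg p a7 a5 a6 a9.symm
  have hyc := hdeg y e3 e1 e2 hyv
  have hac := hdeg a b3.symm b4 b5 a4.symm
  obtain ⟨z, hzG, hz⟩ : ∃ z, LeafAt G z y ∧ (S y).erase (c y z) ≠ (S p).erase (c p v) := by
    by_contra! hcon
    have h3 := (hcon y₁ hy₁).trans (hcon y₂ hy₂).symm
    have h4 := (hyL y₁ hy₁).adj
    have h5 : c y y₁ ∉ (S y).erase (c y y₂) := h3 ▸ notMem_erase _ _
    refine h5 (mem_erase.2 ⟨fun h => hy12 (hc.inj _ _ _ h4 (hyL y₂ hy₂).adj h), hc.color_mem h4⟩)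
  have d5 := hzG.dg
  have hzL := hyL z hzG
  have f1 : z ≠ x₁ := by rintro rfl; exact hyv (h₁.eq _ hzG.adj.symm)
  have f2 : z ≠ x₂ := by rintro rfl; exact hyv (h₂.eq _ hzG.adj.symm)
  have f3 : z ≠ s := ne_of_dg (G := G) (by omega)
  have f4 : z ≠ a := ne_of_dg (G := G) (by omega)
  have f5 : z ≠ v := ne_of_dg (G := G) (by omega)
  have f6 : z ≠ p := ne_of_dg (G := G) (by omega)
  have f7 := hzL.adj.ne
  have hSv := hc.leaf_eq hvL
  have hSz := hc.leaf_eq hzL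
  have hip := hc.color_mem hpv
  have hjy := hc.color_mem hzL.adj
  have habe : (((G.isolate x₁).isolate x₂).suppress a s b).Adj a b := by
    rw [suppress_adj]; exact Or.inr ⟨Or.inl ⟨rfl, rfl⟩, hs.ne⟩
  have hea := hc.color_mem habe
  have heb := hc.color_mem' habe
  obtain ⟨i, hi⟩ : ∃ i, c p v = i := ⟨_, rfl⟩
  obtain ⟨j, hj⟩ : ∃ j, c y z = j := ⟨_, rfl⟩
  obtain ⟨e, he⟩ : ∃ e, c a b = e := ⟨_, rfl⟩
  rw [hi] at hSv hip hz
  rw [hj] at hSz hjy hz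
  rw [he] at hea heb
  have hAa := card_erase_of_mem hea
  rw [hac, ha] at hAa
  obtain ⟨f, hf⟩ := card_eq_one.1 hAa
  have hfa : f ∈ S a := mem_of_mem_erase (hf ▸ mem_singleton_self f)
  have hfe : f ≠ e := ne_of_mem_erase (hf ▸ mem_singleton_self f : f ∈ (S a).erase e)
  have hij : i ≠ j := by
    rintro rfl
    exact f5.symm (hd _ _ (hSv.trans hSz.symm) (by simp [hSv]))
  have hRi := hR v
  have hRj := hR z
  have hRp := hR p
  have hRy := hR y
  have hRa := hR a
  rw [hSv, singleton_subset_iff, mem_range] at hRi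
  rw [hSz, singleton_subset_iff, mem_range] at hRj
  have hAc := card_erase_of_mem hip
  have hBc := card_erase_of_mem hjy
  have hc1 := hc.recolor hpv hi (hN p) (hN v)
  have hc1' := hc1.recolor hzL.adj (i := N) (e := j) (by unfold recolorEdge; grind)
    (by simp only [Function.update_apply]; grind) (by simp only [Function.update_apply]; grind)
  have hc2 := hc1'.subdivide hm.left hm.right hm.eq hm.ne hab (i := N) (e := e)
    (by unfold recolorEdge; grind)
    (by simp only [Function.update_apply]; grind)
  have hc3 := hc2.addLeaf h₂'.adj h₂'.eq (i := j) (by simp only [Function.update_apply]; grind)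
  have hc4 := hc3.addLeaf h₁.adj h₁.eq (i := i) (by simp only [Function.update_apply]; grind)
  generalize hS' : Function.update _ x₁ _ = S'' at hc4
  have hx' := fun u => congrFun hS'.symm u
  simp only [Function.update_apply] at hx'
  refine good_of_inserts hc4 hR hd [(z, ∅), (s, {e}), (a, {f}), (v, {i, j}), (p, (S p).erase i),
    (y, (S y).erase j)] [(x₁, v), (x₂, z)] ?_ ?_ ?_ ?_ ?_
  · simp only [List.forall_mem_cons]
    refine ⟨⟨?_, ?_⟩, ⟨?_, ?_⟩, ⟨?_, ?_⟩, ⟨?_, ?_⟩, ⟨?_, ?_⟩, ⟨?_, ?_⟩, by simp⟩ <;> grind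
  · simp only [List.forall_mem_cons]
    exact ⟨⟨by grind, by simp⟩, ⟨by grind, by simp⟩, by simp⟩
  · simp only [List.forall_mem_cons]
    grind
  · have h1 := ne_empty_singleton (A := {i, j}) (by rw [card_pair hij])
    have h2 := ne_empty_singleton (A := (S p).erase i) (by omega)
    have h3 := ne_empty_singleton (A := (S y).erase j) (by omega)
    have h4 : {i, j} ≠ (S p).erase i := ne_of_mem_of_not_mem' (a := i) (by simp) (by simp)
    have h5 : {i, j} ≠ (S y).erase j := ne_of_mem_of_not_mem' (a := j) (by simp) (by simp)
    have h6 := hz.symm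
    simp [h1, h2, h3, h4, h5, h6, hfe.symm]
  · simp [f5.symm]

theorem exists_forall_not_of_card_lt {C : Finset ℕ} {K : Finset V} (P : ℕ → V → Prop)
    (hlt : K.card < C.card) (hK : ∀ g ∈ C, ∀ u, P g u → u ∈ K)
    (hinj : ∀ g ∈ C, ∀ g' ∈ C, ∀ u, P g u → P g' u → g = g') : ∃ g ∈ C, ∀ u, ¬ P g u := by
  by_contra! h
  obtain ⟨g₀, hg₀⟩ := card_pos.1 (by omega : 0 < C.card)
  obtain ⟨u₀, -⟩ := h g₀ hg₀
  have : Nonempty V := ⟨u₀⟩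
  choose! f hf using h
  exact absurd (card_le_card_of_injOn f (fun g hg => hK g hg _ (hf g hg))
    fun g hg g' hg' h => hinj g hg g' hg' _ (hf g hg) (h ▸ hf g' hg')) (by omega)

theorem mem_pair_of_eq_pair {A : Finset ℕ} {i j : ℕ} (h : A = {i, j}) :
    i ∈ A ∧ j ∈ A ∧ ∀ k ∈ A, k = i ∨ k = j := by
  subst h; simp

theorem Good.op_siblingThreePath {v r₁ r₂ r' s u : V} (hr₁ : Mid G v r₁ r₂)
    (hr₂ : Mid G r₁ r₂ r') (hr' : LeafAt G r' r₂) (hs : Mid G v s u) (hne : s ≠ r₁)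
    (hv : 3 ≤ dg G v) {N : ℕ}
    (hcase : dg G v = 3 ∨
      dg G u = 2 ∧ numDg (((G.isolate r').isolate r₂).isolate r₁) 2 + 1 ≤ N)
    (h : Good (((G.isolate r').isolate r₂).isolate r₁) N) : Good G (N + 1) := by
  obtain ⟨c, S, hc, hR, hd⟩ := h
  have hN : ∀ u, N ∉ S u := fun u hu => by simpa using hR u hu
  have d1 := hr₁.dg
  have d2 := hr₂.dg
  have d3 := hr'.dg
  have d4 := hs.dg
  have a1 : v ≠ r₁ := ne_of_dg (G := G) (by omega)
  have a2 : v ≠ r₂ := ne_of_dg (G := G) (by omega)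
  have a3 : v ≠ r' := ne_of_dg (G := G) (by omega)
  have a4 : v ≠ s := ne_of_dg (G := G) (by omega)
  have a5 := hr₁.right.ne
  have a6 : r₁ ≠ r' := ne_of_dg (G := G) (by omega)
  have a7 : r₂ ≠ r' := ne_of_dg (G := G) (by omega)
  have a8 : s ≠ r' := ne_of_dg (G := G) (by omega)
  have a9 : s ≠ r₂ := by
    rintro rfl
    rcases hr₂.eq _ hs.left with h | h
    exacts [a1 h, a3 h]
  have b1 : u ≠ r₁ := by
    rintro rfl
    rcases hr₁.eq _ hs.right.symm with h | h
    exacts [a4 h.symm, a9 h]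
  have b2 : u ≠ r₂ := by
    rintro rfl
    rcases hr₂.eq _ hs.right.symm with h | h
    exacts [hne h, a8 h]
  have b3 : u ≠ r' := by rintro rfl; exact a9 (hr'.eq _ hs.right.symm)
  have b4 := hs.right.ne
  have b5 := hs.ne
  have hr₂L : LeafAt (G.isolate r') r₂ r₁ :=
    ⟨⟨hr₂.left.symm, a6, a7⟩, fun z hz => (hr₂.eq z hz.1).resolve_right hz.2.2⟩
  have hr₁L : LeafAt ((G.isolate r').isolate r₂) r₁ v :=
    ⟨⟨⟨hr₁.left.symm, a3, a6⟩, a2, a5⟩, fun z hz => (hr₁.eq z hz.1.1).resolve_right hz.2.2⟩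
  have hsm : Mid (((G.isolate r').isolate r₂).isolate r₁) v s u :=
    ⟨⟨⟨⟨hs.left, a8, a3⟩, a9, a2⟩, hne, a1⟩, ⟨⟨⟨hs.right, a8, b3⟩, a9, b2⟩, hne, b1⟩, hs.ne,
      fun z hz => hs.eq z hz.1.1.1⟩
  have hvc : (S v).card = dg G v - 1 := by
    rw [hc.card_eq, dg_isolate hr₁L, if_neg a1, if_pos rfl, dg_isolate hr₂L, if_neg a2, if_neg a1,
      dg_isolate hr', if_neg a3, if_neg a2]
  have hb := hc.color_mem hsm.left.symm
  have heu := hc.color_mem' hsm.right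
  have hsb := hc.mid_ne hsm
  have hSs := hc.mid_eq hsm
  have hSr : S r₁ = ∅ := by
    ext i
    simp [hc.mem, isolate_adj]
  obtain ⟨b, hb'⟩ : ∃ b, c v s = b := ⟨_, rfl⟩
  obtain ⟨e, he⟩ : ∃ e, c s u = e := ⟨_, rfl⟩
  rw [hb'] at hSs hsb hb
  rw [he] at hSs hsb heu
  have hRv := hR v
  have hRs := hR s
  rw [hSs, insert_subset_iff, singleton_subset_iff, mem_range, mem_range] at hRs
  obtain ⟨g, hg, hgb, hgS⟩ : ∃ g < N, g ≠ b ∧ ∀ w, S w = {b, g} → w = v := by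
    rcases hcase with h3 | ⟨h2, hn2⟩
    · have hAc := card_erase_of_mem hb
      rw [hvc, h3] at hAc
      obtain ⟨g, hg⟩ := card_eq_one.1 hAc
      have hgv : g ∈ (S v).erase b := hg ▸ mem_singleton_self g
      refine ⟨g, by simpa using hRv (mem_of_mem_erase hgv), ne_of_mem_erase hgv, fun w hw => ?_⟩
      refine hd _ _ ?_ (by simp [hw])
      rw [hw, ← insert_erase hb, hg]
    · have hu2 : (S u).card = 2 := by
        rw [hc.card_eq, dg_isolate hr₁L, if_neg b1, if_neg b5.symm, dg_isolate hr₂L, if_neg b2,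
          if_neg b1, dg_isolate hr', if_neg b3, if_neg b2, h2]
      have hs2 : (S s).card = 2 := by rw [hSs, card_pair hsb]
      rw [hc.card_eq] at hu2 hs2
      suffices h : ∃ g ∈ ((range N).erase b).erase e, ∀ w, ¬ S w = {b, g} by
        obtain ⟨g, hg, hgS⟩ := h
        simp only [mem_erase, mem_range] at hg
        exact ⟨g, hg.2.2, hg.2.1, fun w hw => absurd hw (hgS w)⟩
      refine exists_forall_not_of_card_lt
        (K := ((univ.filter fun w => dg (((G.isolate r').isolate r₂).isolate r₁) w = 2).erase s
          ).erase u) (fun g w => S w = {b, g}) ?_ ?_ ?_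
      · rw [card_erase_of_mem (by simp [hu2, b4.symm]), card_erase_of_mem (by simp [hs2]),
          card_erase_of_mem (by simp [hsb.symm, hRs]), card_erase_of_mem (by simp [hRs]),
          card_range]
        change numDg _ 2 - 1 - 1 < _
        have : 2 ≤ numDg (((G.isolate r').isolate r₂).isolate r₁) 2 :=
          one_lt_card.2 ⟨u, by simp [hu2], s, by simp [hs2], b4.symm⟩
        omega
      · intro g hg w hw
        simp only [mem_erase, mem_range] at hg
        have h1 : w ≠ u := by
          rintro rfl
          have := mem_pair_of_eq_pair hw
          grind
        have h2 : w ≠ s := by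
          rintro rfl
          have := mem_pair_of_eq_pair hw
          grind
        have h3 : (S w).card = 2 := by rw [hw, card_pair hg.2.1.symm]
        rw [hc.card_eq] at h3
        simp [h1, h2, h3]
      · intro g hg g' hg' w hw hw'
        simp only [mem_erase, mem_range] at hg hg'
        have := mem_pair_of_eq_pair hw
        have := mem_pair_of_eq_pair hw'
        grind
  have hge : g ≠ e := by
    rintro rfl
    exact a4 (hgS s hSs).symm
  have hc1 := hc.recolor hsm.left.symm hb' (hN v) (hN s)
  have hc2 := hc1.addLeaf hr₁L.adj hr₁L.eq (i := b)
    (by simp only [Function.update_apply]; grind)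
  have hc3 := hc2.addLeaf hr₂L.adj hr₂L.eq (i := g) (by simp only [Function.update_apply]; grind)
  have hc4 := hc3.addLeaf hr'.adj hr'.eq (i := N) (by simp only [Function.update_apply]; grind)
  generalize hS' : Function.update _ r' _ = S'' at hc4
  have hx := fun u => congrFun hS'.symm u
  simp only [Function.update_apply] at hx
  have hd' : Distinguishes (Function.update (Function.update S v ∅) r₁ {b, g}) := by
    intro w z h hw
    simp only [Function.update_apply] at h hw
    have := hgS w
    have := hgS z
    have := hd w z
    grind
  have hR' : ∀ w, (Function.update (Function.update S v ∅) r₁ {b, g}) w ⊆ range N := by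
    intro w
    have := hR w
    simp only [Function.update_apply]
    grind
  refine good_of_inserts hc4 hR' hd' [(r', ∅), (r₂, {g}), (v, S v), (s, {e})] [] ?_ ?_ ?_ ?_ ?_
  · simp only [List.forall_mem_cons]
    refine ⟨⟨?_, ?_⟩, ⟨?_, ?_⟩, ⟨?_, ?_⟩, ⟨?_, ?_⟩, by simp⟩ <;> grind
  · simp
  · simp only [List.forall_mem_cons, Function.update_apply]
    grind
  · have := ne_empty_singleton (A := S v) (by omega)
    simp [*]
  · simp

theorem Good.op_subdivide {a s b : V} (hm : Mid G a s b) (hab : ¬ G.Adj a b)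
    (ha : dg G a = 2) {k : ℕ}
    (hcase : numDg (G.suppress a s b) 2 + 2 ≤ k ∨ numDg (G.suppress a s b) 2 + 1 ≤ k ∧
      ∃ w₀ w₁ w₂ w₃ w₄, Mid (G.suppress a s b) w₀ w₁ w₂ ∧ Mid (G.suppress a s b) w₁ w₂ w₃ ∧
        Mid (G.suppress a s b) w₂ w₃ w₄ ∧ w₁ ≠ a ∧ w₂ ≠ a ∧ w₃ ≠ a)
    (h : Good (G.suppress a s b) k) : Good G k := by
  obtain ⟨c, S, hc, hR, hd⟩ := h
  have a1 := hm.left.ne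
  have ha2 : dg (G.suppress a s b) a = 2 := by rw [dg_suppress hm hab, if_neg a1.symm, ha]
  have hadj : (G.suppress a s b).Adj a b := by
    rw [suppress_adj]; exact Or.inr ⟨Or.inl ⟨rfl, rfl⟩, hm.ne⟩
  obtain ⟨c₂, hc₂⟩ : ∃ c₂, c a b = c₂ := ⟨_, rfl⟩
  have h2a := hc.color_mem hadj
  have h2b := hc.color_mem' hadj
  rw [hc₂] at h2a h2b
  have hAc := card_erase_of_mem h2a
  rw [hc.card_eq, ha2] at hAc
  obtain ⟨c₁, hc₁⟩ := card_eq_one.1 hAc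
  have h1a : c₁ ∈ S a := mem_of_mem_erase (hc₁ ▸ mem_singleton_self c₁)
  have h12 : c₁ ≠ c₂ := ne_of_mem_erase (hc₁ ▸ mem_singleton_self c₁ : c₁ ∈ (S a).erase c₂)
  have hSa : S a = {c₁, c₂} := by rw [← insert_erase h2a, hc₁, pair_comm]
  have hRa := hR a
  rw [hSa, insert_subset_iff, singleton_subset_iff, mem_range, mem_range] at hRa
  have hSs : S s = ∅ := by
    ext i
    simp only [hc.mem, suppress_adj, notMem_empty, iff_false, not_exists]
    have := hm.right.ne
    grind
  obtain ⟨f, hf, hfS⟩ : ∃ f ∈ ((range k).erase c₁).erase c₂,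
      ∀ u, ¬ (u ≠ a ∧ (S u = {c₁, f} ∨ S u = {f, c₂})) := by
    have hCc : (((range k).erase c₁).erase c₂).card = k - 2 := by
      rw [card_erase_of_mem (by simp [h12.symm, hRa]), card_erase_of_mem (by simp [hRa]),
        card_range]
      omega
    have hKc : ((univ.filter fun w => dg (G.suppress a s b) w = 2).erase a).card =
        numDg (G.suppress a s b) 2 - 1 := card_erase_of_mem (by simp [ha2])
    have hKpos : 1 ≤ numDg (G.suppress a s b) 2 := card_pos.2 ⟨a, by simp [ha2]⟩
    have hK : ∀ g ∈ ((range k).erase c₁).erase c₂, ∀ u,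
        (u ≠ a ∧ (S u = {c₁, g} ∨ S u = {g, c₂})) →
        u ∈ (univ.filter fun w => dg (G.suppress a s b) w = 2).erase a := by
      intro g hg u hu
      simp only [mem_erase, mem_range] at hg
      have h3 : (S u).card = 2 := by
        rcases hu.2 with h | h
        · rw [h, card_pair hg.2.1.symm]
        · rw [h, card_pair hg.1]
      rw [hc.card_eq] at h3
      simp [h3, hu.1]
    have hinj : ∀ g ∈ ((range k).erase c₁).erase c₂, ∀ g' ∈ ((range k).erase c₁).erase c₂, ∀ u,
        (u ≠ a ∧ (S u = {c₁, g} ∨ S u = {g, c₂})) →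
        (u ≠ a ∧ (S u = {c₁, g'} ∨ S u = {g', c₂})) → g = g' := by
      intro g hg g' hg' u hu hu'
      simp only [mem_erase, mem_range] at hg hg'
      rcases hu.2 with h | h <;> rcases hu'.2 with h' | h' <;>
      · have := mem_pair_of_eq_pair h
        have := mem_pair_of_eq_pair h'
        grind
    rcases hcase with hn | ⟨hn, w₀, w₁, w₂, w₃, w₄, m₁, m₂, m₃, e₁, e₂, e₃⟩
    · exact exists_forall_not_of_card_lt
        (fun g u => u ≠ a ∧ (S u = {c₁, g} ∨ S u = {g, c₂})) (by rw [hCc, hKc]; omega) hK hinj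
    · by_contra! hcon
      have : Nonempty V := ⟨a⟩
      choose! φ hφ using hcon
      have hsurj : Set.SurjOn φ (((range k).erase c₁).erase c₂)
          ((univ.filter fun w => dg (G.suppress a s b) w = 2).erase a) :=
        surjOn_of_injOn_of_card_le φ (fun g hg => hK g hg _ (hφ g hg))
          (fun g hg g' hg' h => hinj g hg g' hg' _ (hφ g hg) (h ▸ hφ g' hg'))
          (by rw [hCc, hKc]; omega)
      obtain ⟨f₁, hf₁, rfl⟩ := hsurj (a := w₁) (by simp [m₁.dg, e₁])
      obtain ⟨f₂, hf₂, rfl⟩ := hsurj (a := w₂) (by simp [m₂.dg, e₂])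
      obtain ⟨f₃, hf₃, rfl⟩ := hsurj (a := w₃) (by simp [m₃.dg, e₃])
      have n12 : f₁ ≠ f₂ := fun h => m₁.right.ne (h ▸ rfl)
      have n23 : f₂ ≠ f₃ := fun h => m₂.right.ne (h ▸ rfl)
      have n13 : f₁ ≠ f₃ := fun h => m₂.ne (h ▸ rfl)
      have p₁ := mem_pair_of_eq_pair (hc.mid_eq m₁)
      have p₂ := mem_pair_of_eq_pair (hc.mid_eq m₂)
      have p₃ := mem_pair_of_eq_pair (hc.mid_eq m₃)
      have q₁ := hc.mid_ne m₁
      have q₂ := hc.mid_ne m₂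
      have q₃ := hc.mid_ne m₃
      have t₁ := hφ f₁ hf₁
      have t₂ := hφ f₂ hf₂
      have t₃ := hφ f₃ hf₃
      simp only [mem_erase, coe_erase, Set.mem_diff, Set.mem_singleton_iff] at hf₁ hf₂ hf₃
      generalize c w₀ (φ f₁) = d₁ at *
      generalize c (φ f₁) (φ f₂) = d₂ at *
      generalize c (φ f₂) (φ f₃) = d₃ at *
      generalize c (φ f₃) w₄ = d₄ at *
      have r₁ : (d₁ = f₁ ∧ (d₂ = c₁ ∨ d₂ = c₂)) ∨ (d₂ = f₁ ∧ (d₁ = c₁ ∨ d₁ = c₂)) := by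
        rcases t₁.2 with h | h <;> have := mem_pair_of_eq_pair h <;> clear t₁ t₂ t₃ <;> grind
      have r₂ : (d₂ = f₂ ∧ (d₃ = c₁ ∨ d₃ = c₂)) ∨ (d₃ = f₂ ∧ (d₂ = c₁ ∨ d₂ = c₂)) := by
        rcases t₂.2 with h | h <;> have := mem_pair_of_eq_pair h <;> clear t₁ t₂ t₃ <;> grind
      have r₃ : (d₃ = f₃ ∧ (d₄ = c₁ ∨ d₄ = c₂)) ∨ (d₄ = f₃ ∧ (d₃ = c₁ ∨ d₃ = c₂)) := by
        rcases t₃.2 with h | h <;> have := mem_pair_of_eq_pair h <;> clear t₁ t₂ t₃ <;> grind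
      clear t₁ t₂ t₃ p₁ p₂ p₃
      grind
  simp only [mem_erase, mem_range] at hf
  have hc1 := hc.subdivide hm.left hm.right hm.eq hm.ne hab hc₂ (i := f) (by rw [hSa]; grind)
  refine ⟨_, _, hc1, fun u => ?_, fun u w h hu => ?_⟩
  · have := hR u
    simp only [Function.update_apply]
    grind
  · simp only [Function.update_apply, hc₁] at h hu
    have := hd u w
    have h1 := hfS u
    have h2 := hfS w
    have h3 : ({f, c₁} : Finset ℕ) ≠ {f, c₂} := by
      intro h
      have := mem_pair_of_eq_pair h
      grind
    grind [pair_comm]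

end

section

open Classical Finset

variable {V : Type*} [Fintype V] {G : SimpleGraph V}

/-- `h` is the height and `par` the parent function of the tree `G` rooted at `v`. -/
structure Rooted (G : SimpleGraph V) (v : V) (h : V → ℕ) (par : V → V) : Prop where
  adj : ∀ u w, G.Adj u w → (h w = h u + 1 ∧ par w = u) ∨ (h u = h w + 1 ∧ par u = w)
  par : ∀ u, dg G u ≠ 0 → u ≠ v → G.Adj u (par u) ∧ h u = h (par u) + 1
  root : h v = 0

theorem TreeLike.exists_rooted (hT : TreeLike G) {v : V} (hv : dg G v ≠ 0) :
    ∃ h par, Rooted G v h par := by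
  have huniq : ∀ u w w', G.Adj u w → G.Adj u w' → G.dist v u = G.dist v w + 1 →
      G.dist v u = G.dist v w' + 1 → w = w' := by
    intro u w w' hw hw' hd hd'
    have key : ∀ w, (hw : G.Adj u w) → G.dist v u = G.dist v w + 1 →
        ∃ p : G.Walk v u, p.IsPath ∧ p.penultimate = w := by
      intro w hw hd
      obtain ⟨p, hp⟩ := (hT.reachable v w hv (Nat.one_le_iff_ne_zero.1 (dg_pos hw.symm))
        ).exists_walk_length_eq_dist
      refine ⟨p.concat hw.symm, ?_, by simp⟩
      exact Walk.isPath_of_length_eq_dist _ (by rw [Walk.length_concat, hp, hd])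
    obtain ⟨p, hp, rfl⟩ := key w hw hd
    obtain ⟨q, hq, rfl⟩ := key w' hw' hd'
    have := hT.acyclic.path_unique ⟨p, hp⟩ ⟨q, hq⟩
    rw [Subtype.mk.injEq] at this
    rw [this]
  have hstep : ∀ u w, G.Adj u w →
      G.dist v w = G.dist v u + 1 ∨ G.dist v u = G.dist v w + 1 := by
    intro u w huw
    have hu := hT.reachable v u hv (Nat.one_le_iff_ne_zero.1 (dg_pos huw))
    have h1 := hT.acyclic.dist_eq_dist_add_one_of_adj_of_reachable v huw hu
    tauto
  have hpar : ∀ u, ∃ w, dg G u ≠ 0 → u ≠ v → G.Adj u w ∧ G.dist v u = G.dist v w + 1 := by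
    intro u
    by_cases h : dg G u ≠ 0 ∧ u ≠ v
    · obtain ⟨p, hp⟩ := (hT.reachable v u hv h.1).exists_walk_length_eq_dist
      have hnil : ¬ p.Nil := fun hn => h.2 hn.eq.symm
      have ha := p.adj_penultimate hnil
      refine ⟨p.penultimate, fun _ _ => ⟨ha.symm, ?_⟩⟩
      have h2 : G.dist v p.penultimate ≤ p.dropLast.length := dist_le _
      have h3 := p.length_dropLast_add_one hnil
      rcases hstep _ _ ha with h4 | h4 <;> omega
    · exact ⟨u, fun h1 h2 => absurd ⟨h1, h2⟩ h⟩
  choose par hpar using hpar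
  refine ⟨G.dist v, par, fun u w huw => ?_, hpar, by simp⟩
  have key : ∀ u w, G.Adj u w → G.dist v w = G.dist v u + 1 → par w = u := by
    intro u w huw hd
    have hwv : w ≠ v := by rintro rfl; simp at hd
    have h1 := hpar w (Nat.one_le_iff_ne_zero.1 (dg_pos huw.symm)) hwv
    exact huniq w _ _ h1.1 huw.symm h1.2 hd
  rcases hstep u w huw with h | h
  · exact Or.inl ⟨h, key u w huw h⟩
  · exact Or.inr ⟨h, key w u huw.symm h⟩

/-- The number of leaves is at least two plus the total excess degree of any set of vertices. -/
theorem TreeLike.sum_le (hT : TreeLike G) (H : Finset V) (hH : ∀ u ∈ H, 2 ≤ dg G u) :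
    ∑ u ∈ H, (dg G u - 2) + 2 ≤ numDg G 1 := by
  zify
  have h := hT.sum
  have h1 : ∑ u ∈ H, ((dg G u - 2 : ℕ) : ℤ) = ∑ u, if u ∈ H then (dg G u : ℤ) - 2 else 0 := by
    rw [sum_ite_mem, univ_inter]
    exact sum_congr rfl fun u hu => Nat.cast_sub (hH u hu)
  have h2 : ∑ u, ((if u ∈ H then (dg G u : ℤ) - 2 else 0) - if dg G u = 1 then 1 else 0) ≤
      ∑ u, (if dg G u = 0 then 0 else (dg G u : ℤ) - 2) := by
    refine sum_le_sum fun u _ => ?_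
    have := hH u
    split_ifs <;> first | omega | tauto
  rw [sum_sub_distrib, ← h1, h, ← numDg_eq_sum] at h2
  omega

theorem TreeLike.dg_le (hT : TreeLike G) {v : V} (hv : 2 ≤ dg G v) : dg G v ≤ numDg G 1 := by
  have := hT.sum_le {v} (by simpa using hv)
  rw [sum_singleton] at this
  omega

theorem TreeLike.dg_add_le (hT : TreeLike G) {v w : V} (hv : 2 ≤ dg G v) (hw : 2 ≤ dg G w)
    (hne : v ≠ w) : dg G v + dg G w ≤ numDg G 1 + 2 := by
  have := hT.sum_le {v, w} (by simp [hv, hw])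
  rw [sum_pair hne] at this
  omega

theorem TreeLike.numDg_one_eq_two (hT : TreeLike G) (h : ∀ u, dg G u ≤ 2) : numDg G 1 = 2 := by
  zify
  have h1 := hT.sum
  have h2 : ∑ u, (if dg G u = 0 then 0 else (dg G u : ℤ) - 2) =
      ∑ u, -(if dg G u = 1 then 1 else 0) := by
    refine sum_congr rfl fun u _ => ?_
    have := h u
    split_ifs <;> omega
  rw [h2, sum_neg_distrib, ← numDg_eq_sum] at h1
  omega

theorem TreeLike.two_le_numDg_one (hT : TreeLike G) : 2 ≤ numDg G 1 := by
  have := hT.sum_le ∅ (by simp)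
  simpa using this

/-- The number of vertices of degree two that are adjacent to a leaf. -/
noncomputable def numPendant (G : SimpleGraph V) : ℕ :=
  (univ.filter fun s => dg G s = 2 ∧ ∃ x, LeafAt G x s).card

theorem Rooted.eq_par_of_leaf {v : V} {h : V → ℕ} {par : V → V} (hR : Rooted G v h par) {x s : V}
    (hx : LeafAt G x s) (hxv : x ≠ v) : h x = h s + 1 ∧ par x = s := by
  have h1 := hR.par x (by rw [hx.dg]; omega) hxv
  have h2 := hx.eq _ h1.1
  rw [h2] at h1
  exact ⟨h1.2, h2⟩

/-- In a tree without adjacent vertices of degree two, most vertices of degree two are adjacent to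
a leaf. -/
theorem TreeLike.numDg_two_le (hT : TreeLike G) {v : V} (hv : 3 ≤ dg G v)
    (hNL : ∀ a s, G.Adj a s → dg G a = 2 → dg G s ≠ 2) :
    numDg G 2 + 3 ≤ numPendant G + numDg G 1 := by
  obtain ⟨h, par, hR⟩ := hT.exists_rooted (v := v) (by omega)
  set H := univ.filter fun u => 3 ≤ dg G u
  have hvH : v ∈ H := by simp [H, hv]
  have h1 : H.card + 2 ≤ numDg G 1 := by
    have h2 := hT.sum_le H (by simp [H]; omega)
    have h3 : H.card • 1 ≤ ∑ u ∈ H, (dg G u - 2) := card_nsmul_le_sum _ _ _ (by simp [H]; omega)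
    simp at h3
    omega
  set B := univ.filter fun s => dg G s = 2 ∧ ∃ x, LeafAt G x s
  set A := (univ.filter fun s => dg G s = 2) \ B
  have h2 : A.card ≤ (H.erase v).card := by
    have hchild : ∀ s ∈ A, ∃ u ∈ H.erase v, par u = s := by
      intro s hs
      simp only [A, B, mem_sdiff, mem_filter, mem_univ, true_and, not_and, not_exists] at hs
      have hsv : s ≠ v := ne_of_dg (G := G) (by omega)
      obtain ⟨u, hu⟩ := exists_mid_of_dg (hR.par s (by omega) hsv).1.symm hs.1
      have h4 : h u = h s + 1 ∧ par u = s := by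
        rcases hR.adj _ _ hu.right with h5 | h5
        · exact h5
        · exact absurd h5.2 hu.ne
      have h5 := hNL s u hu.right hs.1
      have h6 := dg_pos hu.right.symm
      have h7 : dg G u ≠ 1 := fun h => hs.2 hs.1 u (leafAt_of_dg hu.right h)
      have h8 := hR.root
      refine ⟨u, ?_, h4.2⟩
      simp only [H, mem_erase, mem_filter, mem_univ, true_and]
      exact ⟨by rintro rfl; omega, by omega⟩
    choose! f hf using hchild
    refine card_le_card_of_injOn f (fun s hs => (hf s hs).1) fun s hs s' hs' he => ?_
    rw [← (hf s hs).2, ← (hf s' hs').2, he]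
  rw [card_erase_of_mem hvH] at h2
  have h3 : A.card = numDg G 2 - B.card :=
    card_sdiff_of_subset fun s hs => by simp [B] at hs; simp [hs]
  have h4 : 0 < H.card := card_pos.2 ⟨v, hvH⟩
  change _ ≤ B.card + _
  omega

/-- If the leaves outnumber the vertices of degree two, then some leaf is adjacent to a vertex of
large degree. -/
theorem TreeLike.exists_leafAt_hub (hT : TreeLike G) {v : V} (hv : 3 ≤ dg G v)
    (hlt : numDg G 2 < numDg G 1) : ∃ x w, LeafAt G x w ∧ 3 ≤ dg G w := by
  by_contra! hcon
  obtain ⟨h, par, hR⟩ := hT.exists_rooted (v := v) (by omega)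
  have hleaf : ∀ x s, LeafAt G x s → x ≠ v := fun x s hx => by
    have := hx.dg
    exact ne_of_dg (G := G) (by omega)
  have key : ∀ x s, LeafAt G x s → dg G s = 2 := by
    intro x s hx
    have h1 := hcon x s hx
    have h2 := hR.eq_par_of_leaf hx (hleaf x s hx)
    have hsv : s ≠ v := ne_of_dg (G := G) (by omega)
    have h3 := hR.par s (Nat.one_le_iff_ne_zero.1 (dg_pos hx.adj)) hsv
    have := two_le_dg h3.1 hx.adj (by intro h; rw [h] at h3; omega)
    omega
  have hex : ∀ x ∈ univ.filter fun x => dg G x = 1, ∃ s, LeafAt G x s := fun x hx =>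
    exists_leafAt_of_dg (by simpa using hx)
  choose! f hf using hex
  refine absurd (card_le_card_of_injOn (s := univ.filter fun x => dg G x = 1)
    (t := univ.filter fun s => dg G s = 2) f ?_ ?_) (not_le.2 hlt)
  · intro x hx
    simpa using key x _ (hf x hx)
  · intro x hx x' hx' he
    by_contra hne
    have h1 := hf x hx
    have h2 := hf x' hx'
    rw [← he] at h2
    have h3 := hcon x _ h1
    have h4 := hR.eq_par_of_leaf h1 (hleaf _ _ h1)
    have h5 := hR.eq_par_of_leaf h2 (hleaf _ _ h2)
    have hsv : f x ≠ v := ne_of_dg (G := G) (by omega)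
    have h6 := hR.par (f x) (Nat.one_le_iff_ne_zero.1 (dg_pos h1.adj)) hsv
    have := three_le_dg h1.adj h2.adj h6.1 hne (by intro h; rw [← h] at h6; omega)
      (by intro h; rw [← h] at h6; omega)
    omega

theorem TreeLike.mem_of_closed (hT : TreeLike G) {P : V → Prop} {v : V} (hv : P v)
    (hd : dg G v ≠ 0) (hP : ∀ u w, G.Adj u w → P u → P w) {u : V} (hu : dg G u ≠ 0) : P u := by
  obtain ⟨p⟩ := hT.reachable v u hd hu
  induction p with
  | nil => exact hv
  | cons h p ih => exact ih (hP _ _ h hv) (Nat.one_le_iff_ne_zero.1 (dg_pos h.symm)) hu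

theorem Good.of_embedding {n k : ℕ} (y : Fin n → V) (hy : Function.Injective y)
    (H : Fin n → Fin n → Prop) (hadj : ∀ u w, G.Adj u w ↔ ∃ i j, H i j ∧ y i = u ∧ y j = w)
    (c : Fin n → Fin n → ℕ) (S : Fin n → Finset ℕ) (hc : ∀ i j, c i j = c j i)
    (hS : ∀ i, (∀ a ∈ S i, ∃ j, H i j ∧ c i j = a) ∧ ∀ j, H i j → c i j ∈ S i)
    (hinj : ∀ i j j', H i j → H i j' → c i j = c i j' → j = j')
    (hk : ∀ i, ∀ a ∈ S i, a < k) (hd : ∀ i j, S i = S j → i = j) : Good G k := by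
  have key : ∀ u, (∃ i, y i = u) ∨ ¬ ∃ i, y i = u := fun u => Classical.em _
  have ex : ∀ i, Function.extend y S (fun _ => ∅) (y i) = S i := fun i => hy.extend_apply _ _ _
  have ec : ∀ i j, Function.extend y (fun i => Function.extend y (c i) (fun _ => 0))
      (fun _ _ => 0) (y i) (y j) = c i j := fun i j => by
    rw [hy.extend_apply, hy.extend_apply]
  refine ⟨Function.extend y (fun i => Function.extend y (c i) (fun _ => 0)) (fun _ _ => 0),
    Function.extend y S (fun _ => ∅), ⟨fun u w => ?_, fun u a => ?_, fun u w w' h h' => ?_⟩,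
    fun u => ?_, fun u w h hne => ?_⟩
  · rcases key u with ⟨i, rfl⟩ | hu <;> rcases key w with ⟨j, rfl⟩ | hw
    · rw [ec, ec, hc]
    · rw [Function.extend_apply' _ _ _ hw, hy.extend_apply, Function.extend_apply' _ _ _ hw]
    · rw [Function.extend_apply' _ _ _ hu, hy.extend_apply, Function.extend_apply' _ _ _ hu]
    · rw [Function.extend_apply' _ _ _ hu, Function.extend_apply' _ _ _ hw]
  · rcases key u with ⟨i, rfl⟩ | hu
    · rw [ex]
      constructor
      · intro ha
        obtain ⟨j, hj, rfl⟩ := (hS i).1 a ha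
        exact ⟨y j, (hadj _ _).2 ⟨i, j, hj, rfl, rfl⟩, ec i j⟩
      · rintro ⟨w, hw, rfl⟩
        obtain ⟨i', j, hj, hi, rfl⟩ := (hadj _ _).1 hw
        obtain rfl := hy hi
        rw [ec]
        exact (hS i').2 j hj
    · rw [Function.extend_apply' _ _ _ hu]
      refine ⟨fun h => absurd h (notMem_empty a), ?_⟩
      rintro ⟨w, hw, -⟩
      obtain ⟨i, j, -, hi, -⟩ := (hadj _ _).1 hw
      exact absurd ⟨i, hi⟩ hu
  · obtain ⟨i, j, hj, rfl, rfl⟩ := (hadj _ _).1 h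
    obtain ⟨i', j', hj', hi', rfl⟩ := (hadj _ _).1 h'
    obtain rfl := hy hi'
    rw [ec, ec]
    exact fun e => congrArg y (hinj _ _ _ hj hj' e)
  · rcases key u with ⟨i, rfl⟩ | hu
    · rw [ex]
      exact fun a ha => mem_range.2 (hk i a ha)
    · rw [Function.extend_apply' _ _ _ hu]
      exact empty_subset _
  · rcases key u with ⟨i, rfl⟩ | hu <;> rcases key w with ⟨j, rfl⟩ | hw
    · rw [ex, ex] at h
      rw [hd i j h]
    · rw [h, Function.extend_apply' _ _ _ hw] at hne
      simp at hne
    · rw [Function.extend_apply' _ _ _ hu] at hne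
      simp at hne
    · rw [Function.extend_apply' _ _ _ hu] at hne
      simp at hne

/-- A tree given by a parent function `p` on `Fin (n + 1)` embeds as soon as siblings are distinct
and no vertex is its own grandparent. -/
theorem TreeLike.injective_of_parent (hT : TreeLike G) {n : ℕ} (y : Fin (n + 1) → V)
    (p : Fin (n + 1) → Fin (n + 1)) (hp : ∀ i, i ≠ 0 → p i < i)
    (hadj : ∀ i, i ≠ 0 → G.Adj (y i) (y (p i)))
    (hsib : ∀ i j, i < j → i ≠ 0 → p i = p j → y i ≠ y j)
    (hgrand : ∀ i, p i ≠ 0 → y i ≠ y (p (p i))) (hn : dg G (y 0) ≠ 0) :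
    Function.Injective y := by
  obtain ⟨h, par, hR⟩ := hT.exists_rooted hn
  have key : ∀ i, i ≠ 0 → h (y i) = h (y (p i)) + 1 ∧ par (y i) = y (p i) := by
    intro i
    induction i using WellFoundedLT.induction with
    | ind i ih =>
      intro hi
      rcases hR.adj _ _ (hadj i hi) with ⟨h₁, h₂⟩ | h₁
      · by_cases h0 : p i = 0
        · rw [h0, hR.root] at h₁
          omega
        · exact absurd (h₂.symm.trans (ih _ (hp i hi) h0).2) (hgrand i h0)
      · exact h₁
  intro i
  induction i using WellFoundedLT.induction with
  | ind i ih =>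
    intro j e
    by_cases hi : i = 0
    · by_contra hj
      have := (key j fun h => hj (hi.trans h.symm)).1
      rw [← e, hi, hR.root] at this
      omega
    · by_cases hj : j = 0
      · have := (key i hi).1
        rw [e, hj, hR.root] at this
        omega
      · have e' : p i = p j := ih _ (hp i hi) (by rw [← (key i hi).2, ← (key j hj).2, e])
        rcases lt_trichotomy i j with hlt | heq | hgt
        · exact absurd e (hsib i j hlt hi e')
        · exact heq
        · exact absurd e.symm (hsib j i hgt hj e'.symm)

/-- The relation of being adjacent in the tree with parent function `p`. -/
def ParentAdj {n : ℕ} (p : Fin (n + 1) → Fin (n + 1)) (i j : Fin (n + 1)) : Prop :=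
  (i ≠ 0 ∧ p i = j) ∨ (j ≠ 0 ∧ p j = i)

theorem TreeLike.adj_iff_of_parent (hT : TreeLike G) {n : ℕ} (y : Fin (n + 1) → V)
    (p : Fin (n + 1) → Fin (n + 1)) (hadj : ∀ i, i ≠ 0 → G.Adj (y i) (y (p i)))
    (hcl : ∀ i w, G.Adj (y i) w → ∃ j, ParentAdj p i j ∧ y j = w) (hn : dg G (y 0) ≠ 0) (u w : V) :
    G.Adj u w ↔ ∃ i j, ParentAdj p i j ∧ y i = u ∧ y j = w := by
  constructor
  · intro h
    obtain ⟨i, rfl⟩ : ∃ i, y i = u :=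
      hT.mem_of_closed (P := fun u => ∃ i, y i = u) ⟨0, rfl⟩ hn
        (fun a b hab ⟨i, hi⟩ => by
          subst hi
          obtain ⟨j, -, hj⟩ := hcl i b hab
          exact ⟨j, hj⟩) (Nat.one_le_iff_ne_zero.1 (dg_pos h))
    obtain ⟨j, hj, rfl⟩ := hcl i w h
    exact ⟨i, j, hj, rfl, rfl⟩
  · rintro ⟨i, j, ⟨h, rfl⟩ | ⟨h, rfl⟩, rfl, rfl⟩
    · exact hadj i h
    · exact (hadj j h).symm

end

section

open Finset

variable {V : Type*} [Fintype V] {G : SimpleGraph V}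

instance {n : ℕ} (p : Fin (n + 1) → Fin (n + 1)) (i j : Fin (n + 1)) :
    Decidable (ParentAdj p i j) := by unfold ParentAdj; infer_instance

/-- The symmetric edge labeling giving the label `e i` to the edge from `i` to its parent. -/
def parentColor {n : ℕ} (p : Fin (n + 1) → Fin (n + 1)) (e : Fin (n + 1) → ℕ)
    (i j : Fin (n + 1)) : ℕ :=
  if p (max i j) = min i j then e (max i j) else 0

theorem parentColor_comm {n : ℕ} (p : Fin (n + 1) → Fin (n + 1)) (e : Fin (n + 1) → ℕ)
    (i j : Fin (n + 1)) : parentColor p e i j = parentColor p e j i := by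
  rw [parentColor, parentColor, max_comm, min_comm]

theorem good_of_parent (hT : TreeLike G) {n k : ℕ} (y : Fin (n + 1) → V)
    (p : Fin (n + 1) → Fin (n + 1)) (e : Fin (n + 1) → ℕ) (S : Fin (n + 1) → Finset ℕ)
    (hadj : ∀ i, i ≠ 0 → G.Adj (y i) (y (p i)))
    (hcl : ∀ i w, G.Adj (y i) w → ∃ j, ParentAdj p i j ∧ y j = w)
    (hsib : ∀ i j, i < j → i ≠ 0 → p i = p j → y i ≠ y j)
    (hgrand : ∀ i, p i ≠ 0 → y i ≠ y (p (p i))) (hn : dg G (y 0) ≠ 0)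
    (hp : ∀ i, i ≠ 0 → p i < i)
    (hS : ∀ i, (∀ a ∈ S i, ∃ j, ParentAdj p i j ∧ parentColor p e i j = a) ∧
      ∀ j, ParentAdj p i j → parentColor p e i j ∈ S i)
    (hinj : ∀ i j j', ParentAdj p i j → ParentAdj p i j' →
      parentColor p e i j = parentColor p e i j' → j = j')
    (hk : ∀ i, ∀ a ∈ S i, a < k) (hd : ∀ i j, S i = S j → i = j) : Good G k :=
  Good.of_embedding y (hT.injective_of_parent y p hp hadj hsib hgrand hn) _
    (hT.adj_iff_of_parent y p hadj hcl hn) _ S (parentColor_comm p e) hS hinj hk hd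

/-- The tree with a center `w` adjacent to a leaf `x`, to `s` carrying the leaves `l₁, l₂` and to
`t` carrying the leaf `l₃`. -/
theorem TreeLike.good_leaf_fork_path (hT : TreeLike G) {w x s t l₁ l₂ l₃ : V} (hx : LeafAt G x w)
    (hs : G.Adj s w) (ht : Mid G w t l₃) (h₁ : LeafAt G l₁ s) (h₂ : LeafAt G l₂ s)
    (h₃ : LeafAt G l₃ t) (hw : ∀ u, G.Adj w u → u = x ∨ u = s ∨ u = t)
    (hsu : ∀ u, G.Adj s u → u = w ∨ u = l₁ ∨ u = l₂) (hxs : x ≠ s) (hxt : x ≠ t) (hst : s ≠ t)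
    (h₁₂ : l₁ ≠ l₂) (h₁w : l₁ ≠ w) (h₂w : l₂ ≠ w) : Good G 4 := by
  refine good_of_parent hT ![w, x, s, t, l₁, l₂, l₃] ![0, 0, 0, 0, 2, 2, 3] ![0, 0, 1, 2, 2, 3, 1]
    ![{0, 1, 2}, {0}, {1, 2, 3}, {1, 2}, {2}, {3}, {1}] ?_ ?_ ?_ ?_ ?_ (by decide) (by decide)
    (by decide) (by decide) (by decide)
  · intro i hi
    fin_cases i
    exacts [absurd rfl hi, hx.adj.symm, hs, ht.left, h₁.adj.symm, h₂.adj.symm, h₃.adj.symm]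
  · intro i u hu
    fin_cases i
    · rcases hw u hu with rfl | rfl | rfl
      exacts [⟨1, by decide, rfl⟩, ⟨2, by decide, rfl⟩, ⟨3, by decide, rfl⟩]
    · exact ⟨0, by decide, (hx.eq u hu).symm⟩
    · rcases hsu u hu with rfl | rfl | rfl
      exacts [⟨0, by decide, rfl⟩, ⟨4, by decide, rfl⟩, ⟨5, by decide, rfl⟩]
    · rcases ht.eq u hu with rfl | rfl
      exacts [⟨0, by decide, rfl⟩, ⟨6, by decide, rfl⟩]
    · exact ⟨2, by decide, (h₁.eq u hu).symm⟩
    · exact ⟨2, by decide, (h₂.eq u hu).symm⟩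
    · exact ⟨3, by decide, (h₃.eq u hu).symm⟩
  · intro i j hij hi
    fin_cases i <;> fin_cases j <;> simp [hxs, hxt, hst, h₁₂] at hij hi ⊢
  · intro i hi
    fin_cases i <;> simp [h₁w, h₂w, ht.ne.symm] at hi ⊢
  · exact Nat.one_le_iff_ne_zero.1 (dg_pos hs.symm)

/-- The tree with a center of degree two both of whose neighbors carry two leaves. -/
theorem TreeLike.good_two_forks (hT : TreeLike G) {w s t l₁ l₂ l₃ l₄ : V} (hw : Mid G s w t)
    (h₁ : LeafAt G l₁ s) (h₂ : LeafAt G l₂ s) (h₃ : LeafAt G l₃ t) (h₄ : LeafAt G l₄ t)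
    (hs : ∀ u, G.Adj s u → u = w ∨ u = l₁ ∨ u = l₂)
    (ht : ∀ u, G.Adj t u → u = w ∨ u = l₃ ∨ u = l₄) (h₁₂ : l₁ ≠ l₂) (h₃₄ : l₃ ≠ l₄)
    (h₁w : l₁ ≠ w) (h₂w : l₂ ≠ w) (h₃w : l₃ ≠ w) (h₄w : l₄ ≠ w) : Good G 4 := by
  refine good_of_parent hT ![w, s, t, l₁, l₂, l₃, l₄] ![0, 0, 0, 1, 1, 2, 2] ![0, 0, 1, 1, 2, 0, 3]
    ![{0, 1}, {0, 1, 2}, {0, 1, 3}, {1}, {2}, {0}, {3}] ?_ ?_ ?_ ?_ ?_ (by decide) (by decide)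
    (by decide) (by decide) (by decide)
  · intro i hi
    fin_cases i
    exacts [absurd rfl hi, hw.left.symm, hw.right.symm, h₁.adj.symm, h₂.adj.symm, h₃.adj.symm,
      h₄.adj.symm]
  · intro i u hu
    fin_cases i
    · rcases hw.eq u hu with rfl | rfl
      exacts [⟨1, by decide, rfl⟩, ⟨2, by decide, rfl⟩]
    · rcases hs u hu with rfl | rfl | rfl
      exacts [⟨0, by decide, rfl⟩, ⟨3, by decide, rfl⟩, ⟨4, by decide, rfl⟩]
    · rcases ht u hu with rfl | rfl | rfl
      exacts [⟨0, by decide, rfl⟩, ⟨5, by decide, rfl⟩, ⟨6, by decide, rfl⟩]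
    · exact ⟨1, by decide, (h₁.eq u hu).symm⟩
    · exact ⟨1, by decide, (h₂.eq u hu).symm⟩
    · exact ⟨2, by decide, (h₃.eq u hu).symm⟩
    · exact ⟨2, by decide, (h₄.eq u hu).symm⟩
  · intro i j hij hi
    fin_cases i <;> fin_cases j <;> simp [hw.ne, h₁₂, h₃₄] at hij hi ⊢
  · intro i hi
    fin_cases i <;> simp [h₁w, h₂w, h₃w, h₄w] at hi ⊢
  · exact Nat.one_le_iff_ne_zero.1 (dg_pos hw.left)

/-- The spider with three legs of length two. -/
theorem TreeLike.good_spider_two_two_two (hT : TreeLike G) {w a b c a' b' c' : V}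
    (ha : Mid G w a a')
    (ha' : LeafAt G a' a) (hb : Mid G w b b') (hb' : LeafAt G b' b) (hc : Mid G w c c')
    (hc' : LeafAt G c' c) (hw : ∀ u, G.Adj w u → u = a ∨ u = b ∨ u = c) (hab : a ≠ b) (hac : a ≠ c)
    (hbc : b ≠ c) : Good G 3 := by
  refine good_of_parent hT ![w, a, b, c, a', b', c'] ![0, 0, 0, 0, 1, 2, 3] ![0, 0, 1, 2, 1, 2, 0]
    ![{0, 1, 2}, {0, 1}, {1, 2}, {0, 2}, {1}, {2}, {0}] ?_ ?_ ?_ ?_ ?_ (by decide) (by decide)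
    (by decide) (by decide) (by decide)
  · intro i hi
    fin_cases i
    exacts [absurd rfl hi, ha.left, hb.left, hc.left, ha.right.symm, hb.right.symm, hc.right.symm]
  · intro i u hu
    fin_cases i
    · rcases hw u hu with rfl | rfl | rfl
      exacts [⟨1, by decide, rfl⟩, ⟨2, by decide, rfl⟩, ⟨3, by decide, rfl⟩]
    · rcases ha.eq u hu with rfl | rfl
      exacts [⟨0, by decide, rfl⟩, ⟨4, by decide, rfl⟩]
    · rcases hb.eq u hu with rfl | rfl
      exacts [⟨0, by decide, rfl⟩, ⟨5, by decide, rfl⟩]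
    · rcases hc.eq u hu with rfl | rfl
      exacts [⟨0, by decide, rfl⟩, ⟨6, by decide, rfl⟩]
    · exact ⟨1, by decide, (ha'.eq u hu).symm⟩
    · exact ⟨2, by decide, (hb'.eq u hu).symm⟩
    · exact ⟨3, by decide, (hc'.eq u hu).symm⟩
  · intro i j hij hi
    fin_cases i <;> fin_cases j <;> simp [hab, hac, hbc] at hij hi ⊢
  · intro i hi
    fin_cases i <;> simp [ha.ne.symm, hb.ne.symm, hc.ne.symm] at hi ⊢
  · exact Nat.one_le_iff_ne_zero.1 (dg_pos ha.left.symm)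

/-- The spider with legs of lengths one, two and three. -/
theorem TreeLike.good_spider_one_two_three (hT : TreeLike G) {w x a b a' b₂ b₃ : V}
    (hx : LeafAt G x w) (ha : Mid G w a a') (ha' : LeafAt G a' a) (hb : Mid G w b b₂)
    (hb₂ : Mid G b b₂ b₃) (hb₃ : LeafAt G b₃ b₂) (hw : ∀ u, G.Adj w u → u = x ∨ u = a ∨ u = b)
    (hxa : x ≠ a) (hxb : x ≠ b) (hab : a ≠ b) : Good G 3 := by
  refine good_of_parent hT ![w, x, a, b, a', b₂, b₃] ![0, 0, 0, 0, 2, 3, 5] ![0, 0, 1, 2, 2, 0, 1]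
    ![{0, 1, 2}, {0}, {1, 2}, {0, 2}, {2}, {0, 1}, {1}] ?_ ?_ ?_ ?_ ?_ (by decide) (by decide)
    (by decide) (by decide) (by decide)
  · intro i hi
    fin_cases i
    exacts [absurd rfl hi, hx.adj.symm, ha.left, hb.left, ha.right.symm, hb.right.symm,
      hb₂.right.symm]
  · intro i u hu
    fin_cases i
    · rcases hw u hu with rfl | rfl | rfl
      exacts [⟨1, by decide, rfl⟩, ⟨2, by decide, rfl⟩, ⟨3, by decide, rfl⟩]
    · exact ⟨0, by decide, (hx.eq u hu).symm⟩
    · rcases ha.eq u hu with rfl | rfl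
      exacts [⟨0, by decide, rfl⟩, ⟨4, by decide, rfl⟩]
    · rcases hb.eq u hu with rfl | rfl
      exacts [⟨0, by decide, rfl⟩, ⟨5, by decide, rfl⟩]
    · exact ⟨2, by decide, (ha'.eq u hu).symm⟩
    · rcases hb₂.eq u hu with rfl | rfl
      exacts [⟨3, by decide, rfl⟩, ⟨6, by decide, rfl⟩]
    · exact ⟨5, by decide, (hb₃.eq u hu).symm⟩
  · intro i j hij hi
    fin_cases i <;> fin_cases j <;> simp [hxa, hxb, hab] at hij hi ⊢
  · intro i hi
    fin_cases i <;> simp [ha.ne.symm, hb.ne.symm, hb₂.ne.symm] at hi ⊢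
  · exact Nat.one_le_iff_ne_zero.1 (dg_pos ha.left.symm)

/-- The spider with legs of lengths one, one and four. -/
theorem TreeLike.good_spider_one_one_four (hT : TreeLike G) {w x x' b b₂ b₃ b₄ : V}
    (hx : LeafAt G x w) (hx' : LeafAt G x' w) (hb : Mid G w b b₂) (hb₂ : Mid G b b₂ b₃)
    (hb₃ : Mid G b₂ b₃ b₄) (hb₄ : LeafAt G b₄ b₃) (hw : ∀ u, G.Adj w u → u = x ∨ u = x' ∨ u = b)
    (hxx : x ≠ x') (hxb : x ≠ b) (hxb' : x' ≠ b) : Good G 3 := by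
  refine good_of_parent hT ![w, x, x', b, b₂, b₃, b₄] ![0, 0, 0, 0, 3, 4, 5] ![0, 0, 1, 2, 0, 1, 2]
    ![{0, 1, 2}, {0}, {1}, {0, 2}, {0, 1}, {1, 2}, {2}] ?_ ?_ ?_ ?_ ?_ (by decide) (by decide)
    (by decide) (by decide) (by decide)
  · intro i hi
    fin_cases i
    exacts [absurd rfl hi, hx.adj.symm, hx'.adj.symm, hb.left, hb.right.symm, hb₂.right.symm,
      hb₃.right.symm]
  · intro i u hu
    fin_cases i
    · rcases hw u hu with rfl | rfl | rfl
      exacts [⟨1, by decide, rfl⟩, ⟨2, by decide, rfl⟩, ⟨3, by decide, rfl⟩]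
    · exact ⟨0, by decide, (hx.eq u hu).symm⟩
    · exact ⟨0, by decide, (hx'.eq u hu).symm⟩
    · rcases hb.eq u hu with rfl | rfl
      exacts [⟨0, by decide, rfl⟩, ⟨4, by decide, rfl⟩]
    · rcases hb₂.eq u hu with rfl | rfl
      exacts [⟨3, by decide, rfl⟩, ⟨5, by decide, rfl⟩]
    · rcases hb₃.eq u hu with rfl | rfl
      exacts [⟨4, by decide, rfl⟩, ⟨6, by decide, rfl⟩]
    · exact ⟨5, by decide, (hb₄.eq u hu).symm⟩
  · intro i j hij hi
    fin_cases i <;> fin_cases j <;> simp [hxx, hxb, hxb'] at hij hi ⊢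
  · intro i hi
    fin_cases i <;> simp [hb.ne.symm, hb₂.ne.symm, hb₃.ne.symm] at hi ⊢
  · exact Nat.one_le_iff_ne_zero.1 (dg_pos hb.left.symm)

end

section

open Classical Finset

variable {V : Type*} [Fintype V] {G : SimpleGraph V}

/-- Some edge meets all edges: the trees of diameter at most three. -/
def IsDoubleStar (G : SimpleGraph V) : Prop :=
  ∃ u w, G.Adj u w ∧ ∀ a b, G.Adj a b → a = u ∨ a = w ∨ b = u ∨ b = w

/-- The trees `Q(r, 2, 0)`. -/
def IsTwoPathStar (G : SimpleGraph V) : Prop :=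
  ∃ w a a' b b', Mid G w a a' ∧ LeafAt G a' a ∧ Mid G w b b' ∧ LeafAt G b' b ∧ a ≠ b ∧
    ∀ u, G.Adj w u → u = a ∨ u = b ∨ LeafAt G u w

/-- The trees `Q(0, 1, 1)`. -/
def IsPathBroom (G : SimpleGraph V) : Prop :=
  ∃ w s z t, Mid G s w t ∧ Mid G w s z ∧ LeafAt G z s ∧ 3 ≤ dg G t ∧
    ∀ u, G.Adj t u → u = w ∨ LeafAt G u t

/-- The trees excluded from the main theorem. -/
def Exceptional (G : SimpleGraph V) : Prop :=
  IsDoubleStar G ∨ IsTwoPathStar G ∨ IsPathBroom G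

theorem TreeLike.eq_of_two_le_dg (hT : TreeLike G) {u w : V}
    (h : ∀ a b, G.Adj a b → a = u ∨ a = w ∨ b = u ∨ b = w) (huw : G.Adj u w) {a : V}
    (ha : 2 ≤ dg G a) : a = u ∨ a = w := by
  by_contra! hne
  obtain ⟨b, hb⟩ := exists_adj_of_dg_ne_zero (G := G) (u := a) (by omega)
  obtain ⟨c, hc, hcb⟩ := exists_adj_ne (w := b) ha
  have key : ∀ d, G.Adj a d → d = u ∨ d = w := fun d hd => by
    rcases h a d hd with h | h | h | h
    exacts [absurd h hne.1, absurd h hne.2, .inl h, .inr h]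
  refine hT.not_adj (a := u) (s := a) (b := w) ⟨?_, ?_, huw.ne, key⟩ huw
  · rcases key b hb with rfl | rfl
    · exact hb
    · rcases key c hc with rfl | rfl
      exacts [hc, absurd rfl hcb]
  · rcases key b hb with rfl | rfl
    · rcases key c hc with rfl | rfl
      exacts [absurd rfl hcb, hc]
    · exact hb

theorem TreeLike.twoPathStar_cases (hT : TreeLike G) {w a a' b b' : V} (ha : Mid G w a a')
    (ha' : LeafAt G a' a) (hb : Mid G w b b') (hb' : LeafAt G b' b)
    (hw : ∀ u, G.Adj w u → u = a ∨ u = b ∨ LeafAt G u w) {u : V} (hu : dg G u ≠ 0) :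
    u = w ∨ u = a ∨ u = b ∨ u = a' ∨ u = b' ∨ LeafAt G u w := by
  refine hT.mem_of_closed (P := fun u => u = w ∨ u = a ∨ u = b ∨ u = a' ∨ u = b' ∨ LeafAt G u w)
    (v := w) (.inl rfl) (Nat.one_le_iff_ne_zero.1 (dg_pos ha.left.symm)) ?_ hu
  rintro u x hux (rfl | rfl | rfl | rfl | rfl | h)
  · grind
  · have := ha.eq x hux; grind
  · have := hb.eq x hux; grind
  · have := ha'.eq x hux; grind
  · have := hb'.eq x hux; grind
  · have := h.eq x hux; grind

theorem TreeLike.pathBroom_cases (hT : TreeLike G) {w s z t : V} (hw : Mid G s w t)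
    (hs : Mid G w s z) (hz : LeafAt G z s) (ht : ∀ u, G.Adj t u → u = w ∨ LeafAt G u t) {u : V}
    (hu : dg G u ≠ 0) : u = w ∨ u = s ∨ u = z ∨ u = t ∨ LeafAt G u t := by
  refine hT.mem_of_closed (P := fun u => u = w ∨ u = s ∨ u = z ∨ u = t ∨ LeafAt G u t)
    (v := w) (.inl rfl) (Nat.one_le_iff_ne_zero.1 (dg_pos hw.left)) ?_ hu
  rintro u x hux (rfl | rfl | rfl | rfl | h)
  · have := hw.eq x hux; grind
  · have := hs.eq x hux; grind
  · have := hz.eq x hux; grind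
  · grind
  · have := h.eq x hux; grind

theorem numDg_le_card {d : ℕ} (A : Finset V) (h : ∀ u, dg G u = d → u ∈ A) :
    numDg G d ≤ A.card :=
  card_le_card fun u hu => h u (by simpa using hu)

theorem Exceptional.numDg_two_le (h : Exceptional G) (hT : TreeLike G) (h1 : 3 ≤ numDg G 1) :
    numDg G 2 ≤ 2 := by
  rcases h with ⟨u, w, huw, h⟩ | ⟨w, a, a', b, b', ha, ha', hb, hb', hab, hw⟩ |
    ⟨w, s, z, t, hw, hs, hz, ht3, ht⟩
  · refine (numDg_le_card {u, w} fun a ha => ?_).trans card_le_two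
    simpa using hT.eq_of_two_le_dg h huw ha.ge
  · by_cases hw2 : dg G w ≤ 2
    · have := hT.numDg_one_eq_two fun u => ?_
      · omega
      by_cases hu : dg G u = 0
      · omega
      rcases hT.twoPathStar_cases ha ha' hb hb' hw hu with rfl | rfl | rfl | rfl | rfl | h
      exacts [hw2, ha.dg.le, hb.dg.le, by rw [ha'.dg]; omega, by rw [hb'.dg]; omega,
        by rw [h.dg]; omega]
    · refine (numDg_le_card {a, b} fun u hu => ?_).trans card_le_two
      rcases hT.twoPathStar_cases ha ha' hb hb' hw (u := u) (by omega) with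
        rfl | rfl | rfl | rfl | rfl | h
      · omega
      · simp
      · simp
      · have := ha'.dg; omega
      · have := hb'.dg; omega
      · have := h.dg; omega
  · refine (numDg_le_card {w, s} fun u hu => ?_).trans card_le_two
    rcases hT.pathBroom_cases hw hs hz ht (u := u) (by omega) with rfl | rfl | rfl | rfl | h
    · simp
    · simp
    · have := hz.dg; omega
    · omega
    · have := h.dg; omega

theorem Exceptional.exists_leafAt (h : Exceptional G) (hT : TreeLike G) (h1 : 4 ≤ numDg G 1)
    (h2 : 2 ≤ numDg G 2) : ∃ x v, LeafAt G x v ∧ 4 ≤ dg G v := by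
  rcases h with ⟨u, w, huw, h⟩ | ⟨w, a, a', b, b', ha, ha', hb, hb', hab, hw⟩ |
    ⟨w, s, z, t, hw, hs, hz, ht3, ht⟩
  · exfalso
    have hsub : univ.filter (fun x => dg G x = 2) ⊆ {u, w} := fun x hx => by
      simpa using hT.eq_of_two_le_dg h huw (by simpa using (mem_filter.1 hx).2.ge)
    have heq := eq_of_subset_of_card_le hsub (card_le_two.trans h2)
    have hu : dg G u = 2 := by
      have : u ∈ univ.filter (fun x => dg G x = 2) := heq ▸ by simp
      simpa using this
    have hw : dg G w = 2 := by
      have : w ∈ univ.filter (fun x => dg G x = 2) := heq ▸ by simp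
      simpa using this
    have := hT.numDg_one_eq_two fun x => by
      by_contra! hx
      rcases hT.eq_of_two_le_dg h huw (a := x) (by omega) with rfl | rfl <;> omega
    omega
  · have hle : numDg G 1 ≤ dg G w := by
      have hc : ((univ.filter (G.Adj w)).image
        fun u => if u = a then a' else if u = b then b' else u).card
          ≤ dg G w := card_image_le
      refine (numDg_le_card _ fun u hu => ?_).trans hc
      rw [mem_image]
      rcases hT.twoPathStar_cases ha ha' hb hb' hw (u := u) (by omega) with
        rfl | rfl | rfl | rfl | rfl | h
      · have := two_le_dg ha.left.symm hb.left.symm hab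
        omega
      · have := ha.dg; omega
      · have := hb.dg; omega
      · exact ⟨a, by simpa using ha.left.symm, by simp⟩
      · exact ⟨b, by simpa using hb.left.symm, by simp [hab.symm]⟩
      · refine ⟨u, by simpa using h.adj, ?_⟩
        have := ha.dg
        have := hb.dg
        rw [if_neg (by rintro rfl; omega), if_neg (by rintro rfl; omega)]
    obtain ⟨x, hx, hxa, hxb⟩ := exists_adj_ne_ne (w := a) (w' := b) (by omega : 3 ≤ dg G w)
    exact ⟨x, w, ((hw x hx).resolve_left hxa).resolve_left hxb, by omega⟩
  · have hle : numDg G 1 ≤ dg G t := by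
      have hc : ((univ.filter (G.Adj t)).image fun u => if u = w then z else u).card
          ≤ dg G t := card_image_le
      refine (numDg_le_card _ fun u hu => ?_).trans hc
      rw [mem_image]
      have := hw.dg
      rcases hT.pathBroom_cases hw hs hz ht (u := u) (by omega) with rfl | rfl | rfl | rfl | h
      · omega
      · have := hs.dg; omega
      · exact ⟨w, by simpa using hw.right.symm, by simp⟩
      · omega
      · exact ⟨u, by simpa using h.adj, if_neg (by rintro rfl; omega)⟩
    obtain ⟨x, hx, hxw⟩ := exists_adj_ne (w := w) (by omega : 2 ≤ dg G t)
    exact ⟨x, t, (ht x hx).resolve_left hxw, by omega⟩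

theorem LeafAt.of_isolate {x v z s : V} (hx : LeafAt G x v) (h : LeafAt (G.isolate x) z s)
    (hz : z ≠ v) : LeafAt G z s := by
  have h1 := isolate_adj.1 h.adj
  refine ⟨h1.1, fun w hw => h.eq w (isolate_adj.2 ⟨hw, h1.2.2, ?_⟩)⟩
  rintro rfl
  exact hz (hx.eq z hw.symm)

theorem Mid.of_isolate {x v a s b : V} (hx : LeafAt G x v) (h : Mid (G.isolate x) a s b)
    (hs : s ≠ v) : Mid G a s b := by
  have h1 := isolate_adj.1 h.left
  refine ⟨h1.1, (isolate_adj.1 h.right).1, h.ne,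
    fun w hw => h.eq w (isolate_adj.2 ⟨hw, h1.2.1, ?_⟩)⟩
  rintro rfl
  exact hs (hx.eq s hw.symm)

theorem isDoubleStar_of_isolate {x v : V} (hx : LeafAt G x v) (hT : TreeLike (G.isolate x))
    (hv : 2 ≤ dg (G.isolate x) v) (h : IsDoubleStar (G.isolate x)) : IsDoubleStar G := by
  obtain ⟨u, w, huw, h⟩ := h
  refine ⟨u, w, (isolate_adj.1 huw).1, fun a b hab => ?_⟩
  have hvu := hT.eq_of_two_le_dg h huw hv
  by_cases hax : a = x
  · subst hax
    have := hx.eq b hab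
    grind
  by_cases hbx : b = x
  · subst hbx
    have := hx.eq a hab.symm
    grind
  exact h a b (isolate_adj.2 ⟨hab, hax, hbx⟩)

theorem TreeLike.isDoubleStar_of_dg_le_two (hT : TreeLike G) (h : ∀ u, dg G u ≤ 2)
    (h2 : numDg G 2 ≤ 2) : IsDoubleStar G := by
  have h1 := hT.numDg_one_eq_two h
  obtain ⟨x, hx⟩ := card_pos.1 (show 0 < numDg G 1 by omega)
  obtain ⟨v, hv⟩ := exists_leafAt_of_dg (by simpa using hx)
  have hx0 : dg G x ≠ 0 := by rw [hv.dg]; omega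
  have close : ∀ u w (P : V → Prop), G.Adj u w → P x → (∀ a b, G.Adj a b → P a → P b) →
      (∀ a, P a → a = u ∨ a = w ∨ ∀ b, G.Adj a b → b = u ∨ b = w) → IsDoubleStar G :=
    fun u w P huw hPx hP hPa => ⟨u, w, huw, fun a b hab => by
      have := hT.mem_of_closed hPx hx0 hP (Nat.one_le_iff_ne_zero.1 (dg_pos hab))
      have := hPa a this
      grind⟩
  by_cases hv1 : dg G v = 1
  · have hv' := leafAt_of_dg hv.adj.symm hv1
    refine close v x (fun a => a = v ∨ a = x) hv.adj (.inr rfl) ?_ ?_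
    · rintro a b hab (rfl | rfl)
      exacts [.inr (hv'.eq b hab), .inl (hv.eq b hab)]
    · grind
  obtain ⟨w, hw⟩ := exists_mid_of_dg hv.adj.symm
    (by have := h v; have := dg_pos hv.adj; omega : dg G v = 2)
  by_cases hw1 : dg G w = 1
  · have hw' := leafAt_of_dg hw.right hw1
    refine close v w (fun a => a = x ∨ a = v ∨ a = w) hw.right (.inl rfl) ?_ ?_
    · rintro a b hab (rfl | rfl | rfl)
      · have := hv.eq b hab; grind
      · have := hw.eq b hab; grind
      · have := hw'.eq b hab; grind
    · have := hv.eq; grind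
  obtain ⟨z, hz⟩ := exists_mid_of_dg hw.right
    (by have := h w; have := dg_pos hw.right.symm; omega : dg G w = 2)
  have hz1 : dg G z = 1 := by
    by_contra hz1
    have : ({v, w, z} : Finset V) ⊆ univ.filter (fun x => dg G x = 2) := by
      intro a ha
      have := h z
      have := dg_pos hz.right.symm
      have := hw.dg
      have := hz.dg
      simp only [mem_insert, mem_singleton] at ha
      rcases ha with rfl | rfl | rfl <;> simp <;> omega
    have := card_le_card this
    rw [card_eq_three.2 ⟨v, w, z, hw.right.ne, hz.ne, hz.right.ne, rfl⟩] at this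
    exact absurd h2 (by unfold numDg; omega)
  have hz' := leafAt_of_dg hz.right hz1
  refine close v w (fun a => a = x ∨ a = v ∨ a = w ∨ a = z) hw.right (.inl rfl) ?_ ?_
  · rintro a b hab (rfl | rfl | rfl | rfl)
    · have := hv.eq b hab; grind
    · have := hw.eq b hab; grind
    · have := hz.eq b hab; grind
    · have := hz'.eq b hab; grind
  · have := hv.eq; have := hz'.eq; grind

/-- Attaching a leaf at a vertex of degree at least three does not leave the exceptional trees. -/
theorem exceptional_of_isolate {x v : V} (hx : LeafAt G x v) (hT : TreeLike (G.isolate x))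
    (hv : 3 ≤ dg (G.isolate x) v) (hdv : ∀ u, u ≠ x → dg (G.isolate x) u ≤ dg G u)
    (h : Exceptional (G.isolate x)) : Exceptional G := by
  have hxG := fun u => (isolate_adj (G := G) (x := x) (u := v) (w := u))
  rcases h with h | ⟨w, a, a', b, b', ha, ha', hb, hb', hab, hw⟩ | ⟨w, s, z, t, hw, hs, hz, ht3, ht⟩
  · exact .inl (isDoubleStar_of_isolate hx hT (by omega) h)
  · have hav : a ≠ v := by rintro rfl; have := ha.dg; omega
    have hbv : b ≠ v := by rintro rfl; have := hb.dg; omega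
    have hav' : a' ≠ v := by rintro rfl; have := ha'.dg; omega
    have hbv' : b' ≠ v := by rintro rfl; have := hb'.dg; omega
    refine .inr (.inl ⟨w, a, a', b, b', ha.of_isolate hx hav, hx.of_isolate ha' hav',
      hb.of_isolate hx hbv, hx.of_isolate hb' hbv', hab, fun u hu => ?_⟩)
    have hvw : v = w := by
      rcases hT.twoPathStar_cases ha ha' hb hb' hw (u := v) (by omega) with
        h | h | h | h | h | h
      · exact h
      · exact absurd h.symm hav
      · exact absurd h.symm hbv
      · exact absurd h.symm hav'
      · exact absurd h.symm hbv'
      · have := h.dg; omega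
    subst hvw
    by_cases hux : u = x
    · subst hux; exact .inr (.inr hx)
    · rcases hw u ((hxG u).2 ⟨hu, hx.adj.ne, hux⟩) with h | h | h
      · exact .inl h
      · exact .inr (.inl h)
      · exact .inr (.inr (hx.of_isolate h hu.ne'))
  · have hwv : w ≠ v := by rintro rfl; have := hw.dg; omega
    have hsv : s ≠ v := by rintro rfl; have := hs.dg; omega
    have hzv : z ≠ v := by rintro rfl; have := hz.dg; omega
    have htv : v = t := by
      rcases hT.pathBroom_cases hw hs hz ht (u := v) (by omega) with h | h | h | h | h
      · exact absurd h.symm hwv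
      · exact absurd h.symm hsv
      · exact absurd h.symm hzv
      · exact h
      · have := h.dg; omega
    subst htv
    refine .inr (.inr ⟨w, s, z, v, hw.of_isolate hx hwv, hs.of_isolate hx hsv,
      hx.of_isolate hz hzv, ht3.trans (hdv v hx.adj.ne), fun u hu => ?_⟩)
    by_cases hux : u = x
    · subst hux; exact .inr hx
    · rcases ht u ((hxG u).2 ⟨hu, hx.adj.ne, hux⟩) with h | h
      · exact .inl h
      · exact .inr (hx.of_isolate h hu.ne')

theorem TreeLike.good_of_exceptional_isolate (hT : TreeLike G) {x v : V} (hx : LeafAt G x v)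
    (hv : dg G v = 3) (hleaf : ∀ z u, LeafAt G z u → dg G u ≤ 3) (hG : ¬ Exceptional G)
    (h : Exceptional (G.isolate x)) : Good G (numDg G 1) := by
  have hT' := hT.isolate hx (by omega)
  have hxv := hx.adj.ne
  have hd' := dg_isolate hx
  have hdv : dg (G.isolate x) v = 2 := by rw [hd', if_neg hxv, if_pos rfl, hv]
  have hd : ∀ u, u ≠ x → u ≠ v → dg G u = dg (G.isolate x) u := fun u h1 h2 => by
    rw [hd', if_neg h1, if_neg h2]
  have hadj : ∀ {u w}, G.Adj u w → (u = x ∧ w = v) ∨ (u = v ∧ w = x) ∨ (G.isolate x).Adj u w := by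
    intro u w huw
    by_cases hu : u = x
    · subst hu; exact .inl ⟨rfl, hx.eq w huw⟩
    by_cases hw : w = x
    · subst hw; exact .inr (.inl ⟨hx.eq u huw.symm, rfl⟩)
    exact .inr (.inr (isolate_adj.2 ⟨huw, hu, hw⟩))
  have hle : ∀ {u w}, (G.isolate x).Adj u w → G.Adj u w := fun h => (isolate_adj.1 h).1
  have hnx : ∀ {u w}, (G.isolate x).Adj u w → u ≠ x := fun h => (isolate_adj.1 h).2.1
  -- a center of degree two, with `x` attached to one of its neighbors `a`
  have fork : ∀ w a a' b b', Mid (G.isolate x) w a a' → LeafAt (G.isolate x) a' a →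
      Mid (G.isolate x) w b b' → LeafAt (G.isolate x) b' b → a ≠ b →
      (∀ u, (G.isolate x).Adj w u → u = a ∨ u = b ∨ LeafAt (G.isolate x) u w) → v = a →
      Good G (numDg G 1) := by
    rintro w v a' b b' ha ha' hb hb' hab hw rfl
    have hwv := (hle ha.left).ne
    have hb1 := hb.of_isolate hx hab.symm
    have hb2 : LeafAt G b' b := hx.of_isolate hb' (by rintro rfl; have := hb'.dg; omega)
    have ha2 : LeafAt G a' v := hx.of_isolate ha' (hle ha.right).ne.symm
    have hxa : a' ≠ x := hnx ha.right.symm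
    have hvn : ∀ u, G.Adj v u → u = w ∨ u = a' ∨ u = x := fun u hu => by
      rcases hadj hu with h | h | h
      · exact absurd h.1 hxv
      · exact .inr (.inr h.2)
      · rcases ha.eq u h with h | h
        exacts [.inl h, .inr (.inl h)]
    by_cases hz : ∃ z, (G.isolate x).Adj w z ∧ z ≠ v ∧ z ≠ b
    · obtain ⟨z, hz, hza, hzb⟩ := hz
      have hzl : LeafAt G z w :=
        hx.of_isolate (((hw z hz).resolve_left hza).resolve_left hzb) hza
      have hw3 : dg G w = 3 :=
        le_antisymm (hleaf z w hzl) (three_le_dg (hle hz) (hle ha.left.symm) hb1.left.symm hza hzb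
        hab)
      have h4 := hT.dg_add_le (v := w) (w := v) (by omega) (by omega) hwv.symm
      refine (hT.good_leaf_fork_path hzl (hle ha.left) hb1 ha2 hx hb2
        (eq_of_dg_eq_three (hle hz) (hle ha.left.symm) hb1.left.symm hza hzb hab hw3) hvn
        hza hzb hab hxa ha.ne.symm ?_).mono (by omega)
      exact (hnx ha.left.symm).symm
    · refine absurd (.inr (.inr ⟨w, b, b', v, ⟨hb1.left.symm, hle ha.left.symm, hab.symm,
        fun u hu => ?_⟩, hb1, hb2, hv.ge, fun u hu => ?_⟩)) hG
      · rcases hadj hu with h | h | h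
        · exact absurd h.1 (hnx ha.left.symm)
        · exact absurd h.1 hwv.symm
        · by_contra! hne
          exact hz ⟨u, h, hne.2, hne.1⟩
      · rcases hvn u hu with h | rfl | rfl
        exacts [.inl h, .inr ha2, .inr hx]
  rcases h with h | ⟨w, a, a', b, b', ha, ha', hb, hb', hab, hw⟩ | ⟨w, s, z, t, hw, hs, hz, ht3, ht⟩
  · exact absurd (.inl (isDoubleStar_of_isolate hx hT' hdv.ge h)) hG
  · rcases hT'.twoPathStar_cases ha ha' hb hb' hw (u := v) (by omega) with
      rfl | rfl | rfl | rfl | rfl | h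
    · refine absurd (.inr (.inl ⟨v, a, a', b, b', ha.of_isolate hx (hle ha.left).ne,
        hx.of_isolate ha' ?_, hb.of_isolate hx (hle hb.left).ne, hx.of_isolate hb' ?_, hab,
        fun u hu => ?_⟩)) hG
      · exact ha.ne.symm
      · exact hb.ne.symm
      · rcases hadj hu with h | h | h
        · exact absurd h.1 hxv
        · rw [h.2]; exact .inr (.inr hx)
        · rcases hw u h with h | h | h
          exacts [.inl h, .inr (.inl h), .inr (.inr (hx.of_isolate h hu.ne'))]
    · exact fork _ _ _ _ _ ha ha' hb hb' hab hw rfl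
    · exact fork _ _ _ _ _ hb hb' ha ha' hab.symm
        (fun u hu => by have := hw u hu; grind) rfl
    · have := ha'.dg; omega
    · have := hb'.dg; omega
    · have := h.dg; omega
  · have htv : t ≠ v := by rintro rfl; omega
    have htw := (hle hw.right).ne
    have htx : t ≠ x := hnx hw.right.symm
    have hdt := hd t htx htv
    have hsx := hnx hs.left
    have hzx := hnx hs.right.symm
    obtain ⟨l₁, hl₁, hl₁w⟩ := exists_adj_ne (w := w) (by omega : 2 ≤ dg (G.isolate x) t)
    obtain ⟨l₂, hl₂, hl₂w, hl₂₁⟩ := exists_adj_ne_ne (w := w) (w' := l₁) ht3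
    have hl : ∀ l, (G.isolate x).Adj t l → l ≠ w → LeafAt G l t := fun l h h' => by
      have h1 := (ht l h).resolve_left h'
      exact hx.of_isolate h1 (by rintro rfl; have := h1.dg; omega)
    have h₁ := hl _ hl₁ hl₁w
    have h₂ := hl _ hl₂ hl₂w
    have ht' : dg G t = 3 := le_antisymm (hleaf l₁ t h₁) (by omega)
    have htn := eq_of_dg_eq_three (hle hw.right.symm) (hle hl₁) (hle hl₂) hl₁w.symm hl₂w.symm
      hl₂₁.symm ht'
    have h4 := hT.dg_add_le (v := t) (w := v) (by omega) (by omega) htv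
    rcases hT'.pathBroom_cases hw hs hz ht (u := v) (by omega) with rfl | rfl | rfl | rfl | h
    · refine (hT.good_leaf_fork_path hx (hle hw.right.symm)
        (hs.of_isolate hx (hle hs.left).ne) h₁ h₂ (hx.of_isolate hz hs.ne.symm)
        (fun u hu => ?_) htn htx.symm hsx.symm hw.ne.symm hl₂₁.symm hl₁w hl₂w).mono (by omega)
      rcases hadj hu with h | h | h
      · exact absurd h.1 hxv
      · exact .inl h.2
      · rcases hw.eq u h with h | h
        exacts [.inr (.inr h), .inr (.inl h)]
    · refine (hT.good_two_forks (hw.of_isolate hx (hle hw.left).ne)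
        (hx.of_isolate hz (hle hs.right).ne.symm) hx h₁ h₂ (fun u hu => ?_) htn hzx hl₂₁.symm
        hs.ne.symm (hnx hw.left).symm hl₁w hl₂w).mono (by omega)
      rcases hadj hu with h | h | h
      · exact absurd h.1 hxv
      · exact .inr (.inr h.2)
      · rcases hs.eq u h with h | h
        exacts [.inl h, .inr (.inl h)]
    · have := hz.dg; omega
    · omega
    · have := h.dg; omega

/-- The induction step for trees with at least two more leaves than vertices of degree two. -/
theorem TreeLike.good_of_add_two_le (hT : TreeLike G) (hG : ¬ Exceptional G)
    (h2 : numDg G 2 + 2 ≤ numDg G 1)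
    (ih : ∀ G' : SimpleGraph V, TreeLike G' → supp G' < supp G → numDg G' 2 ≤ numDg G' 1 →
      ¬ Exceptional G' → Good G' (numDg G' 1)) : Good G (numDg G 1) := by
  have hub : ∃ v, 3 ≤ dg G v := by
    by_contra! hcon
    have := hT.numDg_one_eq_two fun u => by have := hcon u; omega
    exact hG (.inl (hT.isDoubleStar_of_dg_le_two (fun u => by have := hcon u; omega) (by omega)))
  have step : ∀ x v, LeafAt G x v → 3 ≤ dg G v → ¬ Exceptional (G.isolate x) →
      Good G (numDg G 1) := by
    intro x v hx hv hE
    have n1 := numDg_isolate hx 1 (by omega)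
    have n2 := numDg_isolate hx 2 (by omega)
    have hs := supp_isolate hx (by omega)
    rw [if_pos rfl, if_neg (by omega), if_neg (by omega)] at n1
    rw [if_neg (by omega), if_neg (by omega)] at n2
    have := (ih _ (hT.isolate hx (by omega)) (by omega) (by split_ifs at n2 <;> omega)
      hE).addLeaf hx (by omega)
    rwa [show numDg (G.isolate x) 1 + 1 = numDg G 1 by omega] at this
  by_cases h4 : ∃ x v, LeafAt G x v ∧ 4 ≤ dg G v
  · obtain ⟨x, v, hx, hv⟩ := h4
    refine step x v hx (by omega) fun hE => hG (exceptional_of_isolate hx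
      (hT.isolate hx (by omega)) ?_ (fun u hu => ?_) hE)
    · rw [dg_isolate hx, if_neg hx.adj.ne, if_pos rfl]; omega
    · rw [dg_isolate hx, if_neg hu]; split_ifs with h
      · subst h; omega
      · exact le_rfl
  push Not at h4
  obtain ⟨v₀, hv₀⟩ := hub
  obtain ⟨x, v, hx, hv⟩ := hT.exists_leafAt_hub hv₀ (by omega)
  have hv3 : dg G v = 3 := by have := h4 x v hx; omega
  by_cases hE : Exceptional (G.isolate x)
  · exact hT.good_of_exceptional_isolate hx hv3 (fun z u h => by have := h4 z u h; omega) hG hE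
  · exact step x v hx hv hE

theorem TreeLike.isolate_counts (hT : TreeLike G) {x v : V} (hx : LeafAt G x v) (hv : 2 ≤ dg G v) :
    TreeLike (G.isolate x) ∧ supp (G.isolate x) + 1 = supp G ∧
      numDg (G.isolate x) 1 + 1 = numDg G 1 + (if dg G v = 2 then 1 else 0) ∧
      numDg (G.isolate x) 2 + (if dg G v = 2 then 1 else 0) =
        numDg G 2 + (if dg G v = 3 then 1 else 0) := by
  have n1 := numDg_isolate hx 1 (by omega)
  have n2 := numDg_isolate hx 2 (by omega)
  refine ⟨hT.isolate hx hv, supp_isolate hx hv, ?_, ?_⟩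
  · simp only [show dg G v - 1 = 1 ↔ dg G v = 2 by omega, show dg G v ≠ 1 by omega, if_true,
      if_false] at n1
    omega
  · simp only [show dg G v - 1 = 2 ↔ dg G v = 3 by omega, show ¬ (1 = 2) by omega, if_false] at n2
    omega

theorem TreeLike.suppress_counts (hT : TreeLike G) {a s b : V} (hs : Mid G a s b) :
    TreeLike (G.suppress a s b) ∧ supp (G.suppress a s b) + 1 = supp G ∧
      numDg (G.suppress a s b) 1 = numDg G 1 ∧ numDg (G.suppress a s b) 2 + 1 = numDg G 2 := by
  have hab := hT.not_adj hs
  exact ⟨hT.suppress hs, supp_suppress hs hab, numDg_suppress hs hab 1 (by omega),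
    numDg_suppress hs hab 2 (by omega)⟩

theorem leafAt_isolate_of_mid {w s s' : V} (hs : Mid G w s s') (hs' : LeafAt G s' s) :
    LeafAt (G.isolate s') s w := by
  refine ⟨isolate_adj.2 ⟨hs.left.symm, hs.ne, hs.right.ne⟩, fun u hu => ?_⟩
  have := isolate_adj.1 hu
  exact (hs.eq u this.1).resolve_right this.2.2

/-- The effect of deleting a pendant path of length two. -/
theorem TreeLike.pendantPath_counts (hT : TreeLike G) {w s s' : V} (hs : Mid G w s s')
    (hs' : LeafAt G s' s) (hw : 3 ≤ dg G w) :
    TreeLike ((G.isolate s').isolate s) ∧ supp ((G.isolate s').isolate s) + 2 = supp G ∧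
      numDg ((G.isolate s').isolate s) 1 + 1 = numDg G 1 ∧
      numDg ((G.isolate s').isolate s) 2 + 1 = numDg G 2 + (if dg G w = 3 then 1 else 0) ∧
      ∀ u, dg ((G.isolate s').isolate s) u =
        if u = s ∨ u = s' then 0 else if u = w then dg G w - 1 else dg G u := by
  have hd := hs.dg
  have hw' : dg (G.isolate s') w = dg G w := by
    rw [dg_isolate hs', if_neg hs.ne, if_neg hs.left.ne.symm]
  have hl := leafAt_isolate_of_mid hs hs'
  obtain ⟨t1, s1, n1, m1⟩ := hT.isolate_counts hs' (by omega)
  obtain ⟨t2, s2, n2, m2⟩ := t1.isolate_counts hl (by omega)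
  rw [hw'] at n2 m2
  rw [if_neg (by omega)] at n2 m2
  rw [if_pos hd] at n1 m1
  rw [if_neg (by omega)] at m1
  refine ⟨t2, by omega, by omega, by omega, fun u => ?_⟩
  rw [dg_isolate hl, hw', dg_isolate hs']
  by_cases h1 : u = s
  · simp [h1]
  by_cases h2 : u = w
  · subst h2; simp [h1, hs.ne]
  · simp [h1, h2]

/-- A pendant vertex of degree two next to another vertex of degree at least two. -/
theorem TreeLike.exists_mid_of_pendant (hT : TreeLike G) {v s s' : V} (hv : 3 ≤ dg G v)
    (hs : dg G s = 2) (hs' : LeafAt G s' s) : ∃ w, Mid G w s s' ∧ 2 ≤ dg G w := by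
  obtain ⟨w, hw⟩ := exists_mid_of_dg hs'.adj.symm hs
  refine ⟨w, hw.symm, ?_⟩
  by_contra! hlt
  have hw' := leafAt_of_dg hw.right (by have := dg_pos hw.right.symm; omega)
  have := hT.mem_of_closed (P := fun u => u = s ∨ u = s' ∨ u = w) (v := s) (.inl rfl) (by omega)
    (by
      rintro a b hab (rfl | rfl | rfl)
      · have := hw.eq b hab; grind
      · have := hs'.eq b hab; grind
      · have := hw'.eq b hab; grind) (u := v) (by omega)
  have h1 := hs'.dg
  have h2 := hw'.dg
  rcases this with rfl | rfl | rfl <;> omega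

/-- The induction hypothesis on trees that cannot be exceptional. -/
def SmallerGood (G : SimpleGraph V) : Prop :=
  ∀ G' : SimpleGraph V, TreeLike G' → supp G' < supp G → 3 ≤ numDg G' 2 →
    numDg G' 2 ≤ numDg G' 1 → Good G' (numDg G' 1)

theorem SmallerGood.of_forall (ih : ∀ G' : SimpleGraph V, TreeLike G' → supp G' < supp G →
    numDg G' 2 ≤ numDg G' 1 → ¬ Exceptional G' → Good G' (numDg G' 1)) : SmallerGood G :=
  fun G' hT hs h3 h => ih G' hT hs h fun hE => by
    have := hE.numDg_two_le hT (by omega)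
    omega

theorem TreeLike.good_of_addLeaf (hT : TreeLike G) (ih : SmallerGood G) {x v : V}
    (hx : LeafAt G x v) (hv : 4 ≤ dg G v) (h3 : 3 ≤ numDg G 2) (h : numDg G 2 < numDg G 1) :
    Good G (numDg G 1) := by
  obtain ⟨t, s, n, m⟩ := hT.isolate_counts hx (by omega)
  rw [if_neg (by omega)] at n m
  rw [if_neg (by omega)] at m
  have := (ih _ t (by omega) (by omega) (by omega)).addLeaf hx (by omega)
  rwa [n] at this

theorem exists_pendant_ne {k : ℕ} (h : k < numPendant G) (A : Finset V) (hA : A.card ≤ k) :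
    ∃ s ∉ A, dg G s = 2 ∧ ∃ s', LeafAt G s' s := by
  obtain ⟨s, hs, hsA⟩ := exists_mem_notMem_of_card_lt_card (lt_of_le_of_lt hA h)
  exact ⟨s, hsA, by simpa using hs⟩

theorem TreeLike.good_of_pendantPath (hT : TreeLike G) (ih : SmallerGood G) {w s s' y y' : V}
    (hs : Mid G w s s') (hs' : LeafAt G s' s) (hw : 3 ≤ dg G w) (hy : dg G y = 2)
    (hy' : LeafAt G y' y) (hys : y ≠ s)
    (h3 : 4 ≤ numDg G 2 + (if dg G w = 3 then 1 else 0))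
    (hle : numDg G 2 + (if dg G w = 3 then 1 else 0) ≤ numDg G 1) : Good G (numDg G 1) := by
  obtain ⟨g, hg, -⟩ := hT.exists_mid_of_pendant hw hy hy'
  obtain ⟨t, h1, h2, h4, -⟩ := hT.pendantPath_counts hs hs' hw
  have := Good.op_pendantPath hs hs' hw hg hy' hys (ih _ t (by omega) (by omega) (by omega))
  rwa [h2] at this

/-- The induction step for trees with exactly one more leaf than vertices of degree two. -/
theorem TreeLike.good_of_add_one_eq (hT : TreeLike G) (h2 : numDg G 2 + 1 = numDg G 1)
    (h4 : 4 ≤ numDg G 1)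
    (ih : ∀ G' : SimpleGraph V, TreeLike G' → supp G' < supp G → numDg G' 2 ≤ numDg G' 1 →
      ¬ Exceptional G' → Good G' (numDg G' 1)) : Good G (numDg G 1) := by
  have ih' := SmallerGood.of_forall ih
  by_cases hL : ∃ x v, LeafAt G x v ∧ 4 ≤ dg G v
  · obtain ⟨x, v, hx, hv⟩ := hL
    exact hT.good_of_addLeaf ih' hx hv (by omega) (by omega)
  by_cases hA : ∃ a s, G.Adj a s ∧ dg G a = 2 ∧ dg G s = 2
  · obtain ⟨a, s, has, ha, hs⟩ := hA
    obtain ⟨b, hb⟩ := exists_mid_of_dg has hs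
    have hab := hT.not_adj hb
    obtain ⟨t, s1, n1, n2⟩ := hT.suppress_counts hb
    have := Good.op_subdivide hb hab ha (k := numDg G 1) (.inl (by omega)) (by
      rw [← n1]
      refine ih _ t (by omega) (by omega) fun hE => ?_
      have h3 := hE.numDg_two_le t (by omega)
      obtain ⟨x, v, hx, hv⟩ := hE.exists_leafAt t (by omega) (by omega)
      have h5 := dg_suppress hb hab v
      have h6 := dg_suppress hb hab x
      rw [hx.dg] at h6
      have hvs : v ≠ s := by rintro rfl; rw [if_pos rfl] at h5; omega
      have hxs : x ≠ s := by rintro rfl; rw [if_pos rfl] at h6; omega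
      rw [if_neg hvs] at h5
      rw [if_neg hxs] at h6
      refine hL ⟨x, v, leafAt_of_dg ?_ h6.symm, by omega⟩
      rcases suppress_adj.1 hx.adj with h | ⟨⟨rfl, -⟩ | ⟨-, rfl⟩, -⟩
      · exact h.1
      · omega
      · omega)
    exact this
  push Not at hL hA
  have hub : ∃ v, 3 ≤ dg G v := by
    by_contra! hcon
    have := hT.numDg_one_eq_two fun u => by have := hcon u; omega
    omega
  obtain ⟨v₀, hv₀⟩ := hub
  obtain ⟨x, v, hx, hv⟩ := hT.exists_leafAt_hub hv₀ (by omega)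
  have hv3 := hL x v hx
  have hb := hT.numDg_two_le hv₀ hA
  obtain ⟨s, -, hs, s', hs'⟩ := exists_pendant_ne (G := G) (k := 0) (by omega) (∅ : Finset V)
    (by simp)
  obtain ⟨y, hys, hy, y', hy'⟩ := exists_pendant_ne (G := G) (k := 1) (by omega)
    ({s} : Finset V) (by simp)
  obtain ⟨w, hw, hw2⟩ := hT.exists_mid_of_pendant hv₀ hs hs'
  have hw3 : dg G w ≠ 2 := fun h => hA w s hw.left.symm h hs
  refine hT.good_of_pendantPath ih' hw hs' (by omega) hy hy' (by simpa using hys) ?_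
    (by split_ifs <;> omega)
  split_ifs with h
  · omega
  · have := hT.dg_add_le (v := v) (w := w) (by omega) (by omega) (by rintro rfl; omega)
    omega

theorem Mid.isolate {x v a s b : V} (hx : LeafAt G x v) (hs : Mid G a s b) (hsv : s ≠ v) :
    Mid (G.isolate x) a s b := by
  have hsx : s ≠ x := by rintro rfl; have := hs.dg; have := hx.dg; omega
  exact ⟨isolate_adj.2 ⟨hs.left, hsx, by rintro rfl; exact hsv (hx.eq s hs.left.symm)⟩,
    isolate_adj.2 ⟨hs.right, hsx, by rintro rfl; exact hsv (hx.eq s hs.right.symm)⟩, hs.ne,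
    fun w hw => hs.eq w (isolate_adj.1 hw).1⟩

theorem LeafAt.isolate {x v y u : V} (hx : LeafAt G x v) (hy : LeafAt G y u) (hyx : y ≠ x)
    (hyv : y ≠ v) : LeafAt (G.isolate x) y u :=
  ⟨isolate_adj.2 ⟨hy.adj, by rintro rfl; exact hyv (hx.eq y hy.adj), hyx⟩,
    fun w hw => hy.eq w (isolate_adj.1 hw).1⟩

theorem Mid.suppress {a s b x y z : V} (hs : Mid G a s b) (hm : Mid G x y z) (hys : y ≠ s)
    (hya : y ≠ a) (hyb : y ≠ b) : Mid (G.suppress a s b) x y z := by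
  have hn : ∀ w, G.Adj y w → w ≠ s := by
    rintro w hw rfl
    rcases hs.eq y hw.symm with h | h
    exacts [hya h, hyb h]
  refine ⟨suppress_adj.2 (.inl ⟨hm.left, hys, hn _ hm.left⟩),
    suppress_adj.2 (.inl ⟨hm.right, hys, hn _ hm.right⟩), hm.ne, fun w hw => ?_⟩
  rcases suppress_adj.1 hw with h | ⟨⟨h, -⟩ | ⟨h, -⟩, -⟩
  exacts [hm.eq w h.1, absurd h hya, absurd h hyb]

theorem TreeLike.good_of_leafSubdivide (hT : TreeLike G) (ih : SmallerGood G)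
    (h2 : numDg G 2 = numDg G 1) (h4 : 4 ≤ numDg G 1) {x v a s b : V} (hx : LeafAt G x v)
    (hv : 4 ≤ dg G v) (hs : Mid G a s b) (ha : 2 ≤ dg G a) (hav : dg G a ≠ dg G v) :
    Good G (numDg G 1) := by
  have hsv : s ≠ v := by rintro rfl; have := hs.dg; omega
  obtain ⟨t, s1, n, m⟩ := hT.isolate_counts hx (by omega)
  obtain ⟨t', s2, n', m'⟩ := t.suppress_counts (hs.isolate hx hsv)
  rw [if_neg (by omega)] at n m
  rw [if_neg (by omega)] at m
  have := Good.op_leafSubdivide hx hs (hT.not_adj hs) (by omega) ha hav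
    (ih _ t' (by omega) (by omega) (by omega))
  rwa [n', n] at this

theorem TreeLike.good_of_leaf (hT : TreeLike G) (ih : SmallerGood G)
    (h2 : numDg G 2 = numDg G 1) (h4 : 4 ≤ numDg G 1) {x v : V} (hx : LeafAt G x v)
    (hv : 4 ≤ dg G v) : Good G (numDg G 1) := by
  by_cases hA : ∃ a s, G.Adj a s ∧ dg G a = 2 ∧ dg G s = 2
  · obtain ⟨a, s, has, ha, hs⟩ := hA
    obtain ⟨b, hb⟩ := exists_mid_of_dg has hs
    exact hT.good_of_leafSubdivide ih h2 h4 hx hv hb ha.ge (by omega)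
  push Not at hA
  have hb := hT.numDg_two_le (v := v) (by omega) hA
  obtain ⟨s, -, hs, s', hs'⟩ := exists_pendant_ne (G := G) (k := 0) (by omega) ∅ (by simp)
  obtain ⟨y, hys, hy, y', hy'⟩ := exists_pendant_ne (G := G) (k := 1) (by omega) {s} (by simp)
  obtain ⟨w, hw, hw2⟩ := hT.exists_mid_of_pendant (v := v) (by omega) hs hs'
  have hw3 : dg G w ≠ 2 := fun h => hA w s hw.left.symm h hs
  by_cases hw4 : dg G w = 3
  · exact hT.good_of_leafSubdivide ih h2 h4 hx hv hw hw2 (by omega)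
  · exact hT.good_of_pendantPath ih hw hs' (by omega) hy hy' (by simpa using hys)
      (by rw [if_neg hw4]; omega) (by rw [if_neg hw4]; omega)

theorem TreeLike.good_of_siblingPath (hT : TreeLike G) (ih : SmallerGood G)
    (h2 : numDg G 2 = numDg G 1) (h4 : 4 ≤ numDg G 1) {v s s' r z : V} (hv : 3 ≤ dg G v)
    (hs : Mid G v s s') (hs' : LeafAt G s' s) (hr : Mid G v r z) (hrs : r ≠ s) :
    Good G (numDg G 1) := by
  obtain ⟨t, s1, n, m, -⟩ := hT.pendantPath_counts hs hs' hv
  by_cases hv3 : dg G v = 3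
  · rw [if_pos hv3] at m
    have hm : Mid ((G.isolate s').isolate s) v r z :=
      (hr.isolate hs' hrs).isolate (leafAt_isolate_of_mid hs hs') hr.left.ne
    obtain ⟨t', s2, n', m'⟩ := t.suppress_counts hm
    have := Good.op_pathSubdivide hT hs hs' hr hrs hv3 (by omega)
      (ih _ t' (by omega) (by omega) (by omega))
    rwa [n', n] at this
  · rw [if_neg hv3] at m
    have := Good.op_siblingPath hs hs' hv hr hrs (ih _ t (by omega) (by omega) (by omega))
    rwa [n] at this

theorem TreeLike.good_of_siblingThreePath (hT : TreeLike G) (ih : SmallerGood G)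
    (h2 : numDg G 2 = numDg G 1) (h4 : 4 ≤ numDg G 1) {v r₁ r₂ r₃ s u : V} (hv : 3 ≤ dg G v)
    (hr₁ : Mid G v r₁ r₂) (hr₂ : Mid G r₁ r₂ r₃) (hr₃ : LeafAt G r₃ r₂) (hs : Mid G v s u)
    (hne : s ≠ r₁) (hu : dg G v = 3 ∨ dg G u = 2 ∧ 5 ≤ numDg G 1) : Good G (numDg G 1) := by
  have d1 := hr₁.dg
  have d2 := hr₂.dg
  have d3 := hr₃.dg
  have hdv : dg (G.isolate r₃) v = dg G v := by
    rw [dg_isolate hr₃, if_neg (by rintro rfl; omega), if_neg hr₁.ne]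
  obtain ⟨t, s1, n, m⟩ := hT.isolate_counts hr₃ (by omega)
  rw [if_pos d2] at n m
  rw [if_neg (by omega)] at m
  obtain ⟨t', s2, n', m', -⟩ := t.pendantPath_counts (hr₁.isolate hr₃ hr₂.left.ne.symm)
    (leafAt_isolate_of_mid hr₂ hr₃) (by omega)
  rw [hdv] at m'
  have : Good G (numDg ((((G.isolate r₃).isolate r₂).isolate r₁)) 1 + 1) := by
    by_cases hv3 : dg G v = 3
    · rw [if_pos hv3] at m'
      exact Good.op_siblingThreePath hr₁ hr₂ hr₃ hs hne hv (.inl hv3)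
        (ih _ t' (by omega) (by omega) (by omega))
    · rw [if_neg hv3] at m'
      have hu := hu.resolve_left hv3
      exact Good.op_siblingThreePath hr₁ hr₂ hr₃ hs hne hv (.inr ⟨hu.1, by omega⟩)
        (ih _ t' (by omega) (by omega) (by omega))
  rwa [n', show numDg (G.isolate r₃) 1 = numDg G 1 by omega] at this

theorem TreeLike.good_of_longPaths (hT : TreeLike G) (ih : SmallerGood G)
    (h2 : numDg G 2 = numDg G 1) (h4 : 4 ≤ numDg G 1) {v r₁ r₂ r₃ r₄ u₁ u₂ u₃ : V}
    (hr₁ : Mid G v r₁ r₂) (hr₂ : Mid G r₁ r₂ r₃) (hr₃ : Mid G r₂ r₃ r₄) (hu₁ : dg G u₁ = 2)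
    (hu₂ : Mid G u₁ u₂ u₃) (hne : ∀ r ∈ [r₁, r₂, r₃], r ≠ u₁ ∧ r ≠ u₂ ∧ r ≠ u₃) :
    Good G (numDg G 1) := by
  simp only [List.forall_mem_cons, List.not_mem_nil, false_imp_iff, implies_true, and_true] at hne
  obtain ⟨⟨h11, h12, h13⟩, ⟨h21, h22, h23⟩, ⟨h31, h32, h33⟩⟩ := hne
  obtain ⟨t, s1, n, m⟩ := hT.suppress_counts hu₂
  refine Good.op_subdivide hu₂ (hT.not_adj hu₂) hu₁ (.inr ⟨by omega, v, r₁, r₂, r₃, r₄,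
    hu₂.suppress hr₁ h12 h11 h13, hu₂.suppress hr₂ h22 h21 h23, hu₂.suppress hr₃ h32 h31 h33,
    h11, h21, h31⟩) ?_
  rw [← n]
  exact ih _ t (by omega) (by omega) (by omega)

theorem TreeLike.isolate_twoLeaves_counts (hT : TreeLike G) {x₁ x₂ v : V} (h₁ : LeafAt G x₁ v)
    (h₂ : LeafAt G x₂ v) (h12 : x₁ ≠ x₂) (hv : dg G v = 3) :
    TreeLike ((G.isolate x₁).isolate x₂) ∧ supp ((G.isolate x₁).isolate x₂) + 2 = supp G ∧
      numDg ((G.isolate x₁).isolate x₂) 1 + 1 = numDg G 1 ∧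
      numDg ((G.isolate x₁).isolate x₂) 2 = numDg G 2 := by
  have hl : LeafAt (G.isolate x₁) x₂ v := h₁.isolate h₂ h12.symm h₂.adj.ne.symm
  have hd : dg (G.isolate x₁) v = 2 := by rw [dg_isolate h₁, if_neg h₁.adj.ne, if_pos rfl, hv]
  obtain ⟨t, s1, n, m⟩ := hT.isolate_counts h₁ (by omega)
  obtain ⟨t', s2, n', m'⟩ := t.isolate_counts hl (by omega)
  rw [if_neg (by omega)] at n m
  rw [if_pos hv] at m
  rw [if_pos hd] at n' m'
  rw [if_neg (by omega)] at m'
  exact ⟨t', by omega, by omega, by omega⟩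

theorem TreeLike.good_of_twoLeaves (hT : TreeLike G) (ih : SmallerGood G)
    (h2 : numDg G 2 = numDg G 1) (h4 : 4 ≤ numDg G 1) {x₁ x₂ v p q : V} (h₁ : LeafAt G x₁ v)
    (h₂ : LeafAt G x₂ v) (h12 : x₁ ≠ x₂) (hp : Mid G v p q)
    (hv : ∀ w, G.Adj v w → w = x₁ ∨ w = x₂ ∨ w = p) (hv3 : dg G v = 3) (hq : 2 ≤ dg G q) :
    Good G (numDg G 1) := by
  obtain ⟨t, s1, n, m⟩ := hT.isolate_twoLeaves_counts h₁ h₂ h12 hv3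
  have hl : LeafAt (G.isolate x₁) x₂ v := h₁.isolate h₂ h12.symm h₂.adj.ne.symm
  have hp' := (hp.isolate h₁ hp.left.ne).isolate hl hp.left.ne
  have hlv : LeafAt ((G.isolate x₁).isolate x₂) v p := by
    refine ⟨hp'.left, fun w hw => ?_⟩
    have e1 := isolate_adj.1 hw
    have e2 := isolate_adj.1 e1.1
    exact ((hv w e2.1).resolve_left e2.2.2).resolve_left e1.2.2
  obtain ⟨t', s2, n', m'⟩ := t.isolate_counts hlv hp'.dg.ge
  have := hp'.dg
  rw [if_pos this] at n' m'
  rw [if_neg (by omega)] at m'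
  have := Good.op_twoLeaves h₁ h₂ h12 hp hv hq (by omega)
    (ih _ t' (by omega) (by omega) (by omega))
  rwa [show numDg (((G.isolate x₁).isolate x₂).isolate v) 1 + 1 = numDg G 1 by omega] at this

theorem TreeLike.good_of_twoLeavesSubdivide (hT : TreeLike G) (ih : SmallerGood G)
    (h2 : numDg G 2 = numDg G 1) (h4 : 4 ≤ numDg G 1) {x₁ x₂ v p : V} (h₁ : LeafAt G x₁ v)
    (h₂ : LeafAt G x₂ v) (h12 : x₁ ≠ x₂) (hp : G.Adj v p) (hv3 : dg G v = 3) (hp3 : 3 ≤ dg G p) :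
    Good G (numDg G 1) := by
  obtain ⟨t, s1, n, m⟩ := hT.isolate_twoLeaves_counts h₁ h₂ h12 hv3
  have hl : LeafAt (G.isolate x₁) x₂ v := h₁.isolate h₂ h12.symm h₂.adj.ne.symm
  have counts : ∀ {a s b}, Mid G a s b →
      Good (((G.isolate x₁).isolate x₂).suppress a s b) (numDg G 1 - 1) := by
    intro a s b hs
    have hsv : s ≠ v := by rintro rfl; have := hs.dg; omega
    obtain ⟨t', s2, n', m'⟩ := t.suppress_counts ((hs.isolate h₁ hsv).isolate hl hsv)
    rw [show numDg G 1 - 1 = numDg (((G.isolate x₁).isolate x₂).suppress a s b) 1 by omega]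
    exact ih _ t' (by omega) (by omega) (by omega)
  rw [show numDg G 1 = numDg G 1 - 1 + 1 by omega]
  by_cases hb : ∃ s s', dg G s = 2 ∧ LeafAt G s' s
  · obtain ⟨s, s', hs, hs'⟩ := hb
    obtain ⟨w, hw, -⟩ := hT.exists_mid_of_pendant hp3 hs hs'
    exact Good.op_twoLeavesSubdivide h₁ h₂ h12 hp hv3 hp3 hw hs' (counts hw.symm)
  push Not at hb
  have hA : ∃ a s, G.Adj a s ∧ dg G a = 2 ∧ dg G s = 2 := by
    by_contra! hA
    have h := hT.numDg_two_le hp3 hA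
    have : numPendant G = 0 :=
      card_eq_zero.2 (filter_eq_empty_iff.2 fun s _ h => h.2.elim fun x hx => hb s x h.1 hx)
    omega
  obtain ⟨a, s, has, ha, hs⟩ := hA
  obtain ⟨b, hm⟩ := exists_mid_of_dg has hs
  obtain ⟨h, par, hR⟩ := hT.exists_rooted (v := v) (by omega)
  -- a highest vertex of degree two, with its child, and a highest branch vertex
  obtain ⟨σ, hσ, hσmax⟩ := exists_max_image (univ.filter fun u => dg G u = 2) h
    ⟨a, by simpa using ha⟩
  have hσ2 : dg G σ = 2 := by simpa using hσ
  have hσv : σ ≠ v := by rintro rfl; omega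
  have hσp := hR.par σ (by omega) hσv
  obtain ⟨τ, hτ, hτp⟩ := exists_adj_ne (w := par σ) hσ2.ge
  have hτh : h τ = h σ + 1 := ((hR.adj σ τ hτ).resolve_right fun h => hτp h.2.symm).1
  have hτ3 : 3 ≤ dg G τ := by
    have h1 : dg G τ ≠ 2 := fun e => by
      have := hσmax τ (by simpa using e)
      omega
    have h2 : dg G τ ≠ 1 := fun e => hb σ τ hσ2 (leafAt_of_dg hτ e)
    have := dg_pos hτ.symm
    omega
  obtain ⟨y, hy, hymax⟩ := exists_max_image (univ.filter fun u => 3 ≤ dg G u) h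
    ⟨τ, by simpa using hτ3⟩
  have hy3 : 3 ≤ dg G y := by simpa using hy
  have hyτ := hymax τ (by simpa using hτ3)
  have hyv : y ≠ v := by rintro rfl; rw [hR.root] at hyτ; omega
  have hyp : y ≠ p := by
    rintro rfl
    have h1 := hR.root
    rcases hR.adj _ _ hp with h | h <;> omega
  have leaf : ∀ z, G.Adj y z → z ≠ par y → LeafAt G z y := fun z hz hzp => by
    have hzh : h z = h y + 1 := ((hR.adj y z hz).resolve_right fun h => hzp h.2.symm).1
    refine leafAt_of_dg hz ?_
    have h1 : dg G z ≠ 2 := fun e => by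
      have := hσmax z (by simpa using e)
      omega
    have h2 : ¬ 3 ≤ dg G z := fun e => by
      have := hymax z (by simpa using e)
      omega
    have := dg_pos hz.symm
    omega
  obtain ⟨y₁, hy₁, hy₁p⟩ := exists_adj_ne (w := par y) (by omega : 2 ≤ dg G y)
  obtain ⟨y₂, hy₂, hy₂p, hy₂₁⟩ := exists_adj_ne_ne (w := par y) (w' := y₁) hy3
  exact Good.op_twoLeavesSubdivideInner hT h₁ h₂ h12 hp hv3 hp3 hm ha (leaf _ hy₁ hy₁p)
    (leaf _ hy₂ hy₂p) hy₂₁.symm hy3 hyp hyv (counts hm)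

theorem TreeLike.good_of_leafPath (hT : TreeLike G) (ih : SmallerGood G)
    (h2 : numDg G 2 = numDg G 1) (h4 : 4 ≤ numDg G 1) {x v s s' p : V} (hx : LeafAt G x v)
    (hs : Mid G v s s') (hs' : LeafAt G s' s) (hp : G.Adj v p) (hv : dg G v = 3) (hps : p ≠ s)
    (hp2 : 2 ≤ dg G p) : Good G (numDg G 1) := by
  have d1 := hs.dg
  have d2 := hx.dg
  obtain ⟨t, s1, n, m⟩ := hT.isolate_counts hx (by omega)
  rw [if_neg (by omega)] at n m
  rw [if_pos hv] at m
  have hsm := hs.isolate hx hs.left.ne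
  have hsl := hx.isolate hs' (by rintro rfl; exact hs.left.ne (hx.eq s hs'.adj.symm)) hs.ne.symm
  obtain ⟨t', s2, n', m'⟩ := t.isolate_counts hsl hsm.dg.ge
  have e1 := hsm.dg
  rw [if_pos e1] at n' m'
  rw [if_neg (by omega)] at m'
  have e2 : dg ((G.isolate x).isolate s') v = 2 := by
    rw [dg_isolate hsl, if_neg hs.ne, if_neg hs.left.ne.symm, dg_isolate hx, if_neg hx.adj.ne,
      if_pos rfl, hv]
  obtain ⟨t'', s3, n'', m''⟩ := t'.isolate_counts (leafAt_isolate_of_mid hsm hsl) e2.ge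
  rw [if_pos e2] at n'' m''
  rw [if_neg (by omega)] at m''
  have := Good.op_leafPath hx hs hs' hp hv hps hp2 (by omega)
    (ih _ t'' (by omega) (by omega) (by omega))
  rwa [show numDg (((G.isolate x).isolate s').isolate s) 1 + 1 = numDg G 1 by omega] at this

theorem TreeLike.good_of_leafSubdivideTwice (hT : TreeLike G) (ih : SmallerGood G)
    (h2 : numDg G 2 = numDg G 1) (h4 : 4 ≤ numDg G 1) {x v s₁ s₂ s₃ : V} (hx : LeafAt G x v)
    (hm₁ : Mid G v s₁ s₂) (hm₂ : Mid G s₁ s₂ s₃) (hv : dg G v = 3) : Good G (numDg G 1) := by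
  obtain ⟨t, s1, n, m⟩ := hT.isolate_counts hx (by omega)
  rw [if_neg (by omega)] at n m
  rw [if_pos hv] at m
  have e1 := hm₁.isolate hx hm₁.left.ne
  have e2 := hm₂.isolate hx hm₁.ne.symm
  obtain ⟨t', s2, n', m'⟩ := t.suppress_counts e1
  have hvs₃ : v ≠ s₃ := by
    rintro rfl
    exact hT.not_adj hm₁ hm₂.right.symm
  have e3 : Mid ((G.isolate x).suppress v s₁ s₂) v s₂ s₃ := by
    refine ⟨suppress_adj.2 (.inr ⟨.inr ⟨rfl, rfl⟩, hm₁.ne.symm⟩),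
      suppress_adj.2 (.inl ⟨e2.right, hm₂.left.ne, hm₂.ne.symm⟩), hvs₃, fun w hw => ?_⟩
    rcases suppress_adj.1 hw with h | ⟨⟨h, -⟩ | ⟨-, h⟩, -⟩
    · exact .inr ((e2.eq w h.1).resolve_left h.2.2)
    · exact absurd h hm₁.ne.symm
    · exact .inl h
  obtain ⟨t'', s3, n'', m''⟩ := t'.suppress_counts e3
  have := Good.op_leafSubdivideTwice hT hx hm₁ hm₂ hv (by omega)
    (ih _ t'' (by omega) (by omega) (by omega))
  rwa [show numDg (((G.isolate x).suppress v s₁ s₂).suppress v s₂ s₃) 1 + 1 = numDg G 1 by omega]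
    at this

theorem Rooted.step {z : V} {h : V → ℕ} {par : V → V} (hR : Rooted G z h par) {u w : V}
    (huw : G.Adj u w) (hh : h w = h u + 1) (hd : dg G w ≤ 2) :
    LeafAt G w u ∨ ∃ w', Mid G u w w' ∧ h w' = h w + 1 := by
  have hp : par w = u := by
    rcases hR.adj u w huw with h1 | h1
    · exact h1.2
    · omega
  have := dg_pos huw.symm
  by_cases h1 : dg G w = 1
  · exact .inl (leafAt_of_dg huw h1)
  · obtain ⟨w', hw'⟩ := exists_mid_of_dg huw (by omega)
    refine .inr ⟨w', hw', ?_⟩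
    rcases hR.adj w w' hw'.right with h2 | h2
    · exact h2.1
    · exact absurd (hp.symm.trans h2.2) hw'.ne

theorem Rooted.par_eq {z : V} {h : V → ℕ} {par : V → V} (hR : Rooted G z h par) {u w : V}
    (huw : G.Adj u w) (hh : h w = h u + 1) : par w = u := by
  rcases hR.adj u w huw with h1 | h1
  · exact h1.2
  · omega

theorem Rooted.good_of_two_legs {z v r u : V} {h : V → ℕ} {par : V → V} (hT : TreeLike G)
    (ih : SmallerGood G) (h2 : numDg G 2 = numDg G 1) (h4 : 4 ≤ numDg G 1)
    (hR : Rooted G z h par) (hle : ∀ w, h v < h w → dg G w ≤ 2)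
    (hv : dg G v = 3 ∨ 4 ≤ dg G v ∧ ∀ w, G.Adj v w → dg G w ≠ 1)
    (hr : G.Adj v r) (hr' : h r = h v + 1) (hr2 : dg G r = 2)
    (hu : G.Adj v u) (hu' : h u = h v + 1) (hu2 : dg G u = 2) (hne : r ≠ u) :
    Good G (numDg G 1) := by
  have hv3 : 3 ≤ dg G v := by omega
  rcases hR.step hr hr' hr2.le with hl | ⟨r₂, hr₂, hhr₂⟩
  · have := hl.dg; omega
  rcases hR.step hu hu' hu2.le with hl | ⟨u₂, hu₂, hhu₂⟩
  · have := hl.dg; omega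
  rcases hR.step hr₂.right hhr₂ (hle _ (by omega)) with hl | ⟨r₃, hr₃, hhr₃⟩
  · exact hT.good_of_siblingPath ih h2 h4 hv3 hr₂ hl hu₂ hne.symm
  rcases hR.step hu₂.right hhu₂ (hle _ (by omega)) with hl | ⟨u₃, hu₃, hhu₃⟩
  · exact hT.good_of_siblingPath ih h2 h4 hv3 hu₂ hl hr₂ hne
  have h5 : dg G v = 3 ∨ 5 ≤ numDg G 1 := by
    rcases hv with hv | ⟨hv, hv1⟩
    · exact .inl hv
    right
    by_contra hlt
    have hs : insert r₂ (univ.filter (G.Adj v)) ⊆ univ.filter (fun w => dg G w = 2) := by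
      intro w hw
      rw [mem_filter]
      refine ⟨mem_univ _, ?_⟩
      rcases mem_insert.1 hw with rfl | hw
      · exact hr₃.dg
      · have ha := (mem_filter.1 hw).2
        have h0 := dg_pos ha.symm
        have h1 := hv1 w ha
        have := hT.dg_add_le (v := v) (w := w) (by omega) (by omega) ha.ne
        omega
    have hc := card_le_card hs
    rw [card_insert_of_notMem (by simpa using hT.not_adj hr₂)] at hc
    have e1 : (univ.filter (G.Adj v)).card = dg G v := rfl
    have e2 : (univ.filter (fun w => dg G w = 2)).card = numDg G 2 := rfl
    omega
  have d1 := hr₃.dg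
  have d2 := hu₃.dg
  rcases hR.step hr₃.right hhr₃ (hle _ (by omega)) with hl | ⟨r₄, hr₄, hhr₄⟩
  · exact hT.good_of_siblingThreePath ih h2 h4 hv3 hr₂ hr₃ hl hu₂ hne.symm (by omega)
  have p1 := hR.par_eq hr₂.right hhr₂
  have p2 := hR.par_eq hr₃.right hhr₃
  have p3 := hR.par_eq hu₂.right hhu₂
  have p4 := hR.par_eq hu₃.right hhu₃
  refine hT.good_of_longPaths ih h2 h4 hr₂ hr₃ hr₄ hu2 hu₃ ?_
  have key : ∀ a b : V, h a ≠ h b → a ≠ b := fun a b hab e => hab (e ▸ rfl)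
  have n2 : r₂ ≠ u₂ := fun e => hne (by rw [← p1, ← p3, e])
  have n3 : r₃ ≠ u₃ := fun e => n2 (by rw [← p2, ← p4, e])
  simp only [List.forall_mem_cons, List.not_mem_nil, false_imp_iff, implies_true, and_true]
  exact ⟨⟨hne, key _ _ (by omega), key _ _ (by omega)⟩,
    ⟨key _ _ (by omega), n2, key _ _ (by omega)⟩, key _ _ (by omega), key _ _ (by omega), n3⟩

theorem TreeLike.numDg_le_of_closed (hT : TreeLike G) {v : V} (hv : dg G v ≠ 0) (A : Finset V)
    (hvA : v ∈ A) (hA : ∀ u w, G.Adj u w → u ∈ A → w ∈ A) {d : ℕ} (hd : d ≠ 0) {B : Finset V}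
    (hAB : ∀ u ∈ A, dg G u = d → u ∈ B) : numDg G d ≤ B.card :=
  numDg_le_card B fun u hu => hAB u (hT.mem_of_closed (P := (· ∈ A)) hvA hv hA (by omega)) hu

theorem TreeLike.two_le_dg_of_twoLeaves (hT : TreeLike G) (h4 : 4 ≤ numDg G 1) {x₁ x₂ v p : V}
    (h₁ : LeafAt G x₁ v) (h₂ : LeafAt G x₂ v) (hp : G.Adj v p)
    (hv : ∀ w, G.Adj v w → w = x₁ ∨ w = x₂ ∨ w = p) (hv3 : dg G v = 3) : 2 ≤ dg G p := by
  by_contra hlt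
  have h0 := dg_pos hp.symm
  have hl := leafAt_of_dg hp (by omega)
  have := hT.numDg_le_of_closed (v := v) (by omega) {v, x₁, x₂, p} (by simp)
    (by
      intro u w huw hu
      simp only [mem_insert, mem_singleton] at hu ⊢
      rcases hu with rfl | rfl | rfl | rfl
      · exact .inr (hv w huw)
      · exact .inl (h₁.eq w huw)
      · exact .inl (h₂.eq w huw)
      · exact .inl (hl.eq w huw)) one_ne_zero (B := {x₁, x₂, p})
    (by
      intro u hu h1
      simp only [mem_insert, mem_singleton] at hu ⊢
      rcases hu with rfl | hu
      · omega
      · exact hu)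
  have := card_le_three (a := x₁) (b := x₂) (c := p)
  omega

theorem TreeLike.two_le_dg_of_twoLeaves_mid (hT : TreeLike G) (h4 : 4 ≤ numDg G 1)
    {x₁ x₂ v p q : V}
    (h₁ : LeafAt G x₁ v) (h₂ : LeafAt G x₂ v) (hp : Mid G v p q)
    (hv : ∀ w, G.Adj v w → w = x₁ ∨ w = x₂ ∨ w = p) (hv3 : dg G v = 3) : 2 ≤ dg G q := by
  by_contra hlt
  have h0 := dg_pos hp.right.symm
  have hpd := hp.dg
  have hl := leafAt_of_dg hp.right (by omega)
  have := hT.numDg_le_of_closed (v := v) (by omega) {v, p, x₁, x₂, q} (by simp)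
    (by
      intro u w huw hu
      simp only [mem_insert, mem_singleton] at hu ⊢
      rcases hu with rfl | rfl | rfl | rfl | rfl
      · have := hv w huw; tauto
      · have := hp.eq w huw; tauto
      · exact .inl (h₁.eq w huw)
      · exact .inl (h₂.eq w huw)
      · have := hl.eq w huw; tauto) one_ne_zero (B := {x₁, x₂, q})
    (by
      intro u hu h1
      simp only [mem_insert, mem_singleton] at hu ⊢
      rcases hu with rfl | rfl | hu
      · omega
      · omega
      · exact hu)
  have := card_le_three (a := x₁) (b := x₂) (c := q)
  omega

theorem TreeLike.two_le_dg_of_leafPath (hT : TreeLike G) (h4 : 4 ≤ numDg G 1)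
    {x s s' v p : V} (hx : LeafAt G x v) (hs : Mid G v s s') (hs' : LeafAt G s' s)
    (hp : G.Adj v p) (hv : ∀ w, G.Adj v w → w = x ∨ w = s ∨ w = p) (hv3 : dg G v = 3) :
    2 ≤ dg G p := by
  by_contra hlt
  have h0 := dg_pos hp.symm
  have hsd := hs.dg
  have hl := leafAt_of_dg hp (by omega)
  have := hT.numDg_le_of_closed (v := v) (by omega) {v, s, x, s', p} (by simp)
    (by
      intro u w huw hu
      simp only [mem_insert, mem_singleton] at hu ⊢
      rcases hu with rfl | rfl | rfl | rfl | rfl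
      · have := hv w huw; tauto
      · have := hs.eq w huw; tauto
      · exact .inl (hx.eq w huw)
      · have := hs'.eq w huw; tauto
      · exact .inl (hl.eq w huw)) one_ne_zero (B := {x, s', p})
    (by
      intro u hu h1
      simp only [mem_insert, mem_singleton] at hu ⊢
      rcases hu with rfl | rfl | hu
      · omega
      · omega
      · exact hu)
  have := card_le_three (a := x) (b := s') (c := p)
  omega

theorem TreeLike.exists_three_le_dg (hT : TreeLike G) (h : 3 ≤ numDg G 1) : ∃ v, 3 ≤ dg G v := by
  by_contra! hc
  have := hT.numDg_one_eq_two fun u => by have := hc u; omega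
  omega

theorem TreeLike.good_of_numDg_eq (hT : TreeLike G) (ih : SmallerGood G)
    (h2 : numDg G 2 = numDg G 1) (h4 : 4 ≤ numDg G 1) : Good G (numDg G 1) := by
  by_cases hbig : ∃ x v, LeafAt G x v ∧ 4 ≤ dg G v
  · obtain ⟨x, v, hx, hv⟩ := hbig
    exact hT.good_of_leaf ih h2 h4 hx hv
  push Not at hbig
  obtain ⟨z, hz⟩ : ∃ z, dg G z = 1 := by
    have : 0 < numDg G 1 := by omega
    obtain ⟨z, hz⟩ := card_pos.1 this
    exact ⟨z, (mem_filter.1 hz).2⟩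
  obtain ⟨h, par, hR⟩ := hT.exists_rooted (v := z) (by omega)
  obtain ⟨v₀, hv₀⟩ := hT.exists_three_le_dg (by omega)
  obtain ⟨v, hv, hmax⟩ := exists_max_image (univ.filter fun u => 3 ≤ dg G u) h
    ⟨v₀, mem_filter.2 ⟨mem_univ _, hv₀⟩⟩
  replace hv : 3 ≤ dg G v := (mem_filter.1 hv).2
  have hle : ∀ w, h v < h w → dg G w ≤ 2 := by
    intro w hw
    by_contra hc
    have := hmax w (mem_filter.2 ⟨mem_univ _, by omega⟩)
    omega
  obtain ⟨hvp, hhp⟩ := hR.par v (by omega) (by rintro rfl; omega)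
  have hch : ∀ w, G.Adj v w → w ≠ par v → h w = h v + 1 := by
    intro w hw hwp
    rcases hR.adj v w hw with h1 | h1
    · exact h1.1
    · exact absurd h1.2.symm hwp
  obtain ⟨c₁, hc₁, hn₁⟩ := exists_adj_ne (G := G) (u := v) (w := par v) (by omega)
  obtain ⟨c₂, hc₂, hn₂, hn₂'⟩ := exists_adj_ne_ne (G := G) (u := v) (w := par v) (w' := c₁) hv
  have hh₁ := hch c₁ hc₁ hn₁
  have hh₂ := hch c₂ hc₂ hn₂
  have hd₁ := hle c₁ (by omega)
  have hd₂ := hle c₂ (by omega)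
  have hp₁ := dg_pos hc₁.symm
  have hp₂ := dg_pos hc₂.symm
  have hv34 : dg G v = 3 ∨ 4 ≤ dg G v ∧ ∀ w, G.Adj v w → dg G w ≠ 1 := by
    by_cases hv3 : dg G v = 3
    · exact .inl hv3
    · refine .inr ⟨by omega, fun w hw h1 => ?_⟩
      have := hbig w v (leafAt_of_dg hw h1)
      omega
  by_cases hd : dg G c₁ = 2 ∧ dg G c₂ = 2
  · exact hR.good_of_two_legs hT ih h2 h4 hle hv34 hc₁ hh₁ hd.1 hc₂ hh₂ hd.2 hn₂'.symm
  have hv3 : dg G v = 3 := by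
    rcases hv34 with h3 | ⟨-, h3⟩
    · exact h3
    · have := h3 _ hc₁
      have := h3 _ hc₂
      omega
  -- a leaf child together with any other child
  have main : ∀ x c, G.Adj v x → G.Adj v c → x ≠ par v → c ≠ par v → x ≠ c → dg G x = 1 →
      Good G (numDg G 1) := by
    intro x c hx hc hxp hcp hxc hx1
    have hxl := leafAt_of_dg hx hx1
    have hnb := eq_of_dg_eq_three hx hc hvp hxc hxp hcp hv3
    rcases hR.step hc (hch c hc hcp) (hle c (by rw [hch c hc hcp]; omega)) with hl | ⟨c', hc', hhc⟩
    · have hp2 := hT.two_le_dg_of_twoLeaves h4 hxl hl hvp hnb hv3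
      by_cases hp : dg G (par v) = 2
      · obtain ⟨q, hq⟩ := exists_mid_of_dg hvp hp
        exact hT.good_of_twoLeaves ih h2 h4 hxl hl hxc hq hnb hv3
          (hT.two_le_dg_of_twoLeaves_mid h4 hxl hl hq hnb hv3)
      · exact hT.good_of_twoLeavesSubdivide ih h2 h4 hxl hl hxc hvp hv3 (by omega)
    · have hhc1 := hch c hc hcp
      rcases hR.step hc'.right hhc (hle c' (by omega)) with hl | ⟨c'', hc'', -⟩
      · exact hT.good_of_leafPath ih h2 h4 hxl hc' hl hvp hv3 hcp.symm
          (hT.two_le_dg_of_leafPath h4 hxl hc' hl hvp hnb hv3)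
      · exact hT.good_of_leafSubdivideTwice ih h2 h4 hxl hc' hc'' hv3
  by_cases h1 : dg G c₁ = 1
  · exact main c₁ c₂ hc₁ hc₂ hn₁ hn₂ hn₂'.symm h1
  · exact main c₂ c₁ hc₂ hc₁ hn₂ hn₁ hn₂' (by omega)

/-- A pendant path at `v` starting at `a` with `k ≤ 3` inner vertices. -/
def LegShape (G : SimpleGraph V) (v a : V) (k : ℕ) : Prop :=
  (k = 0 ∧ LeafAt G a v) ∨ (k = 1 ∧ ∃ a₂, Mid G v a a₂ ∧ LeafAt G a₂ a) ∨
  (k = 2 ∧ ∃ a₂ a₃, Mid G v a a₂ ∧ Mid G a a₂ a₃ ∧ LeafAt G a₃ a₂) ∨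
  (k = 3 ∧ ∃ a₂ a₃ a₄, Mid G v a a₂ ∧ Mid G a a₂ a₃ ∧ Mid G a₂ a₃ a₄ ∧ LeafAt G a₄ a₃)

theorem TreeLike.exceptional_or_good_of_legShape (hT : TreeLike G) {v a b c : V} {i j k : ℕ}
    (hv3 : dg G v = 3) (hv : ∀ u, G.Adj v u → u = a ∨ u = b ∨ u = c) (hab : a ≠ b) (hac : a ≠ c)
    (hbc : b ≠ c) (ha : LegShape G v a i) (hb : LegShape G v b j) (hc : LegShape G v c k)
    (hij : i ≤ j) (hjk : j ≤ k) (hs : i + j + k = 2 ∨ i + j + k = 3) :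
    Exceptional G ∨ Good G 3 := by
  rcases ha with ⟨rfl, ha⟩ | ⟨rfl, a₂, ha₁, ha₂⟩ | ⟨rfl, -⟩ | ⟨rfl, -⟩
  · rcases hb with ⟨rfl, hb⟩ | ⟨rfl, b₂, hb₁, hb₂⟩ | ⟨rfl, -⟩ | ⟨rfl, -⟩
    · rcases hc with ⟨rfl, hc⟩ | ⟨rfl, -⟩ | ⟨-, c₂, c₃, hc₁, hc₂, hc₃⟩ |
        ⟨-, c₂, c₃, c₄, hc₁, hc₂, hc₃, hc₄⟩
      · omega
      · omega
      · refine .inl (.inr (.inr ⟨c, c₂, c₃, v, hc₁.symm, hc₂, hc₃, hv3.ge, fun u hu => ?_⟩))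
        rcases hv u hu with rfl | rfl | rfl
        exacts [.inr ha, .inr hb, .inl rfl]
      · exact .inr (hT.good_spider_one_one_four ha hb hc₁ hc₂ hc₃ hc₄ hv hab hac hbc)
    · rcases hc with ⟨rfl, hc⟩ | ⟨rfl, c₂, hc₁, hc₂⟩ | ⟨-, c₂, c₃, hc₁, hc₂, hc₃⟩ | ⟨rfl, -⟩
      · omega
      · refine .inl (.inr (.inl ⟨v, b, b₂, c, c₂, hb₁, hb₂, hc₁, hc₂, hbc, fun u hu => ?_⟩))
        rcases hv u hu with rfl | rfl | rfl
        exacts [.inr (.inr ha), .inl rfl, .inr (.inl rfl)]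
      · exact .inr (hT.good_spider_one_two_three ha hb₁ hb₂ hc₁ hc₂ hc₃ hv hab hac hbc)
      · omega
    · omega
    · omega
  · rcases hb with ⟨rfl, hb⟩ | ⟨rfl, b₂, hb₁, hb₂⟩ | ⟨rfl, -⟩ | ⟨rfl, -⟩
    · omega
    · rcases hc with ⟨rfl, hc⟩ | ⟨rfl, c₂, hc₁, hc₂⟩ | ⟨rfl, -⟩ | ⟨rfl, -⟩
      · omega
      · exact .inr (hT.good_spider_two_two_two ha₁ ha₂ hb₁ hb₂ hc₁ hc₂ hv hab hac hbc)
      · omega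
      · omega
    · omega
    · omega
  · omega
  · omega

theorem TreeLike.exceptional_or_good_of_three_legShapes (hT : TreeLike G) {v a b c : V}
    {i j k : ℕ} (hv3 : dg G v = 3) (hv : ∀ u, G.Adj v u → u = a ∨ u = b ∨ u = c) (hab : a ≠ b)
    (hac : a ≠ c) (hbc : b ≠ c) (ha : LegShape G v a i) (hb : LegShape G v b j)
    (hc : LegShape G v c k) (hs : i + j + k = 2 ∨ i + j + k = 3) : Exceptional G ∨ Good G 3 := by
  rcases le_total i j with hij | hij <;> rcases le_total j k with hjk | hjk <;>
    rcases le_total i k with hik | hik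
  · exact hT.exceptional_or_good_of_legShape hv3 hv hab hac hbc ha hb hc hij hjk hs
  · exact hT.exceptional_or_good_of_legShape hv3 hv hab hac hbc ha hb hc hij hjk hs
  · exact hT.exceptional_or_good_of_legShape hv3 (fun u hu => by have := hv u hu; tauto)
      hac hab hbc.symm ha hc hb hik hjk (by omega)
  · exact hT.exceptional_or_good_of_legShape hv3 (fun u hu => by have := hv u hu; tauto)
      hac.symm hbc.symm hab hc ha hb hik hij (by omega)
  · exact hT.exceptional_or_good_of_legShape hv3 (fun u hu => by have := hv u hu; tauto)
      hab.symm hbc hac hb ha hc hij hik (by omega)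
  · exact hT.exceptional_or_good_of_legShape hv3 (fun u hu => by have := hv u hu; tauto)
      hbc hab.symm hac.symm hb hc ha hjk hik (by omega)
  · exact hT.exceptional_or_good_of_legShape hv3 (fun u hu => by have := hv u hu; tauto)
      hbc.symm hac.symm hab.symm hc hb ha hjk hij (by omega)
  · exact hT.exceptional_or_good_of_legShape hv3 (fun u hu => by have := hv u hu; tauto)
      hbc.symm hac.symm hab.symm hc hb ha hjk hij (by omega)

theorem Rooted.exists_leg {v : V} {h : V → ℕ} {par : V → V} (hR : Rooted G v h par)
    (hle : ∀ u, u ≠ v → dg G u ≤ 2) {a : V} (hva : G.Adj v a) :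
    ∃ A : Finset V, (∀ u ∈ A, dg G u = 2 ∧ par^[h u - 1] u = a) ∧ (A.card ≤ 3 →
      LegShape G v a A.card ∧ ∃ L : Finset V, a ∈ L ∧
        (∀ u ∈ L, ∀ w, G.Adj u w → w ∈ L ∨ w = v) ∧ ∀ u ∈ L, dg G u = 2 → u ∈ A) := by
  have hv0 := hR.root
  have hle' : ∀ u, 1 ≤ h u → dg G u ≤ 2 := fun u hu => hle u (by rintro rfl; omega)
  have ha : h a = h v + 1 := by
    rcases hR.adj v a hva with h1 | h1
    · exact h1.1
    · omega
  rcases hR.step hva ha (hle' _ (by omega)) with hl | ⟨b, hb, hhb⟩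
  · refine ⟨∅, by simp, fun _ => ⟨.inl ⟨rfl, hl⟩, {a}, by simp, ?_, ?_⟩⟩
    · intro u hu w hw
      rw [mem_singleton] at hu
      subst hu
      exact .inr (hl.eq w hw)
    · intro u hu h2
      rw [mem_singleton] at hu
      subst hu
      have := hl.dg
      omega
  have pb := hR.par_eq hb.right hhb
  rcases hR.step hb.right hhb (hle' _ (by omega)) with hl | ⟨c, hc, hhc⟩
  · refine ⟨{a}, ?_, fun _ => ⟨.inr (.inl ⟨rfl, b, hb, hl⟩), {a, b}, by simp, ?_, ?_⟩⟩
    · intro u hu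
      rw [mem_singleton] at hu
      subst hu
      exact ⟨hb.dg, by rw [ha, hv0]; rfl⟩
    · intro u hu w hw
      simp only [mem_insert, mem_singleton] at hu ⊢
      rcases hu with rfl | rfl
      · have := hb.eq w hw; tauto
      · have := hl.eq w hw; tauto
    · intro u hu h2
      simp only [mem_insert, mem_singleton] at hu ⊢
      have := hl.dg
      grind
  have pc := hR.par_eq hc.right hhc
  have key : ∀ u w, h u ≠ h w → u ≠ w := fun u w hne e => hne (e ▸ rfl)
  have ea : par^[h a - 1] a = a := by rw [ha, hv0]; rfl
  have eb : par^[h b - 1] b = a := by rw [hhb, ha, hv0]; simp [pb]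
  rcases hR.step hc.right hhc (hle' _ (by omega)) with hl | ⟨d, hd, hhd⟩
  · have hab := key a b (by omega)
    refine ⟨{a, b}, ?_, fun _ => ⟨.inr (.inr (.inl ⟨card_pair hab, b, c, hb, hc, hl⟩)),
      {a, b, c}, by simp, ?_, ?_⟩⟩
    · intro u hu
      simp only [mem_insert, mem_singleton] at hu
      rcases hu with rfl | rfl
      exacts [⟨hb.dg, ea⟩, ⟨hc.dg, eb⟩]
    · intro u hu w hw
      simp only [mem_insert, mem_singleton] at hu ⊢
      rcases hu with rfl | rfl | rfl
      · have := hb.eq w hw; tauto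
      · have := hc.eq w hw; tauto
      · have := hl.eq w hw; tauto
    · intro u hu h2
      simp only [mem_insert, mem_singleton] at hu ⊢
      have := hl.dg
      grind
  have pd := hR.par_eq hd.right hhd
  have ec : par^[h c - 1] c = a := by rw [hhc, hhb, ha, hv0]; simp [pb, pc]
  have hc3 : ({a, b, c} : Finset V).card = 3 :=
    card_eq_three.2 ⟨a, b, c, key _ _ (by omega), key _ _ (by omega), key _ _ (by omega), rfl⟩
  rcases hR.step hd.right hhd (hle' _ (by omega)) with hl | ⟨e, he, hhe⟩
  · refine ⟨{a, b, c}, ?_, fun _ => ⟨.inr (.inr (.inr ⟨hc3, b, c, d, hb, hc, hd, hl⟩)),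
      {a, b, c, d}, by simp, ?_, ?_⟩⟩
    · intro u hu
      simp only [mem_insert, mem_singleton] at hu
      rcases hu with rfl | rfl | rfl
      exacts [⟨hb.dg, ea⟩, ⟨hc.dg, eb⟩, ⟨hd.dg, ec⟩]
    · intro u hu w hw
      simp only [mem_insert, mem_singleton] at hu ⊢
      rcases hu with rfl | rfl | rfl | rfl
      · have := hb.eq w hw; tauto
      · have := hc.eq w hw; tauto
      · have := hd.eq w hw; tauto
      · have := hl.eq w hw; tauto
    · intro u hu h2
      simp only [mem_insert, mem_singleton] at hu ⊢
      have := hl.dg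
      grind
  have ed : par^[h d - 1] d = a := by rw [hhd, hhc, hhb, ha, hv0]; simp [pb, pc, pd]
  refine ⟨insert d {a, b, c}, ?_, fun hcard => ?_⟩
  · intro u hu
    simp only [mem_insert, mem_singleton] at hu
    rcases hu with rfl | rfl | rfl | rfl
    exacts [⟨he.dg, ed⟩, ⟨hb.dg, ea⟩, ⟨hc.dg, eb⟩, ⟨hd.dg, ec⟩]
  · rw [card_insert_of_notMem, hc3] at hcard
    · omega
    · simp only [mem_insert, mem_singleton, not_or]
      exact ⟨key _ _ (by omega), key _ _ (by omega), key _ _ (by omega)⟩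

theorem TreeLike.good_of_numDg_one_eq_three (hT : TreeLike G) (hG : ¬ Exceptional G)
    (h1 : numDg G 1 = 3) (h2 : 2 ≤ numDg G 2) (h3 : numDg G 2 ≤ 3) : Good G 3 := by
  obtain ⟨v, hv⟩ := hT.exists_three_le_dg (by omega)
  have hv3 : dg G v = 3 := by have := hT.dg_le (v := v); omega
  have hle : ∀ u, u ≠ v → dg G u ≤ 2 := by
    intro u hu
    by_contra hc
    have := hT.dg_add_le (v := u) (w := v) (by omega) (by omega) hu
    omega
  obtain ⟨h, par, hR⟩ := hT.exists_rooted (v := v) (by omega)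
  obtain ⟨a, ha⟩ := exists_adj_of_dg_ne_zero (G := G) (u := v) (by omega)
  obtain ⟨b, hb, hba⟩ := exists_adj_ne (G := G) (u := v) (w := a) (by omega)
  obtain ⟨c, hc, hca, hcb⟩ := exists_adj_ne_ne (G := G) (u := v) (w := a) (w' := b) hv
  have hnb := eq_of_dg_eq_three ha hb hc hba.symm hca.symm hcb.symm hv3
  obtain ⟨A, hA, hA'⟩ := hR.exists_leg hle ha
  obtain ⟨B, hB, hB'⟩ := hR.exists_leg hle hb
  obtain ⟨C, hC, hC'⟩ := hR.exists_leg hle hc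
  have dAB : Disjoint A B := disjoint_left.2 fun u hu hu' =>
    hba ((hB u hu').2.symm.trans (hA u hu).2)
  have dABC : Disjoint (A ∪ B) C := disjoint_left.2 fun u hu hu' => by
    rcases mem_union.1 hu with hu | hu
    · exact hca ((hC u hu').2.symm.trans (hA u hu).2)
    · exact hcb ((hC u hu').2.symm.trans (hB u hu).2)
  have hcard : (A ∪ B ∪ C).card = A.card + B.card + C.card := by
    rw [card_union_of_disjoint dABC, card_union_of_disjoint dAB]
  have hsub : (A ∪ B ∪ C).card ≤ numDg G 2 := by
    refine card_le_card fun u hu => mem_filter.2 ⟨mem_univ _, ?_⟩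
    simp only [mem_union] at hu
    rcases hu with (hu | hu) | hu
    exacts [(hA u hu).1, (hB u hu).1, (hC u hu).1]
  obtain ⟨sA, L, haL, hL, hLA⟩ := hA' (by omega)
  obtain ⟨sB, M, hbM, hM, hMB⟩ := hB' (by omega)
  obtain ⟨sC, N, hcN, hN, hNC⟩ := hC' (by omega)
  have hsup : numDg G 2 ≤ (A ∪ B ∪ C).card := by
    refine hT.numDg_le_of_closed (v := v) (by omega) (insert v (L ∪ M ∪ N)) (by simp) ?_
      two_ne_zero ?_
    · intro u w huw hu
      simp only [mem_insert, mem_union] at hu ⊢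
      rcases hu with rfl | (hu | hu) | hu
      · rcases hnb w huw with rfl | rfl | rfl <;> tauto
      · have := hL u hu w huw; tauto
      · have := hM u hu w huw; tauto
      · have := hN u hu w huw; tauto
    · intro u hu hu2
      simp only [mem_insert, mem_union] at hu ⊢
      rcases hu with rfl | (hu | hu) | hu
      · omega
      · exact .inl (.inl (hLA u hu hu2))
      · exact .inl (.inr (hMB u hu hu2))
      · exact .inr (hNC u hu hu2)
  refine Or.resolve_left ?_ hG
  exact hT.exceptional_or_good_of_three_legShapes hv3 hnb hba.symm hca.symm hcb.symm sA sB sC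
    (by omega)

theorem TreeLike.good (hT : TreeLike G) (hG : ¬ Exceptional G) (h : numDg G 2 ≤ numDg G 1) :
    Good G (numDg G 1) := by
  induction hn : supp G using Nat.strong_induction_on generalizing G with
  | _ n ih =>
    subst hn
    replace ih : ∀ G' : SimpleGraph V, TreeLike G' → supp G' < supp G →
        numDg G' 2 ≤ numDg G' 1 → ¬ Exceptional G' → Good G' (numDg G' 1) :=
      fun G' hT' hs h' hG' => ih _ hs hT' hG' h' rfl
    by_cases hs2 : numDg G 2 + 2 ≤ numDg G 1
    · exact hT.good_of_add_two_le hG hs2 ih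
    have h2 := hT.two_le_numDg_one
    by_cases h2' : numDg G 1 = 2
    · refine absurd (.inl (hT.isDoubleStar_of_dg_le_two (fun u => ?_) (by omega))) hG
      by_contra hc
      have := hT.dg_le (v := u) (by omega)
      omega
    by_cases h3 : numDg G 1 = 3
    · rw [h3]
      exact hT.good_of_numDg_one_eq_three hG h3 (by omega) (by omega)
    by_cases hs1 : numDg G 2 + 1 = numDg G 1
    · exact hT.good_of_add_one_eq hs1 (by omega) ih
    · exact hT.good_of_numDg_eq (SmallerGood.of_forall ih) (by omega) (by omega)

theorem dg_eq_degree (v : V) : dg G v = G.degree v := by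
  rw [dg, ← card_neighborFinset_eq_degree]
  congr 1
  ext w
  simp

theorem card_neighborSet_eq_dg (v : V) : Nat.card (G.neighborSet v) = dg G v := by
  rw [dg_eq_degree, Nat.card_eq_fintype_card, card_neighborSet_eq_degree]

theorem numDeg_eq_numDg (d : ℕ) : numDeg G d = numDg G d := by
  simp only [numDeg, card_neighborSet_eq_dg, numDg]
  rw [Nat.card_eq_fintype_card, Fintype.card_subtype]

theorem dg_ne_zero_of_isTree (hT : G.IsTree) (hcard : 3 ≤ Fintype.card V) (u : V) :
    dg G u ≠ 0 := by
  have : Nontrivial V := Fintype.one_lt_card_iff_nontrivial.1 (by omega)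
  obtain ⟨w, hw⟩ := exists_ne u
  obtain ⟨p⟩ := hT.connected.preconnected u w
  cases p with
  | nil => exact absurd rfl hw
  | cons h _ => have := dg_pos h; omega

theorem treeLike_of_isTree (hT : G.IsTree) (hcard : 3 ≤ Fintype.card V) : TreeLike G where
  acyclic := hT.isAcyclic
  reachable u w _ _ := hT.connected.preconnected u w
  sum := by
    simp only [dg_ne_zero_of_isTree hT hcard, if_false, sum_sub_distrib, sum_const, card_univ]
    have h1 := G.sum_degrees_eq_twice_card_edges
    have h2 := hT.card_edgeFinset
    simp only [dg_eq_degree]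
    rw [← Nat.cast_sum, h1]
    push_cast
    simp
    omega

theorem not_isDoubleStar_of_four_le_diam (hT : G.IsTree) (hcard : 3 ≤ Fintype.card V)
    (hd : 4 ≤ G.diam) : ¬ IsDoubleStar G := by
  rintro ⟨u, w, huw, h⟩
  have : Nonempty V := ⟨u⟩
  obtain ⟨a, b, hab⟩ := G.exists_dist_eq_diam
  have key : ∀ a, G.dist a u ≤ 1 ∨ G.dist a w ≤ 1 := by
    intro a
    obtain ⟨c, hc⟩ := exists_adj_of_dg_ne_zero (dg_ne_zero_of_isTree hT hcard a)
    have h1 := dist_eq_one_iff_adj.2 hc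
    rcases h a c hc with rfl | rfl | rfl | rfl
    · simp
    · simp
    · omega
    · omega
  have h1 := dist_eq_one_iff_adj.2 huw
  have h1' := dist_eq_one_iff_adj.2 huw.symm
  have t1 := hT.connected.dist_triangle (u := a) (v := u) (w := b)
  have t2 := hT.connected.dist_triangle (u := a) (v := w) (w := b)
  have t3 := hT.connected.dist_triangle (u := u) (v := w) (w := b)
  have t4 := hT.connected.dist_triangle (u := w) (v := u) (w := b)
  have c1 := G.dist_comm (u := b) (v := u)
  have c2 := G.dist_comm (u := b) (v := w)
  rcases key a with ha | ha <;> rcases key b with hb | hb <;> omega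

theorem Good.exists_isVDEC {k : ℕ} (h : Good G k) (hk : 0 < k) (h0 : ∀ u, dg G u ≠ 0) :
    ∃ c : Sym2 V → Fin k, IsVDEC G k c := by
  obtain ⟨c, S, hc, hS, hD⟩ := h
  obtain ⟨f, hf⟩ : ∃ f : Sym2 V → Fin k, ∀ u w, G.Adj u w → (f s(u, w) : ℕ) = c u w :=
    ⟨Sym2.lift ⟨fun u w => ⟨c u w % k, Nat.mod_lt _ hk⟩, fun u w => by simp [hc.comm u w]⟩,
      fun u w huw => Nat.mod_eq_of_lt (mem_range.1 (hS u ((hc.mem u _).2 ⟨w, huw, rfl⟩)))⟩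
  have hmem : ∀ (x : V) (i : Fin k),
      (i : ℕ) ∈ S x ↔ i ∈ {i : Fin k | ∃ w, G.Adj x w ∧ f s(x, w) = i} := by
    intro x i
    rw [hc.mem]
    exact exists_congr fun w => and_congr_right fun hw => by rw [Fin.ext_iff, hf _ _ hw]
  refine ⟨f, fun u v w huv huw hne he => ?_, fun u v huv he => huv (hD u v ?_ ?_)⟩
  · exact hne (hc.inj u v w huv huw (by rw [← hf _ _ huv, ← hf _ _ huw, he]))
  · ext i
    by_cases hi : i < k
    · have h1 := hmem u ⟨i, hi⟩
      rw [he, ← hmem v] at h1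
      exact h1
    · exact ⟨fun h => absurd (mem_range.1 (hS u h)) hi, fun h => absurd (mem_range.1 (hS v h)) hi⟩
  · obtain ⟨w, hw⟩ := exists_adj_of_dg_ne_zero (h0 u)
    exact ⟨_, (hc.mem u _).2 ⟨w, hw, rfl⟩⟩

theorem IsVDEC.numDg_one_le {k : ℕ} {c : Sym2 V → Fin k} (h : IsVDEC G k c) : numDg G 1 ≤ k := by
  choose! n hn using fun (u : V) (hu : dg G u = 1) => exists_leafAt_of_dg hu
  rw [← Fintype.card_fin k, ← card_univ, numDg]
  refine card_le_card_of_injOn (fun u => c s(u, n u)) (fun _ _ => mem_coe.2 (mem_univ _))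
    fun u hu w hw he => ?_
  replace hu := hn u (by simpa using hu)
  replace hw := hn w (by simpa using hw)
  by_contra hne
  have hset : ∀ x, LeafAt G x (n x) →
      {i : Fin k | ∃ w, G.Adj x w ∧ c s(x, w) = i} = {c s(x, n x)} := by
    intro x hx
    ext i
    simp only [Set.mem_ofPred_eq, Set.mem_singleton_iff]
    exact ⟨fun ⟨w, hw, hi⟩ => by rw [← hi, hx.eq w hw], fun hi => ⟨n x, hx.adj.symm, hi.symm⟩⟩
  refine h.2 u w hne ?_
  rw [hset u hu, hset w hw]
  exact congrArg _ he

theorem TreeLike.nonempty_iso {W : Type*} [Nonempty W] {Q : SimpleGraph W} (hT : TreeLike G)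
    (h0 : ∀ u, dg G u ≠ 0) (φ : W → V) (hinj : Function.Injective φ)
    (hadj : ∀ x y, Q.Adj x y → G.Adj (φ x) (φ y))
    (hnb : ∀ x v, G.Adj (φ x) v → ∃ y, Q.Adj x y ∧ φ y = v) : Nonempty (G ≃g Q) := by
  have hsurj : Function.Surjective φ := fun u => by
    refine hT.mem_of_closed (P := fun u => ∃ x, φ x = u) (v := φ (Classical.arbitrary W)) ⟨_, rfl⟩
      (h0 _) ?_ (h0 u)
    rintro _ w huw ⟨x, rfl⟩
    obtain ⟨y, -, hy⟩ := hnb x w huw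
    exact ⟨y, hy⟩
  refine ⟨RelIso.symm ⟨Equiv.ofBijective φ ⟨hinj, hsurj⟩, fun {x y} => ⟨fun h => ?_, hadj x y⟩⟩⟩
  obtain ⟨z, hz, hzy⟩ := hnb x _ h
  rwa [← hinj hzy]

theorem LeafAt.center_eq {x v w : V} (h : LeafAt G x v) (h' : LeafAt G x w) : v = w :=
  h'.eq v h.adj.symm

theorem IsTwoPathStar.exists_iso (hT : TreeLike G) (h0 : ∀ u, dg G u ≠ 0) (h : IsTwoPathStar G) :
    ∃ r, Nonempty (G ≃g QGraph r 2 0 Fin.elim0) := by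
  obtain ⟨w, a, a', b, b', ha, ha', hb, hb', hab, hw⟩ := h
  obtain ⟨r, ⟨e⟩⟩ : ∃ r, Nonempty (Fin r ≃ {u // LeafAt G u w}) :=
    ⟨_, ⟨(Fintype.equivFin _).symm⟩⟩
  have he : ∀ i, LeafAt G (e i : V) w := fun i => (e i).2
  have hd : ∀ i, dg G (e i : V) = 1 := fun i => (he i).dg
  have hda := ha.dg
  have hdb := hb.dg
  have hda' := ha'.dg
  have hdb' := hb'.dg
  have hne : a' ≠ b' := fun h => hab (ha'.center_eq (h ▸ hb'))
  have hea : ∀ i, (e i : V) ≠ a' := fun i h => ha.left.ne (ha'.center_eq (h ▸ he i))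
  have heb : ∀ i, (e i : V) ≠ b' := fun i h => hb.left.ne (hb'.center_eq (h ▸ he i))
  refine ⟨r, hT.nonempty_iso h0 (Sum.elim (fun _ => w) (Sum.elim (fun i => (e i : V))
    (Sum.elim (fun p => ![![a, b], ![a', b']] p.2 p.1) (fun _ => w)))) ?_ ?_ ?_⟩
  · have l1 := ha.left.ne
    have l2 := hb.left.ne
    have l3 := ha.ne
    have l4 := hb.ne
    have l5 : ∀ i, (e i : V) ≠ w := fun i => (he i).adj.ne.symm
    have l6 : a ≠ a' := by rintro rfl; omega
    have l7 : a ≠ b' := by rintro rfl; omega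
    have l8 : b ≠ a' := by rintro rfl; omega
    have l9 : b ≠ b' := by rintro rfl; omega
    have l10 : ∀ i, (e i : V) ≠ a := fun i h => by have := hd i; rw [h] at this; omega
    have l11 : ∀ i, (e i : V) ≠ b := fun i h => by have := hd i; rw [h] at this; omega
    rintro (x | x | ⟨x, x'⟩ | x | x) (y | y | ⟨y, y'⟩ | y | y) hxy <;>
      first
      | exact x.elim0
      | exact y.elim0
      | exact x.1.elim0
      | exact y.1.elim0
      | skip
    all_goals
      first
      | (fin_cases x' <;> fin_cases x)
      | skip
    all_goals
      first
      | (fin_cases y' <;> fin_cases y)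
      | skip
    all_goals simp at hxy ⊢
    all_goals
      first
      | exact e.injective (Subtype.ext hxy)
      | exact absurd hxy ‹_›
      | exact absurd hxy.symm ‹_›
      | exact absurd hxy (l5 _)
      | exact absurd hxy.symm (l5 _)
      | exact absurd hxy (l10 _)
      | exact absurd hxy.symm (l10 _)
      | exact absurd hxy (l11 _)
      | exact absurd hxy.symm (l11 _)
      | exact absurd hxy (hea _)
      | exact absurd hxy.symm (hea _)
      | exact absurd hxy (heb _)
      | exact absurd hxy.symm (heb _)
  · rintro (x | x | ⟨x, x'⟩ | x | x) (y | y | ⟨y, y'⟩ | y | y) hxy <;>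
      first
      | exact x.elim0
      | exact y.elim0
      | exact x.1.elim0
      | exact y.1.elim0
      | skip
    all_goals
      first
      | (fin_cases x' <;> fin_cases x)
      | skip
    all_goals
      first
      | (fin_cases y' <;> fin_cases y)
      | skip
    all_goals simp [QGraph] at hxy ⊢
    all_goals
      first
      | exact ha.left
      | exact ha.left.symm
      | exact hb.left
      | exact hb.left.symm
      | exact ha.right
      | exact ha.right.symm
      | exact hb.right
      | exact hb.right.symm
      | exact (he _).adj
      | exact (he _).adj.symm
  · rintro (x | x | ⟨x, x'⟩ | x | x) v hv <;>
      first
      | exact x.elim0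
      | exact x.1.elim0
      | skip
    · rcases hw v hv with rfl | rfl | hl
      · exact ⟨.inr (.inr (.inl (0, 0))), by simp [QGraph], rfl⟩
      · exact ⟨.inr (.inr (.inl (1, 0))), by simp [QGraph], rfl⟩
      · exact ⟨.inr (.inl (e.symm ⟨v, hl⟩)), by simp [QGraph], by simp⟩
    · exact ⟨.inl (), by simp [QGraph], ((he x).eq v hv).symm⟩
    · fin_cases x' <;> fin_cases x
      · rcases ha.eq v hv with rfl | rfl
        · exact ⟨.inl (), by simp [QGraph], rfl⟩
        · exact ⟨.inr (.inr (.inl (0, 1))), by simp [QGraph], rfl⟩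
      · rcases hb.eq v hv with rfl | rfl
        · exact ⟨.inl (), by simp [QGraph], rfl⟩
        · exact ⟨.inr (.inr (.inl (1, 1))), by simp [QGraph], rfl⟩
      · exact ⟨.inr (.inr (.inl (0, 0))), by simp [QGraph], (ha'.eq v hv).symm⟩
      · exact ⟨.inr (.inr (.inl (1, 0))), by simp [QGraph], (hb'.eq v hv).symm⟩

theorem IsPathBroom.exists_iso (hT : TreeLike G) (h0 : ∀ u, dg G u ≠ 0) (h : IsPathBroom G) :
    ∃ rv : Fin 1 → ℕ, 2 ≤ rv 0 ∧ Nonempty (G ≃g QGraph 0 1 1 rv) := by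
  obtain ⟨w, s, z, t, hw, hs, hz, ht3, ht⟩ := h
  let r := Fintype.card {u // LeafAt G u t}
  have e : Fin r ≃ {u // LeafAt G u t} := (Fintype.equivFin _).symm
  have hr : 2 ≤ r := by
    have hsub : (univ.filter (G.Adj t)).erase w ⊆ univ.filter fun u => LeafAt G u t := by
      intro u hu
      rw [mem_erase, mem_filter] at hu
      exact mem_filter.2 ⟨mem_univ _, (ht u hu.2.2).resolve_left hu.1⟩
    have hc := card_le_card hsub
    rw [card_erase_of_mem (mem_filter.2 ⟨mem_univ _, hw.right.symm⟩)] at hc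
    have hcr : r = (univ.filter fun u => LeafAt G u t).card := Fintype.card_subtype _
    rw [hcr]
    exact le_trans (Nat.le_sub_one_of_lt ht3) hc
  have he : ∀ i, LeafAt G (e i : V) t := fun i => (e i).2
  have hd : ∀ i, dg G (e i : V) = 1 := fun i => (he i).dg
  have hdw := hw.dg
  have hds := hs.dg
  have hdz := hz.dg
  have hez : ∀ i, (e i : V) ≠ z := fun i h => by
    have := hz.center_eq (h ▸ he i)
    subst this
    omega
  refine ⟨fun _ => r, hr, hT.nonempty_iso h0 (Sum.elim (fun _ => w) (Sum.elim (fun _ => w)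
    (Sum.elim (fun p => ![s, z] p.2) (Sum.elim (fun _ => t) fun p => (e p.2 : V))))) ?_ ?_ ?_⟩
  · have l1 := hw.left.ne
    have l2 := hw.right.ne
    have l3 := hw.ne
    have l4 := hs.ne
    have l5 := hs.right.ne
    have l6 : z ≠ t := by rintro rfl; omega
    have l7 : ∀ i, (e i : V) ≠ t := fun i => (he i).adj.ne.symm
    have l8 : ∀ i, (e i : V) ≠ w := fun i h => by have := hd i; rw [h] at this; omega
    have l9 : ∀ i, (e i : V) ≠ s := fun i h => by have := hd i; rw [h] at this; omega
    rintro (x | x | ⟨x, x'⟩ | x | ⟨x', x⟩) (y | y | ⟨y, y'⟩ | y | ⟨y', y⟩) hxy <;>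
      first
      | exact x.elim0
      | exact y.elim0
      | skip
    all_goals
      first
      | (fin_cases x <;> fin_cases x')
      | fin_cases x'
      | fin_cases x
      | skip
    all_goals
      first
      | (fin_cases y <;> fin_cases y')
      | fin_cases y'
      | fin_cases y
      | skip
    all_goals simp at hxy ⊢
    all_goals
      first
      | exact e.injective (Subtype.ext hxy)
      | exact absurd hxy ‹_›
      | exact absurd hxy.symm ‹_›
      | exact absurd hxy (l7 _)
      | exact absurd hxy.symm (l7 _)
      | exact absurd hxy (l8 _)
      | exact absurd hxy.symm (l8 _)
      | exact absurd hxy (l9 _)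
      | exact absurd hxy.symm (l9 _)
      | exact absurd hxy (hez _)
      | exact absurd hxy.symm (hez _)
  · rintro (x | x | ⟨x, x'⟩ | x | ⟨x', x⟩) (y | y | ⟨y, y'⟩ | y | ⟨y', y⟩) hxy <;>
      first
      | exact x.elim0
      | exact y.elim0
      | skip
    all_goals
      first
      | (fin_cases x <;> fin_cases x')
      | fin_cases x'
      | fin_cases x
      | skip
    all_goals
      first
      | (fin_cases y <;> fin_cases y')
      | fin_cases y'
      | fin_cases y
      | skip
    all_goals simp [QGraph] at hxy ⊢
    all_goals
      first
      | exact hw.left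
      | exact hw.left.symm
      | exact hw.right
      | exact hw.right.symm
      | exact hs.right
      | exact hs.right.symm
      | exact (he _).adj
      | exact (he _).adj.symm
  · rintro (x | x | ⟨x, x'⟩ | x | ⟨x', x⟩) v hv
    · rcases hw.eq v hv with rfl | rfl
      · exact ⟨.inr (.inr (.inl (0, 0))), by simp [QGraph], rfl⟩
      · exact ⟨.inr (.inr (.inr (.inl 0))), by simp [QGraph], rfl⟩
    · exact x.elim0
    · fin_cases x <;> fin_cases x'
      · rcases hs.eq v hv with rfl | rfl
        · exact ⟨.inl (), by simp [QGraph], rfl⟩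
        · exact ⟨.inr (.inr (.inl (0, 1))), by simp [QGraph], rfl⟩
      · exact ⟨.inr (.inr (.inl (0, 0))), by simp [QGraph], (hz.eq v hv).symm⟩
    · fin_cases x
      rcases ht v hv with rfl | hl
      · exact ⟨.inl (), by simp [QGraph], rfl⟩
      · exact ⟨.inr (.inr (.inr (.inr ⟨0, e.symm ⟨v, hl⟩⟩))), by simp [QGraph], by simp⟩
    · fin_cases x'
      exact ⟨.inr (.inr (.inr (.inl 0))), by simp [QGraph], ((he x).eq v hv).symm⟩

end

/-- A tree `T` with at least three vertices, `n₂(T) ≤ n₁(T)`, diameter at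
least 4, not isomorphic to any `Q(r,2,0)` (`r ≥ 0`) nor to `Q(0,1,1)`, satisfies
`χ'ₛ(T) = n₁(T)`. -/
theorem vdecNum_of_tree_diam_ge_four {V : Type*} [Fintype V] (G : SimpleGraph V)
    (hT : G.IsTree) (hcard : 3 ≤ Fintype.card V)
    (hn : numDeg G 2 ≤ numDeg G 1) (hdiam : 4 ≤ G.diam)
    (hQ1 : ∀ r : ℕ, ¬ Nonempty (G ≃g QGraph r 2 0 Fin.elim0))
    (hQ2 : ∀ rv : Fin 1 → ℕ, 2 ≤ rv 0 → ¬ Nonempty (G ≃g QGraph 0 1 1 rv)) :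
    vdecNum G = numDeg G 1 := by
  rw [numDeg_eq_numDg, numDeg_eq_numDg] at hn
  rw [numDeg_eq_numDg]
  have h0 := dg_ne_zero_of_isTree hT hcard
  have hL := treeLike_of_isTree hT hcard
  have hE : ¬ Exceptional G := by
    rintro (h | h | h)
    · exact not_isDoubleStar_of_four_le_diam hT hcard hdiam h
    · obtain ⟨r, hr⟩ := h.exists_iso hL h0
      exact hQ1 r hr
    · obtain ⟨rv, hrv, hr⟩ := h.exists_iso hL h0
      exact hQ2 rv hrv hr
  have h2 := hL.two_le_numDg_one
  have hmem := (hL.good hE hn).exists_isVDEC (by omega) h0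
  refine le_antisymm (Nat.sInf_le hmem) (le_csInf ⟨_, hmem⟩ ?_)
  rintro k ⟨c, hc⟩
  exact hc.numDg_one_le
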